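/- For every fixed ε > 0 there is a constant C(ε) such that, with the notation of the context, for any permutation (i, j, k) of (1, 2, 3) one has N₀(B) ≤ C(ε) · (X_iX_jY_k + B^{6/11}) · B^ε. -/

import Mathlib

/-- The set `S₀(B)` of sextuples `(x₁, x₂, x₃, y₁, y₂, y₃)` of positive integers (encoded as a
pair of functions `Fin 3 → ℤ`) such that `Xᵢ/2 < xᵢ ≤ Xᵢ` and `Yᵢ/2 < yᵢ ≤ Yᵢ`, the equation
`a₁x₁²y₁³ + a₂x₂²y₂³ + a₃x₃²y₃³ = 0` holds, `gcd(x₁y₁, x₂y₂, x₃y₃) = 1`,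
`gcd(a₁a₂a₃, x₁x₂x₃y₁y₂y₃) = 1`, and `a₁y₁, a₂y₂, a₃y₃` are all squarefree. -/
def S0 (a : Fin 3 → ℤ) (X Y : Fin 3 → ℝ) : Set ((Fin 3 → ℤ) × (Fin 3 → ℤ)) :=
  {p | (∀ i, 0 < p.1 i) ∧ (∀ i, 0 < p.2 i) ∧
    (∀ i, X i / 2 < (p.1 i : ℝ) ∧ (p.1 i : ℝ) ≤ X i) ∧
    (∀ i, Y i / 2 < (p.2 i : ℝ) ∧ (p.2 i : ℝ) ≤ Y i) ∧
    a 0 * p.1 0 ^ 2 * p.2 0 ^ 3 + a 1 * p.1 1 ^ 2 * p.2 1 ^ 3 +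
      a 2 * p.1 2 ^ 2 * p.2 2 ^ 3 = 0 ∧
    Int.gcd (p.1 0 * p.2 0) (Int.gcd (p.1 1 * p.2 1) (p.1 2 * p.2 2)) = 1 ∧
    Int.gcd (a 0 * a 1 * a 2) (p.1 0 * p.1 1 * p.1 2 * p.2 0 * p.2 1 * p.2 2) = 1 ∧
    (∀ i, Squarefree (a i * p.2 i))}

namespace XXY
open Polynomial

/-! ### Stepanov's method -/

section Stepanov
variable {p : ℕ} [Fact p.Prime]

/-- one derivation step, acting on the polynomial cofactor -/
noncomputable def stepT (f : (ZMod p)[X]) (c : ZMod p) : (ZMod p)[X] →ₗ[ZMod p] (ZMod p)[X] :=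
  LinearMap.mulLeft (ZMod p) (C c * derivative f) +
    (LinearMap.mulLeft (ZMod p) f) ∘ₗ (derivative : (ZMod p)[X] →ₗ[ZMod p] (ZMod p)[X])

lemma stepT_apply (f : (ZMod p)[X]) (c : ZMod p) (r : (ZMod p)[X]) :
    stepT f c r = C c * derivative f * r + f * derivative r := by
  simp [stepT, mul_assoc]

/-- iterated cofactor; `e` is the exponent of `g`. -/
noncomputable def stepW (f : (ZMod p)[X]) (l : ℕ) (e : ℕ) : ℕ → ((ZMod p)[X] →ₗ[ZMod p] (ZMod p)[X])
  | 0 => LinearMap.id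
  | k + 1 => (stepT f (((l - k : ℕ) : ZMod p) + (e * ((p - 1) / 2) : ℕ))) ∘ₗ stepW f l e k

lemma stepW_natDegree (f : (ZMod p)[X]) (hf : f.natDegree ≤ 3) (l e k : ℕ) (r : (ZMod p)[X]) :
    (stepW f l e k r).natDegree ≤ r.natDegree + 2 * k := by
  induction k with
  | zero => simp [stepW]
  | succ k ih =>
    simp only [stepW, LinearMap.comp_apply, stepT_apply]
    set q := stepW f l e k r
    set c := ((l - k : ℕ) : ZMod p) + (e * ((p - 1) / 2) : ℕ)
    have h1 : (C c * derivative f * q).natDegree ≤ q.natDegree + 2 := by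
      calc _ ≤ (C c * derivative f).natDegree + q.natDegree := natDegree_mul_le
        _ ≤ (derivative f).natDegree + q.natDegree := by gcongr; exact natDegree_C_mul_le _ _
        _ ≤ _ := by have := natDegree_derivative_le f; omega
    have h2 : (f * derivative q).natDegree ≤ q.natDegree + 2 := by
      by_cases h0 : q.natDegree = 0
      · rw [derivative_of_natDegree_zero h0]; simp
      · calc _ ≤ f.natDegree + (derivative q).natDegree := natDegree_mul_le
          _ ≤ _ := by have := natDegree_derivative_le q; omega
    have := natDegree_add_le_of_degree_le h1 h2
    omega

lemma stepW_derivative (f : (ZMod p)[X]) (l e k j : ℕ) (hk : k ≤ l) (r : (ZMod p)[X]) :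
    derivative^[k] (f ^ l * r * (f ^ ((p - 1) / 2)) ^ e * X ^ (p * j)) =
      f ^ (l - k) * stepW f l e k r * (f ^ ((p - 1) / 2)) ^ e * X ^ (p * j) := by
  induction k with
  | zero => simp [stepW]
  | succ k ih =>
    rw [Function.iterate_succ_apply', ih (by omega)]
    simp only [stepW, LinearMap.comp_apply, stepT_apply]
    set q := stepW f l e k r
    obtain ⟨m, hm⟩ : ∃ m, l - k = m + 1 := ⟨l - k - 1, by omega⟩
    have hm' : l - (k + 1) = m := by omega
    rw [hm, hm']
    rw [← pow_mul]
    have hXd : derivative (X ^ (p * j) : (ZMod p)[X]) = 0 := by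
      rw [derivative_X_pow]; simp
    set M := (p - 1) / 2 * e with hM
    have hMe : e * ((p - 1) / 2) = M := by rw [hM]; ring
    rw [hMe]
    simp only [derivative_mul, hXd, derivative_pow]
    have key : f * (C ((M : ℕ) : ZMod p) * f ^ (M - 1)) = C ((M : ℕ) : ZMod p) * f ^ M := by
      rcases Nat.eq_zero_or_pos M with h | h
      · simp [h]
      · obtain ⟨M', hM'⟩ : ∃ M', M = M' + 1 := ⟨M - 1, by omega⟩
        rw [hM']; simp only [Nat.add_sub_cancel]; ring
    simp only [Nat.add_sub_cancel, map_add, map_natCast] at key ⊢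
    have key2 : ∀ z : (ZMod p)[X], f ^ (m+1) * z * ((M : (ZMod p)[X]) * f ^ (M - 1) * derivative f)
       = f ^ m * z * ((M : (ZMod p)[X]) * f ^ M) * derivative f := by
      intro z; rw [← key]; ring
    simp only [mul_zero, add_zero]
    rw [add_mul, key2]
    ring

lemma sq_mul_eq_zero {f r s : (ZMod p)[X]} {c : ZMod p} (hc : c ≠ 0) (hsep : f.Separable)
    (hdeg : 1 ≤ f.natDegree) (h : r ^ 2 * f = C c * s ^ 2) : r = 0 ∧ s = 0 := by
  have hf0 : f ≠ 0 := by rintro rfl; simp at hdeg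
  have hr : r = 0 := by
    by_contra hr
    have hu : IsUnit (C c : (ZMod p)[X]) := isUnit_C.2 (isUnit_iff_ne_zero.2 hc)
    have h1 : r ^ 2 ∣ s ^ 2 := by
      have : r ^ 2 ∣ C c * s ^ 2 := ⟨f, h.symm⟩
      exact (IsUnit.dvd_mul_left hu).1 this
    have h2 : r ∣ s := (IsIntegrallyClosed.pow_dvd_pow_iff (by norm_num)).1 h1
    obtain ⟨t, rfl⟩ := h2
    have h3 : f = C c * t ^ 2 := by
      apply mul_left_cancel₀ (pow_ne_zero 2 hr)
      rw [h]; ring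
    have h4 : IsUnit t := hsep.squarefree t ⟨C c, by rw [h3]; ring⟩
    have h5 : IsUnit f := by rw [h3]; exact hu.mul (h4.pow 2)
    have := natDegree_eq_zero_of_isUnit h5
    omega
  refine ⟨hr, ?_⟩
  rw [hr] at h
  have : C c * s ^ 2 = 0 := by rw [← h]; ring
  rcases mul_eq_zero.1 this with h | h
  · simp [hc] at h
  · simpa using h

lemma stepanov_nonvanish (f : (ZMod p)[X]) (hp2 : p ≠ 2) (hf : f.natDegree ≤ 3) (hdeg : 1 ≤ f.natDegree)
    (hsep : f.Separable) (hf0 : f.coeff 0 ≠ 0) (J : ℕ) (r s : ℕ → (ZMod p)[X])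
    (hr : ∀ j, 2 * (r j).natDegree + 3 < p) (hs : ∀ j, 2 * (s j).natDegree < p)
    (h : ∑ j ∈ Finset.range J, (r j + s j * f ^ ((p - 1) / 2)) * X ^ (p * j) = 0) :
    ∀ k < J, r k = 0 ∧ s k = 0 := by
  have hpp : p.Prime := Fact.out
  intro k
  induction k using Nat.strong_induction_on with
  | _ k ih =>
  intro hk
  set g := f ^ ((p - 1) / 2) with hg
  have hdvd : (X : (ZMod p)[X]) ^ p ∣ r k + s k * g := by
    have h1 : (X : (ZMod p)[X]) ^ (p * (k + 1)) ∣ (r k + s k * g) * X ^ (p * k) := by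
      have h2 := Finset.add_sum_erase (Finset.range J)
        (fun j => (r j + s j * g) * X ^ (p * j)) (Finset.mem_range.2 hk)
      rw [h] at h2
      have h3 : (X : (ZMod p)[X]) ^ (p * (k + 1)) ∣
          ∑ j ∈ (Finset.range J).erase k, (r j + s j * g) * X ^ (p * j) := by
        apply Finset.dvd_sum
        intro j hj
        simp only [Finset.mem_erase, Finset.mem_range] at hj
        rcases lt_or_gt_of_ne hj.1 with hlt | hgt
        · obtain ⟨h4, h5⟩ := ih j hlt hj.2
          simp [h4, h5]
        · exact Dvd.dvd.mul_left (pow_dvd_pow _ (Nat.mul_le_mul_left _ hgt)) _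
      have h4 := eq_neg_of_add_eq_zero_left h2
      rw [h4]
      exact (dvd_neg).2 h3
    rw [mul_add, mul_one, pow_add, mul_comm] at h1
    exact (mul_dvd_mul_iff_right (pow_ne_zero _ X_ne_zero)).1 h1
  set c := f.coeff 0
  have hfp : (X : (ZMod p)[X]) ^ p ∣ f ^ p - C c := by
    have h1 : (X : (ZMod p)[X]) ∣ f - C c := by
      rw [X_dvd_iff]; simp [c]
    have h2 := pow_dvd_pow_of_dvd h1 p
    rw [sub_pow_char, ← C_pow, ZMod.pow_card] at h2
    exact h2
  have hfg : f * g ^ 2 = f ^ p := by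
    rw [hg, ← pow_mul, ← pow_succ']
    congr 1
    rcases hpp.eq_two_or_odd with h | h
    · exact absurd h hp2
    · omega
  have hd2 : (X : (ZMod p)[X]) ^ p ∣ r k ^ 2 * f - C c * s k ^ 2 := by
    have e : r k ^ 2 * f - C c * s k ^ 2 = (r k + s k * g) * ((r k - s k * g) * f)
        + s k ^ 2 * (f ^ p - C c) := by rw [← hfg]; ring
    rw [e]
    exact dvd_add (Dvd.dvd.mul_right hdvd _) (Dvd.dvd.mul_left hfp _)
  have hz : r k ^ 2 * f - C c * s k ^ 2 = 0 := by
    by_contra hne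
    have h1 := natDegree_le_of_dvd hd2 hne
    rw [natDegree_X_pow] at h1
    have h2 : (r k ^ 2 * f).natDegree ≤ p - 1 := by
      have a1 := natDegree_mul_le (p := r k ^ 2) (q := f)
      have a2 := natDegree_pow_le (p := r k) (n := 2)
      have := hr k
      omega
    have h3 : (C c * s k ^ 2).natDegree ≤ p - 1 := by
      have a1 := natDegree_C_mul_le c (s k ^ 2)
      have a2 := natDegree_pow_le (p := s k) (n := 2)
      have := hs k
      omega
    have h4 := natDegree_sub_le_of_le h2 h3
    have := hpp.pos
    simp at h4
    omega
  exact sq_mul_eq_zero hf0 hsep hdeg (sub_eq_zero.1 hz)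

end Stepanov
end XXY

namespace XXY
open Polynomial
section Stepanov
variable {p : ℕ} [Fact p.Prime]

/-- polynomial built from a coefficient vector -/
noncomputable def polyOf (J d : ℕ) (b : Fin 2) (j : Fin J) :
    (Fin 2 × Fin J × Fin d → ZMod p) →ₗ[ZMod p] (ZMod p)[X] :=
  ∑ i : Fin d, (monomial (i : ℕ)) ∘ₗ (LinearMap.proj (b, j, i))

lemma polyOf_coeff (J d : ℕ) (b : Fin 2) (j : Fin J) (c : Fin 2 × Fin J × Fin d → ZMod p) (i : Fin d) :
    (polyOf J d b j c).coeff i = c (b, j, i) := by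
  simp only [polyOf, LinearMap.sum_apply, LinearMap.comp_apply, LinearMap.proj_apply, finsetSum_coeff,
    coeff_monomial]
  rw [Finset.sum_eq_single i]
  · simp
  · intro k _ hk
    rw [if_neg]
    intro h; exact hk (Fin.ext h)
  · simp

lemma polyOf_natDegree (J d : ℕ) (b : Fin 2) (j : Fin J) (c : Fin 2 × Fin J × Fin d → ZMod p) :
    (polyOf J d b j c).natDegree ≤ d - 1 := by
  simp only [polyOf, LinearMap.sum_apply, LinearMap.comp_apply, LinearMap.proj_apply]
  apply natDegree_sum_le_of_forall_le
  intro i _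
  refine (natDegree_monomial_le _).trans ?_
  have := i.2
  omega

/-- The `k`-th auxiliary polynomial which has to vanish. -/
noncomputable def auxPsi (f : (ZMod p)[X]) (e0 : ZMod p) (l J d k : ℕ) :
    (Fin 2 × Fin J × Fin d → ZMod p) →ₗ[ZMod p] (ZMod p)[X] :=
  ∑ j : Fin J, (LinearMap.mulLeft (ZMod p) (X ^ (j : ℕ))) ∘ₗ
    (stepW f l 0 k ∘ₗ polyOf J d 0 j + e0 • (stepW f l 1 k ∘ₗ polyOf J d 1 j))

lemma auxPsi_apply (f : (ZMod p)[X]) (e0 : ZMod p) (l J d k : ℕ) (c : Fin 2 × Fin J × Fin d → ZMod p) :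
    auxPsi f e0 l J d k c = ∑ j : Fin J, X ^ (j : ℕ) *
      (stepW f l 0 k (polyOf J d 0 j c) + e0 • stepW f l 1 k (polyOf J d 1 j c)) := by
  simp [auxPsi]

lemma auxPsi_natDegree (f : (ZMod p)[X]) (hf : f.natDegree ≤ 3) (e0 : ZMod p) (l J d k : ℕ) (hk : k < l)
    (c : Fin 2 × Fin J × Fin d → ZMod p) :
    (auxPsi f e0 l J d k c).natDegree < d + 2 * l + J := by
  rw [auxPsi_apply]
  have : (∑ j : Fin J, X ^ (j : ℕ) *
      (stepW f l 0 k (polyOf J d 0 j c) + e0 • stepW f l 1 k (polyOf J d 1 j c))).natDegree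
      ≤ (d - 1) + 2 * k + (J - 1) := by
    apply natDegree_sum_le_of_forall_le
    intro j _
    have h0 := (stepW_natDegree f hf l 0 k (polyOf J d 0 j c))
    have h1 := (stepW_natDegree f hf l 1 k (polyOf J d 1 j c))
    have h2 := polyOf_natDegree J d 0 j c
    have h3 := polyOf_natDegree J d 1 j c
    have h4 := natDegree_smul_le e0 (stepW f l 1 k (polyOf J d 1 j c))
    have h5 : (stepW f l 0 k (polyOf J d 0 j c) + e0 • stepW f l 1 k (polyOf J d 1 j c)).natDegree
       ≤ d - 1 + 2 * k := natDegree_add_le_of_degree_le (by omega) (by omega)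
    refine natDegree_mul_le.trans ?_
    rw [natDegree_X_pow]
    have := j.2
    omega
  omega

theorem stepanov_exists (f : (ZMod p)[X]) (hf : f.natDegree ≤ 3) (e0 : ZMod p) (l J d : ℕ)
    (hcount : l * (d + 2 * l + J) < 2 * (J * d)) :
    ∃ c : Fin 2 × Fin J × Fin d → ZMod p, c ≠ 0 ∧ ∀ k < l, auxPsi f e0 l J d k c = 0 := by
  let Φ : (Fin 2 × Fin J × Fin d → ZMod p) →ₗ[ZMod p] (Fin l × Fin (d + 2 * l + J) → ZMod p) :=
    LinearMap.pi fun km => (lcoeff (ZMod p) (km.2 : ℕ)) ∘ₗ auxPsi f e0 l J d (km.1 : ℕ)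
  have hker : LinearMap.ker Φ ≠ ⊥ := by
    apply LinearMap.ker_ne_bot_of_finrank_lt
    simp only [Module.finrank_fintype_fun_eq_card, Fintype.card_prod, Fintype.card_fin]
    exact hcount
  obtain ⟨c, hc, hc0⟩ := (Submodule.ne_bot_iff _).1 hker
  refine ⟨c, hc0, fun k hk => ?_⟩
  have hd := auxPsi_natDegree f hf e0 l J d k hk c
  ext m
  by_cases hm : m < d + 2 * l + J
  · have := congrFun (LinearMap.mem_ker.1 hc) (⟨k, hk⟩, ⟨m, hm⟩)
    simpa [Φ] using this
  · rw [coeff_eq_zero_of_natDegree_lt (by omega)]; simp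

theorem stepanov_bound (f : (ZMod p)[X]) (hp2 : p ≠ 2) (hf : f.natDegree ≤ 3) (hdeg : 1 ≤ f.natDegree)
    (hsep : f.Separable) (hf0 : f.coeff 0 ≠ 0) (e0 : ZMod p) (l J d : ℕ) (hl : l < p) (hl0 : 0 < l)
    (hd : 2 * d + 2 ≤ p) (hd0 : 1 ≤ d)
    (hcount : l * (d + 2 * l + J) < 2 * (J * d)) :
    l * (Finset.univ.filter (fun x : ZMod p => f.eval x ^ ((p - 1) / 2) = e0)).card ≤
      3 * l + 2 * p + p * J := by
  have hpp : p.Prime := Fact.out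
  obtain ⟨c, hc0, hc⟩ := stepanov_exists f hf e0 l J d hcount
  set g := f ^ ((p - 1) / 2) with hg
  set R : (ZMod p)[X] := ∑ j : Fin J, (f ^ l * polyOf J d 0 j c * g ^ 0 * X ^ (p * (j : ℕ)) +
    f ^ l * polyOf J d 1 j c * g ^ 1 * X ^ (p * (j : ℕ))) with hR
  have hf00 : f ≠ 0 := by rintro rfl; simp at hdeg
  have hRne : R ≠ 0 := by
    intro hR0
    let r : ℕ → (ZMod p)[X] := fun j => if h : j < J then polyOf J d 0 ⟨j, h⟩ c else 0
    let s : ℕ → (ZMod p)[X] := fun j => if h : j < J then polyOf J d 1 ⟨j, h⟩ c else 0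
    have hrd : ∀ j, (r j).natDegree ≤ d - 1 := by
      intro j; simp only [r]; split_ifs
      · exact polyOf_natDegree _ _ _ _ _
      · simp
    have hsd : ∀ j, (s j).natDegree ≤ d - 1 := by
      intro j; simp only [s]; split_ifs
      · exact polyOf_natDegree _ _ _ _ _
      · simp
    have hsum : ∑ j ∈ Finset.range J, (r j + s j * g) * X ^ (p * j) = 0 := by
      have h1 : R = f ^ l * ∑ j ∈ Finset.range J, (r j + s j * g) * X ^ (p * j) := by
        rw [hR, Finset.sum_range, Finset.mul_sum]
        apply Finset.sum_congr rfl
        intro j _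
        simp only [r, s, j.2, dif_pos]
        ring
      rw [hR0] at h1
      rcases mul_eq_zero.1 h1.symm with h | h
      · exact absurd h (pow_ne_zero _ hf00)
      · exact h
    have hall := stepanov_nonvanish f hp2 hf hdeg hsep hf0 J r s
      (fun j => by have := hrd j; have := hpp.two_le; omega)
      (fun j => by have := hsd j; have := hpp.two_le; omega) hsum
    apply hc0
    funext ⟨b, j, i⟩
    have h1 := hall j j.2
    simp only [r, s, j.2, dif_pos] at h1
    rw [← polyOf_coeff J d b j c i]
    fin_cases b
    · simp [h1.1]
    · simp [h1.2]
  have hRdeg : R.natDegree ≤ 3 * l + 2 * p + p * J := by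
    apply natDegree_sum_le_of_forall_le
    intro j _
    have hj : p * (j : ℕ) ≤ p * J := Nat.mul_le_mul_left _ j.2.le
    have hfl : (f ^ l).natDegree ≤ 3 * l := natDegree_pow_le.trans (by nlinarith)
    have hgd : g.natDegree ≤ (p - 1) / 2 * 3 := natDegree_pow_le.trans (by gcongr)
    have a0 := polyOf_natDegree J d 0 j c
    have a1 := polyOf_natDegree J d 1 j c
    apply natDegree_add_le_of_degree_le
    · have b1 := natDegree_mul_le (p := f ^ l * polyOf J d 0 j c * g ^ 0) (q := X ^ (p * (j : ℕ)))
      have b2 := natDegree_mul_le (p := f ^ l) (q := polyOf J d 0 j c)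
      rw [pow_zero, mul_one, natDegree_X_pow] at b1
      rw [pow_zero, mul_one]
      omega
    · have b1 := natDegree_mul_le (p := f ^ l * polyOf J d 1 j c * g ^ 1) (q := X ^ (p * (j : ℕ)))
      have b2 := natDegree_mul_le (p := f ^ l) (q := polyOf J d 1 j c)
      have b3 := natDegree_mul_le (p := f ^ l * polyOf J d 1 j c) (q := g)
      rw [pow_one, natDegree_X_pow] at b1
      rw [pow_one]
      omega
  have hmult : ∀ x ∈ Finset.univ.filter (fun x : ZMod p => f.eval x ^ ((p - 1) / 2) = e0),
      l ≤ R.rootMultiplicity x := by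
    intro x hx
    simp only [Finset.mem_filter, Finset.mem_univ, true_and] at hx
    have hnz : ((l - 1).factorial : ZMod p) ∈ nonZeroDivisors (ZMod p) := by
      apply mem_nonZeroDivisors_of_ne_zero
      rw [Ne, ZMod.natCast_eq_zero_iff, hpp.dvd_factorial]
      omega
    have := (lt_rootMultiplicity_iff_isRoot_iterate_derivative_of_mem_nonZeroDivisors
      (t := x) hRne hnz).2 ?_
    · omega
    intro k hk
    have hkl : k < l := by omega
    have hder : derivative^[k] R = ∑ j : Fin J, (f ^ (l - k) * stepW f l 0 k (polyOf J d 0 j c) * g ^ 0 *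
          X ^ (p * (j : ℕ)) + f ^ (l - k) * stepW f l 1 k (polyOf J d 1 j c) * g ^ 1 * X ^ (p * (j : ℕ))) := by
      rw [hR, iterate_derivative_sum]
      apply Finset.sum_congr rfl
      intro j _
      rw [iterate_map_add derivative, hg, stepW_derivative f l 0 k j hkl.le, stepW_derivative f l 1 k j hkl.le]
    have hz := congrArg (eval x) (hc k hkl)
    rw [auxPsi_apply, eval_finsetSum] at hz
    simp only [eval_mul, eval_pow, eval_X, eval_add, eval_smul, smul_eq_mul, eval_zero] at hz
    rw [IsRoot.def, hder, eval_finsetSum]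
    simp only [eval_mul, eval_pow, eval_X, eval_add, hg, hx, pow_mul, ZMod.pow_card]
    have : ∀ j : Fin J, (eval x f ^ (l - k) * eval x (stepW f l 0 k (polyOf J d 0 j c)) * e0 ^ 0 * x ^ (j : ℕ)
       + eval x f ^ (l - k) * eval x (stepW f l 1 k (polyOf J d 1 j c)) * e0 ^ 1 * x ^ (j : ℕ))
       = eval x f ^ (l - k) * (x ^ (j : ℕ) * (eval x (stepW f l 0 k (polyOf J d 0 j c)) +
          e0 * eval x (stepW f l 1 k (polyOf J d 1 j c)))) := by intro j; ring
    rw [Finset.sum_congr rfl (fun j _ => this j), ← Finset.mul_sum, hz, mul_zero]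
  refine le_trans ?_ hRdeg
  refine le_trans ?_ (card_roots' R)
  rw [← Multiset.toFinset_sum_count_eq R.roots, mul_comm, ← smul_eq_mul]
  refine le_trans (Finset.card_nsmul_le_sum _ (fun x => R.roots.count x) l ?_) ?_
  · intro x hx
    rw [count_roots]
    exact hmult x hx
  · apply Finset.sum_le_sum_of_subset
    intro x hx
    have := hmult x hx
    rw [Multiset.mem_toFinset, ← Multiset.count_pos, count_roots]
    omega

end Stepanov
end XXY

namespace XXY
open Polynomial
section Weil
variable {p : ℕ} [Fact p.Prime]

/-- the quadratic character mod p -/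
noncomputable abbrev qc (p : ℕ) [Fact p.Prime] : MulChar (ZMod p) ℤ := quadraticChar (ZMod p)

lemma stepanov_choice (f : (ZMod p)[X]) (hp : 37 ≤ p) (hf : f.natDegree ≤ 3) (hdeg : 1 ≤ f.natDegree)
    (hsep : f.Separable) (hf0 : f.coeff 0 ≠ 0) (e0 : ZMod p) :
    2 * (Finset.univ.filter (fun x : ZMod p => f.eval x ^ ((p - 1) / 2) = e0)).card ≤
      p + 12 * Nat.sqrt p + 42 := by
  have hpp : p.Prime := Fact.out
  set l := Nat.sqrt p with hl
  have h1 : l * l ≤ p := Nat.sqrt_le p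
  have h2 : p < (l + 1) * (l + 1) := Nat.lt_succ_sqrt p
  have hl6 : 6 ≤ l := by by_contra h; push Not at h; nlinarith
  have hodd : p % 2 = 1 := hpp.eq_two_or_odd.resolve_left (by omega)
  obtain ⟨d, hd⟩ : ∃ d, p = 2 * d + 3 := ⟨(p - 3) / 2, by omega⟩
  have hJ : l + 7 ≤ 2 * (l / 2 + 4) := by omega
  have hJ2 : 2 * (l / 2 + 4) ≤ l + 8 := by omega
  have := stepanov_bound f (by omega) hf hdeg hsep hf0 e0 l (l / 2 + 4) d (by nlinarith) (by omega) (by omega)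
    (by omega) (by
      generalize l / 2 + 4 = J at *
      rcases Nat.lt_or_ge l 7 with h | h
      · have : l = 6 := by omega
        rw [this] at *
        nlinarith
      nlinarith)
  generalize l / 2 + 4 = J at *
  generalize (Finset.univ.filter (fun x : ZMod p => f.eval x ^ ((p - 1) / 2) = e0)).card = n at *
  by_contra hcon
  push Not at hcon
  have h3 : l * (p + 12 * l + 43) ≤ l * (2 * n) := Nat.mul_le_mul_left _ hcon
  have h4 : p * (2 * J) ≤ p * (l + 8) := Nat.mul_le_mul_left _ hJ2
  nlinarith

lemma qc_pow (hp2 : p ≠ 2) (a : ZMod p) : ((qc p a : ℤ) : ZMod p) = a ^ ((p - 1) / 2) := by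
  have hpp : p.Prime := Fact.out
  have hodd : p % 2 = 1 := hpp.eq_two_or_odd.resolve_left (by omega)
  rw [quadraticChar_eq_pow_of_char_ne_two' (by rw [ZMod.ringChar_zmod_n]; exact hp2), ZMod.card]
  congr 1; omega

lemma qc_abs_le (a : ZMod p) : |qc p a| ≤ 1 := by
  rcases eq_or_ne a 0 with rfl | h
  · simp
  · rcases quadraticChar_dichotomy h with h | h <;> rw [h] <;> simp

lemma weil_aux (f : (ZMod p)[X]) (hp : 37 ≤ p) (hf : f.natDegree ≤ 3) (hdeg : 1 ≤ f.natDegree)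
    (hsep : f.Separable) (hf0 : f.coeff 0 ≠ 0) :
    |∑ x : ZMod p, qc p (f.eval x)| ≤ 12 * Nat.sqrt p + 45 := by
  have hpp : p.Prime := Fact.out
  have hf00 : f ≠ 0 := by rintro rfl; simp at hdeg
  have h1 := stepanov_choice f hp hf hdeg hsep hf0 1
  have h2 := stepanov_choice f hp hf hdeg hsep hf0 (-1)
  have h2ne : (2 : ZMod p) ≠ 0 := by
    have : ((2 : ℕ) : ZMod p) ≠ 0 := by
      rw [Ne, ZMod.natCast_eq_zero_iff]; intro h; have := Nat.le_of_dvd (by norm_num) h; omega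
    simpa using this
  haveI : Fact (2 < p) := ⟨by omega⟩
  have hcharne : (1 : ZMod p) ≠ -1 := fun h => ZMod.neg_one_ne_one h.symm
  set s1 := Finset.univ.filter (fun x : ZMod p => f.eval x ^ ((p - 1) / 2) = 1)
  set s2 := Finset.univ.filter (fun x : ZMod p => f.eval x ^ ((p - 1) / 2) = -1)
  set s0 := Finset.univ.filter (fun x : ZMod p => f.eval x = 0) with hs0
  have h0 : s0.card ≤ 3 := by
    have : s0 ⊆ f.roots.toFinset := by
      intro x hx
      simp only [hs0, Finset.mem_filter, Finset.mem_univ, true_and] at hx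
      simp [hf00, hx]
    exact ((Finset.card_le_card this).trans (Multiset.toFinset_card_le _)).trans ((card_roots' f).trans hf)
  have key : ∀ x : ZMod p, qc p (f.eval x) = (if x ∈ s1 then 1 else 0) - (if x ∈ s2 then 1 else 0) ∧
      (1 : ℤ) = (if x ∈ s1 then 1 else 0) + (if x ∈ s2 then 1 else 0) + (if x ∈ s0 then 1 else 0) := by
    intro x
    have hq := qc_pow (p := p) (by omega) (f.eval x)
    simp only [s1, s2, s0, Finset.mem_filter, Finset.mem_univ, true_and, ← hq]
    rcases eq_or_ne (f.eval x) 0 with h | h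
    · simp [h]
    · rcases quadraticChar_dichotomy h with h' | h'
      · simp [h', h, hcharne]
      · simp [h', h, hcharne.symm]
  have e1 : ∑ x : ZMod p, qc p (f.eval x) = s1.card - s2.card := by
    rw [Finset.sum_congr rfl (fun x _ => (key x).1), Finset.sum_sub_distrib]
    simp
  have e2 : (p : ℤ) = s1.card + s2.card + s0.card := by
    have : ∑ x : ZMod p, (1 : ℤ) = s1.card + s2.card + s0.card := by
      rw [Finset.sum_congr rfl (fun x _ => (key x).2), Finset.sum_add_distrib, Finset.sum_add_distrib]
      simp
    simpa [ZMod.card] using this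
  rw [e1, abs_le]
  omega

theorem weil (f : (ZMod p)[X]) (hp : 3 < p) (hf : f.natDegree ≤ 3) (hdeg : 1 ≤ f.natDegree)
    (hsep : f.Separable) : ((|∑ x : ZMod p, qc p (f.eval x)| : ℤ) : ℝ) ≤ 20 * Real.sqrt p := by
  have hpp : p.Prime := Fact.out
  have hf00 : f ≠ 0 := by rintro rfl; simp at hdeg
  have hs : Real.sqrt p * Real.sqrt p = p := Real.mul_self_sqrt (by positivity)
  have hs0 : 0 ≤ Real.sqrt p := Real.sqrt_nonneg _
  rcases Nat.lt_or_ge p 37 with h | h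
  · have h1 : |∑ x : ZMod p, qc p (f.eval x)| ≤ p := by
      refine (Finset.abs_sum_le_sum_abs _ _).trans ?_
      refine (Finset.sum_le_sum (fun x _ => qc_abs_le (f.eval x))).trans ?_
      simp [ZMod.card]
    have h2 : ((|∑ x : ZMod p, qc p (f.eval x)| : ℤ) : ℝ) ≤ p := by exact_mod_cast h1
    refine h2.trans ?_
    have : (p : ℝ) < 37 := by exact_mod_cast h
    have : Real.sqrt p < 7 := by nlinarith
    nlinarith
  · obtain ⟨c, hc⟩ : ∃ c : ZMod p, f.eval c ≠ 0 := by
      by_contra hcon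
      push Not at hcon
      apply hf00
      apply eq_zero_of_natDegree_lt_card_of_eval_eq_zero f Function.injective_id
      · simpa using hcon
      · rw [ZMod.card]; omega
    have hcomp : ∑ x : ZMod p, qc p ((f.comp (X + C c)).eval x) = ∑ x : ZMod p, qc p (f.eval x) := by
      simp only [eval_comp, eval_add, eval_X, eval_C]
      exact Fintype.sum_equiv (Equiv.addRight c) _ _ (fun x => rfl)
    have hdc : (f.comp (X + C c)).natDegree = f.natDegree := by
      rw [natDegree_comp, natDegree_X_add_C, mul_one]
    have := weil_aux (f.comp (X + C c)) h (by omega) (by omega)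
      (by
        obtain ⟨a, b, hab⟩ := hsep
        refine ⟨a.comp (X + C c), b.comp (X + C c), ?_⟩
        rw [derivative_comp]
        have := congrArg (fun q => q.comp (X + C c)) hab
        simpa using this)
      (by rw [coeff_zero_eq_eval_zero]; simpa using hc)
    rw [hcomp] at this
    have h2 : ((|∑ x : ZMod p, qc p (f.eval x)| : ℤ) : ℝ) ≤ 12 * (Nat.sqrt p : ℝ) + 45 := by exact_mod_cast this
    refine h2.trans ?_
    have : (Nat.sqrt p : ℝ) ≤ Real.sqrt p := Real.nat_sqrt_le_real_sqrt
    have h37 : (37 : ℝ) ≤ p := by exact_mod_cast h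
    have : 6 < Real.sqrt p := by nlinarith
    nlinarith
end Weil
end XXY

namespace XXY
open Polynomial

/-- the binary cubic form `c1 (u1 s + u2 t)^3 + c2 (v1 s + v2 t)^3` -/
def cub {R : Type*} [CommRing R] (c1 c2 u1 u2 v1 v2 s t : R) : R :=
  c1 * (u1 * s + u2 * t) ^ 3 + c2 * (v1 * s + v2 * t) ^ 3

section Cub
variable {p : ℕ} [Fact p.Prime]

lemma three_ne (hp : 3 < p) : (3 : ZMod p) ≠ 0 := by
  have : ((3 : ℕ) : ZMod p) ≠ 0 := by
    rw [Ne, ZMod.natCast_eq_zero_iff]; intro h; have := Nat.le_of_dvd (by norm_num) h; omega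
  simpa using this

lemma cub_sum (hp : 3 < p) (c1 c2 u1 u2 v1 v2 : ZMod p) (h1 : c1 ≠ 0) (h2 : c2 ≠ 0)
    (hD : u1 * v2 - u2 * v1 ≠ 0) :
    ((|∑ x : ZMod p, qc p (cub c1 c2 u1 u2 v1 v2 x 1)| : ℤ) : ℝ) ≤ 20 * Real.sqrt p := by
  have h3 := three_ne hp
  set A : (ZMod p)[X] := C u1 * X + C u2 with hA
  set W : (ZMod p)[X] := C v1 * X + C v2 with hW
  set f : (ZMod p)[X] := C c1 * A ^ 3 + C c2 * W ^ 3 with hf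
  set D := u1 * v2 - u2 * v1 with hDd
  have hev : ∀ x, f.eval x = cub c1 c2 u1 u2 v1 v2 x 1 := by
    intro x; simp [hf, hA, hW, cub]
  have hfc : f = Cubic.toPoly ⟨c1 * u1 ^ 3 + c2 * v1 ^ 3, 3 * (c1 * u1 ^ 2 * u2 + c2 * v1 ^ 2 * v2),
      3 * (c1 * u1 * u2 ^ 2 + c2 * v1 * v2 ^ 2), c1 * u2 ^ 3 + c2 * v2 ^ 3⟩ := by
    rw [Cubic.toPoly, hf, hA, hW]
    simp only [map_add, map_mul, map_pow]
    have : (C (3 : ZMod p)) = 3 := rfl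
    rw [this]
    ring
  have hdeg3 : f.natDegree ≤ 3 := by
    rw [hfc, Cubic.toPoly]; compute_degree
  have hdeg1 : 1 ≤ f.natDegree := by
    by_contra hcon
    have e3 : f.coeff 3 = 0 := coeff_eq_zero_of_natDegree_lt (by omega)
    have e2 : f.coeff 2 = 0 := coeff_eq_zero_of_natDegree_lt (by omega)
    rw [hfc, Cubic.coeff_eq_a] at e3
    rw [hfc, Cubic.coeff_eq_b] at e2
    simp only [mul_eq_zero, h3, false_or] at e2 e3
    have : c1 * u1 ^ 2 * D = 0 := by rw [hDd]; linear_combination v2 * e3 - v1 * e2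
    have hu : u1 = 0 := by simpa [h1, hD] using this
    rw [hu] at e3
    have hv : v1 = 0 := by simpa [h2] using e3
    apply hD; rw [hDd, hu, hv]; ring
  have hder : derivative f = 3 * (C (c1 * u1) * A ^ 2 + C (c2 * v1) * W ^ 2) := by
    rw [hf, hA, hW]
    simp only [derivative_add, derivative_mul, derivative_C, derivative_pow, derivative_X]
    simp only [map_mul, Nat.cast_ofNat, map_ofNat]
    ring
  have hcop : IsCoprime A W := by
    refine ⟨C (-D⁻¹ * v1), C (D⁻¹ * u1), ?_⟩
    have : C (D⁻¹) * C D = (1 : (ZMod p)[X]) := by rw [← C_mul, inv_mul_cancel₀ hD, C_1]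
    rw [← this, hDd, hA, hW]
    simp only [map_mul, map_neg, map_sub]
    ring
  have hcop2 : IsCoprime (A ^ 2) (W ^ 2) := hcop.pow
  have hsep : f.Separable := by
    obtain ⟨a, b, hab⟩ := hcop2
    have e1 : (A ^ 2) = f * C (-(c1 * D)⁻¹ * v1) + derivative f * (C ((c1 * D)⁻¹ * 3⁻¹) * W) := by
      have : C ((c1 * D)⁻¹) * (C c1 * C D) = (1 : (ZMod p)[X]) := by
        rw [← C_mul, ← C_mul, inv_mul_cancel₀ (mul_ne_zero h1 hD), C_1]
      have t3 : C (3 : ZMod p)⁻¹ * 3 = (1 : (ZMod p)[X]) := by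
        have : (3 : (ZMod p)[X]) = C 3 := rfl
        rw [this, ← C_mul, inv_mul_cancel₀ h3, C_1]
      have eD : C D = C v2 * C u1 - C v1 * C u2 := by simp only [hDd, map_sub, map_mul]; ring
      rw [hder, hf]
      simp only [map_mul, map_neg]
      have key : C v1 * A - C u1 * W = - C D := by rw [eD, hA, hW]; ring
      linear_combination (- A^2) * this - (C (c1 * D)⁻¹ * W * (C c1 * C u1 * A^2 + C c2 * C v1 * W^2)) * t3
        + C (c1 * D)⁻¹ * C c1 * A^2 * key
    have e2 : (W ^ 2) = f * C ((c2 * D)⁻¹ * u1) + derivative f * (C (-(c2 * D)⁻¹ * 3⁻¹) * A) := by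
      have : C ((c2 * D)⁻¹) * (C c2 * C D) = (1 : (ZMod p)[X]) := by
        rw [← C_mul, ← C_mul, inv_mul_cancel₀ (mul_ne_zero h2 hD), C_1]
      have t3 : C (3 : ZMod p)⁻¹ * 3 = (1 : (ZMod p)[X]) := by
        have : (3 : (ZMod p)[X]) = C 3 := rfl
        rw [this, ← C_mul, inv_mul_cancel₀ h3, C_1]
      have eD : C D = C v2 * C u1 - C v1 * C u2 := by simp only [hDd, map_sub, map_mul]; ring
      rw [hder, hf]
      simp only [map_mul, map_neg]
      have key : C v1 * A - C u1 * W = - C D := by rw [eD, hA, hW]; ring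
      linear_combination (- W^2) * this + (C (c2 * D)⁻¹ * A * (C c1 * C u1 * A^2 + C c2 * C v1 * W^2)) * t3
        + C (c2 * D)⁻¹ * C c2 * W^2 * key
    rw [e1, e2] at hab
    rw [separable_def]
    generalize derivative f = f' at *
    refine ⟨a * C (-(c1 * D)⁻¹ * v1) + b * C ((c2 * D)⁻¹ * u1),
      a * (C ((c1 * D)⁻¹ * 3⁻¹) * W) + b * (C (-(c2 * D)⁻¹ * 3⁻¹) * A), ?_⟩
    rw [← hab]; ring
  have := weil f hp hdeg3 hdeg1 hsep
  simpa only [hev] using this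

lemma qc_cube (a : ZMod p) : qc p (a ^ 3) = qc p a := by
  rcases eq_or_ne a 0 with rfl | h
  · simp
  · rw [map_pow]
    rcases quadraticChar_dichotomy h with h | h <;> rw [h] <;> norm_num

lemma qc_fourth (a : ZMod p) (h : a ≠ 0) : qc p (a ^ 4) = 1 := by
  rw [map_pow]
  rcases quadraticChar_dichotomy h with h | h <;> rw [h] <;> norm_num

lemma cub_smul {R : Type*} [CommRing R] (c1 c2 u1 u2 v1 v2 s t l : R) :
    cub c1 c2 u1 u2 v1 v2 (l * s) (l * t) = l ^ 3 * cub c1 c2 u1 u2 v1 v2 s t := by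
  simp only [cub]; ring

lemma cub_sum_line (c1 c2 u1 u2 v1 v2 t : ZMod p) (ht : t ≠ 0) :
    ∑ s : ZMod p, qc p (cub c1 c2 u1 u2 v1 v2 s t) =
      qc p t * ∑ x : ZMod p, qc p (cub c1 c2 u1 u2 v1 v2 x 1) := by
  rw [Finset.mul_sum, ← Equiv.sum_comp (Equiv.mulLeft₀ t ht)]
  apply Finset.sum_congr rfl
  intro x _
  have := cub_smul c1 c2 u1 u2 v1 v2 x 1 t
  rw [mul_one] at this
  change qc p (cub c1 c2 u1 u2 v1 v2 (t * x) t) = _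
  rw [this, map_mul, qc_cube]

lemma cub_sum_line_bound (hp : 3 < p) (c1 c2 u1 u2 v1 v2 : ZMod p) (h1 : c1 ≠ 0) (h2 : c2 ≠ 0)
    (hD : u1 * v2 - u2 * v1 ≠ 0) (t : ZMod p) :
    ((|∑ s : ZMod p, qc p (cub c1 c2 u1 u2 v1 v2 s t)| : ℤ) : ℝ) ≤ 20 * Real.sqrt p := by
  rcases eq_or_ne t 0 with rfl | ht
  · have : ∀ s, qc p (cub c1 c2 u1 u2 v1 v2 s 0) = qc p (c1 * u1 ^ 3 + c2 * v1 ^ 3) * qc p s := by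
      intro s
      rw [← qc_cube s, ← map_mul]; congr 1; simp only [cub]; ring
    rw [Finset.sum_congr rfl (fun s _ => this s), ← Finset.mul_sum,
      quadraticChar_sum_zero (by rw [ZMod.ringChar_zmod_n]; omega)]
    simp
  · rw [cub_sum_line _ _ _ _ _ _ _ ht, abs_mul]
    have : |qc p t| = 1 := by
      rcases quadraticChar_dichotomy ht with h | h <;> rw [h] <;> simp
    rw [this, one_mul]
    exact cub_sum hp c1 c2 u1 u2 v1 v2 h1 h2 hD

lemma cub_sum_two (c1 c2 u1 u2 v1 v2 : ZMod p) :
    ∑ z : ZMod p × ZMod p, qc p (cub c1 c2 u1 u2 v1 v2 z.1 z.2 * z.2) =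
      (p - 1) * ∑ x : ZMod p, qc p (cub c1 c2 u1 u2 v1 v2 x 1) := by
  have hpp : p.Prime := Fact.out
  rw [Fintype.sum_prod_type_right]
  have : ∀ t : ZMod p, ∑ s : ZMod p, qc p (cub c1 c2 u1 u2 v1 v2 s t * t) =
      if t = 0 then 0 else ∑ x : ZMod p, qc p (cub c1 c2 u1 u2 v1 v2 x 1) := by
    intro t
    split_ifs with ht
    · simp [ht]
    · simp only [map_mul]
      rw [← Finset.sum_mul, cub_sum_line _ _ _ _ _ _ _ ht]
      rw [mul_right_comm, ← sq, quadraticChar_sq_one ht, one_mul]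
  rw [Finset.sum_congr rfl (fun t _ => this t), Finset.sum_ite, Finset.sum_const_zero, zero_add,
    Finset.sum_const, nsmul_eq_mul]
  congr 1
  have : (Finset.univ.filter (fun t : ZMod p => ¬ t = 0)).card = p - 1 := by
    rw [Finset.filter_ne', Finset.card_erase_of_mem (Finset.mem_univ _), Finset.card_univ, ZMod.card]
  rw [this, Nat.cast_sub hpp.one_le]; simp

lemma cub_sum_lin (hp : 3 < p) (c1 c2 u1 u2 v1 v2 : ZMod p) (h1 : c1 ≠ 0) (h2 : c2 ≠ 0)
    (hD : u1 * v2 - u2 * v1 ≠ 0) (h k : ZMod p) :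
    ((|∑ z : ZMod p × ZMod p, qc p (cub c1 c2 u1 u2 v1 v2 z.1 z.2 * (h * z.1 + k * z.2))| : ℤ) : ℝ)
      ≤ (p - 1) * (20 * Real.sqrt p) := by
  have hpp : p.Prime := Fact.out
  have hp1 : (0 : ℝ) ≤ (p : ℝ) - 1 := by
    have : (1 : ℝ) ≤ p := by exact_mod_cast hpp.one_le
    linarith
  have main : ∀ u1 u2 v1 v2 : ZMod p, u1 * v2 - u2 * v1 ≠ 0 →
      ((|∑ z : ZMod p × ZMod p, qc p (cub c1 c2 u1 u2 v1 v2 z.1 z.2 * z.2)| : ℤ) : ℝ)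
      ≤ (p - 1) * (20 * Real.sqrt p) := by
    intro u1 u2 v1 v2 hD
    rw [cub_sum_two, abs_mul]
    push_cast
    rw [abs_of_nonneg hp1]
    have := cub_sum hp c1 c2 u1 u2 v1 v2 h1 h2 hD
    push_cast at this
    gcongr
  rcases eq_or_ne k 0 with hk | hk
  · rcases eq_or_ne h 0 with hh | hh
    · simp [hk, hh]; positivity
    · have := main u2 (u1 * h⁻¹) v2 (v1 * h⁻¹) (by
        have : u2 * (v1 * h⁻¹) - u1 * h⁻¹ * v2 = -((u1 * v2 - u2 * v1) * h⁻¹) := by ring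
        rw [this]; exact neg_ne_zero.2 (mul_ne_zero hD (inv_ne_zero hh)))
      let e : ZMod p × ZMod p ≃ ZMod p × ZMod p :=
        { toFun := fun z => (z.2, h * z.1)
          invFun := fun z => (h⁻¹ * z.2, z.1)
          left_inv := fun z => by ext <;> simp [hh]
          right_inv := fun z => by ext <;> simp [hh] }
      rw [← Equiv.sum_comp e] at this
      convert this using 5 with z
      simp only [e, hk, Equiv.coe_fn_mk, cub]
      field_simp
      ring
  · have := main (u1 - u2 * k⁻¹ * h) (u2 * k⁻¹) (v1 - v2 * k⁻¹ * h) (v2 * k⁻¹) (by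
        have : (u1 - u2 * k⁻¹ * h) * (v2 * k⁻¹) - (u2 * k⁻¹) * (v1 - v2 * k⁻¹ * h)
          = ((u1 * v2 - u2 * v1) * k⁻¹) := by ring
        rw [this]; exact (mul_ne_zero hD (inv_ne_zero hk)))
    let e : ZMod p × ZMod p ≃ ZMod p × ZMod p :=
      { toFun := fun z => (z.1, h * z.1 + k * z.2)
        invFun := fun z => (z.1, k⁻¹ * (z.2 - h * z.1))
        left_inv := fun z => by ext <;> simp [hk]
        right_inv := fun z => by ext <;> simp [hk] }
    rw [← Equiv.sum_comp e] at this
    convert this using 5 with z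
    simp only [e, Equiv.coe_fn_mk, cub]
    field_simp
    ring
end Cub
end XXY

namespace XXY

section Fourier
variable {p : ℕ} [Fact p.Prime]

/-- the standard additive character -/
noncomputable abbrev psi (p : ℕ) [Fact p.Prime] : AddChar (ZMod p) ℂ := ZMod.stdAddChar

lemma psi_prim : (psi p).IsPrimitive := ZMod.isPrimitive_stdAddChar p

/-- Fourier transform of a function on the plane -/
noncomputable def khat (K : ZMod p × ZMod p → ℤ) (h : ZMod p × ZMod p) : ℂ :=
  ∑ z : ZMod p × ZMod p, (K z : ℂ) * psi p (-(h.1 * z.1 + h.2 * z.2))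

lemma psi_sum (w : ZMod p × ZMod p) :
    ∑ h : ZMod p × ZMod p, psi p (h.1 * w.1 + h.2 * w.2) = if w = 0 then ((p : ℂ) ^ 2) else 0 := by
  simp only [AddChar.map_add_eq_mul]
  rw [Fintype.sum_prod_type]
  simp only
  rw [← Fintype.sum_mul_sum, AddChar.sum_mulShift _ psi_prim, AddChar.sum_mulShift _ psi_prim, ZMod.card]
  by_cases h1 : w.1 = 0 <;> by_cases h2 : w.2 = 0 <;> simp [h1, h2, Prod.ext_iff, sq]

lemma khat_inv (K : ZMod p × ZMod p → ℤ) (z : ZMod p × ZMod p) :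
    (K z : ℂ) * (p : ℂ) ^ 2 = ∑ h : ZMod p × ZMod p, khat K h * psi p (h.1 * z.1 + h.2 * z.2) := by
  simp only [khat, Finset.sum_mul]
  rw [Finset.sum_comm]
  have : ∀ w : ZMod p × ZMod p, ∑ h : ZMod p × ZMod p,
      (K w : ℂ) * psi p (-(h.1 * w.1 + h.2 * w.2)) * psi p (h.1 * z.1 + h.2 * z.2) =
      if w = z then (K z : ℂ) * (p : ℂ) ^ 2 else 0 := by
    intro w
    have h1 : ∀ h : ZMod p × ZMod p,
      (K w : ℂ) * psi p (-(h.1 * w.1 + h.2 * w.2)) * psi p (h.1 * z.1 + h.2 * z.2) =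
      K w * psi p (h.1 * (z - w).1 + h.2 * (z - w).2) := by
      intro h
      rw [mul_assoc, ← AddChar.map_add_eq_mul]
      congr 2
      simp only [Prod.fst_sub, Prod.snd_sub]; ring
    rw [Finset.sum_congr rfl (fun h _ => h1 h), ← Finset.mul_sum, psi_sum]
    by_cases hw : w = z
    · simp [hw]
    · simp [hw, sub_eq_zero, Ne.symm hw]
  rw [Finset.sum_congr rfl (fun w _ => this w)]
  simp

/-- complex quadratic character -/
noncomputable abbrev qcC (p : ℕ) [Fact p.Prime] : MulChar (ZMod p) ℂ :=
  (qc p).ringHomComp (Int.castRingHom ℂ)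

lemma qcC_apply (a : ZMod p) : qcC p a = (qc p a : ℂ) := rfl

lemma gauss_norm (hp : 3 < p) : ‖gaussSum (qcC p) (psi p)‖ = Real.sqrt p := by
  have h1 : qcC p ≠ 1 := by
    intro h
    apply quadraticChar_ne_one (F := ZMod p) (by rw [ZMod.ringChar_zmod_n]; omega)
    ext a
    have := congrArg (fun χ : MulChar (ZMod p) ℂ => χ a) h
    simp only [qcC_apply] at this
    rw [MulChar.one_apply_coe] at this ⊢
    exact_mod_cast this
  have h2 := gaussSum_sq h1 ((quadraticChar_isQuadratic (ZMod p)).comp _) psi_prim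
  have h3 := congrArg norm h2
  rw [norm_pow, norm_mul, ZMod.card] at h3
  have h4 : ‖qcC p (-1)‖ = 1 := by
    rw [qcC_apply]
    rcases quadraticChar_dichotomy (neg_ne_zero.2 (one_ne_zero (α := ZMod p))) with h | h <;> rw [h] <;> simp
  rw [h4, one_mul] at h3
  rw [eq_comm, Real.sqrt_eq_iff_eq_sq (by positivity) (norm_nonneg _), h3]
  simp

lemma gauss_shift (hp : 3 < p) (b : ZMod p) :
    ∑ l : ZMod p, qcC p l * psi p (b * l) = qcC p b * gaussSum (qcC p) (psi p) := by
  rcases eq_or_ne b 0 with rfl | hb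
  · have : ∑ l : ZMod p, qcC p l = 0 := by
      have := quadraticChar_sum_zero (F := ZMod p) (by rw [ZMod.ringChar_zmod_n]; omega)
      simp only [qcC_apply]
      exact_mod_cast this
    simp only [zero_mul, AddChar.map_zero_eq_one, mul_one, this]
    rw [qcC_apply]; simp
  · have h1 := gaussSum_mulShift (qcC p) (psi p) (Units.mk0 b hb)
    have h2 : qcC p b * qcC p b = 1 := by
      have := quadraticChar_sq_one hb
      rw [qcC_apply, ← sq]
      exact_mod_cast this
    rw [← h1, Units.val_mk0, ← mul_assoc, h2, one_mul]
    rfl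

theorem khat_bound (hp : 3 < p) (c1 c2 u1 u2 v1 v2 : ZMod p) (h1 : c1 ≠ 0) (h2 : c2 ≠ 0)
    (hD : u1 * v2 - u2 * v1 ≠ 0) (h : ZMod p × ZMod p) :
    ‖khat (fun z => qc p (cub c1 c2 u1 u2 v1 v2 z.1 z.2)) h‖ ≤ 20 * p := by
  have hpp : p.Prime := Fact.out
  set K : ZMod p × ZMod p → ℤ := fun z => qc p (cub c1 c2 u1 u2 v1 v2 z.1 z.2) with hK
  have hscale : ∀ l : ZMod p, l ≠ 0 → khat K h =
      qcC p l * ∑ z : ZMod p × ZMod p, (K z : ℂ) * psi p (-(h.1 * z.1 + h.2 * z.2) * l) := by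
    intro l hl
    rw [khat, ← Equiv.sum_comp (Equiv.prodCongr (Equiv.mulLeft₀ l hl) (Equiv.mulLeft₀ l hl)), Finset.mul_sum]
    apply Finset.sum_congr rfl
    intro z _
    change ((qc p (cub c1 c2 u1 u2 v1 v2 (l * z.1) (l * z.2)) : ℤ) : ℂ) *
      psi p (-(h.1 * (l * z.1) + h.2 * (l * z.2))) = _
    rw [cub_smul, map_mul, qc_cube, qcC_apply, Int.cast_mul, mul_assoc]
    congr 3
    ring
  have hsum : ((p : ℂ) - 1) * khat K h = ∑ l : ZMod p, qcC p l *
      ∑ z : ZMod p × ZMod p, (K z : ℂ) * psi p (-(h.1 * z.1 + h.2 * z.2) * l) := by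
    have : ∀ l : ZMod p, qcC p l * ∑ z : ZMod p × ZMod p, (K z : ℂ) * psi p (-(h.1 * z.1 + h.2 * z.2) * l)
        = if l = 0 then 0 else khat K h := by
      intro l
      split_ifs with hl
      · rw [hl, qcC_apply]; simp
      · exact (hscale l hl).symm
    rw [Finset.sum_congr rfl (fun l _ => this l), Finset.sum_ite, Finset.sum_const_zero, zero_add,
      Finset.sum_const, nsmul_eq_mul]
    congr 1
    have : (Finset.univ.filter (fun t : ZMod p => ¬ t = 0)).card = p - 1 := by
      rw [Finset.filter_ne', Finset.card_erase_of_mem (Finset.mem_univ _), Finset.card_univ, ZMod.card]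
    rw [this, Nat.cast_sub hpp.one_le]; simp
  have hsum2 : ((p : ℂ) - 1) * khat K h = gaussSum (qcC p) (psi p) * (qc p (-1) : ℂ) *
      ((∑ z : ZMod p × ZMod p, qc p (cub c1 c2 u1 u2 v1 v2 z.1 z.2 * (h.1 * z.1 + h.2 * z.2)) : ℤ) : ℂ) := by
    rw [hsum]
    simp only [Finset.mul_sum]
    rw [Finset.sum_comm, Int.cast_sum, Finset.mul_sum]
    apply Finset.sum_congr rfl
    intro z _
    have := gauss_shift hp (-(h.1 * z.1 + h.2 * z.2))
    have e : ∀ l : ZMod p, qcC p l * ((K z : ℂ) * psi p (-(h.1 * z.1 + h.2 * z.2) * l)) =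
      (K z : ℂ) * (qcC p l * psi p (-(h.1 * z.1 + h.2 * z.2) * l)) := by intro l; ring
    rw [Finset.sum_congr rfl (fun l _ => e l), ← Finset.mul_sum, this, qcC_apply, hK, ← neg_one_mul (h.1 * z.1 + _),
      map_mul (qc p), map_mul (qc p)]
    push_cast
    ring
  have hp1 : (0 : ℝ) < (p : ℝ) - 1 := by
    have : (1 : ℝ) < p := by exact_mod_cast hpp.one_lt
    linarith
  have hn := congrArg norm hsum2
  rw [norm_mul, norm_mul, norm_mul, gauss_norm hp] at hn
  have e1 : ‖(p : ℂ) - 1‖ = (p : ℝ) - 1 := by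
    have : ((p : ℂ) - 1) = (((p : ℝ) - 1 : ℝ) : ℂ) := by push_cast; rfl
    rw [this, Complex.norm_real, Real.norm_of_nonneg hp1.le]
  have e2 : ‖((qc p (-1) : ℤ) : ℂ)‖ = 1 := by
    rcases quadraticChar_dichotomy (neg_ne_zero.2 (one_ne_zero (α := ZMod p))) with h | h <;> rw [h] <;> simp
  have b := cub_sum_lin hp c1 c2 u1 u2 v1 v2 h1 h2 hD h.1 h.2
  rw [e1, e2, mul_one, Complex.norm_intCast, ← Int.cast_abs] at hn
  have hs : Real.sqrt p * Real.sqrt p = p := Real.mul_self_sqrt (by positivity)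
  have : ((p : ℝ) - 1) * ‖khat K h‖ ≤ ((p : ℝ) - 1) * (20 * p) := by
    rw [hn]
    calc _ ≤ Real.sqrt p * ((p - 1) * (20 * Real.sqrt p)) := by gcongr
      _ = ((p : ℝ) - 1) * (20 * (Real.sqrt p * Real.sqrt p)) := by ring
      _ = _ := by rw [hs]
  exact le_of_mul_le_mul_left this hp1

end Fourier

section Bilinear
variable {p q : ℕ} [Fact p.Prime] [Fact q.Prime]

/-- reduction of an integer pair -/
def red (p : ℕ) (x : ℤ × ℤ) : ZMod p × ZMod p := ((x.1 : ZMod p), (x.2 : ZMod p))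

lemma red_sub (x y : ℤ × ℤ) : red p (x - y) = red p x - red p y := by
  ext <;> simp [red]

/-- general bilinear bound -/
theorem bilinear_bound (K : ZMod p × ZMod p → ℤ) (K' : ZMod q × ZMod q → ℤ) (M M' : ℝ)
    (hM : ∀ h, ‖khat K h‖ ≤ M) (hM' : ∀ h, ‖khat K' h‖ ≤ M') (A : Finset (ℤ × ℤ)) :
    ((|∑ x ∈ A, ∑ y ∈ A, K (red p (x - y)) * K' (red q (x - y))| : ℤ) : ℝ) ≤
      M * M' * (((A ×ˢ A).filter (fun z => red p z.1 = red p z.2 ∧ red q z.1 = red q z.2)).card : ℝ) := by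
  have hM0 : 0 ≤ M := (norm_nonneg _).trans (hM 0)
  have hM0' : 0 ≤ M' := (norm_nonneg _).trans (hM' 0)
  let e : (ZMod p × ZMod p) × (ZMod q × ZMod q) → ℤ × ℤ → ℂ := fun h x =>
    psi p (h.1.1 * (red p x).1 + h.1.2 * (red p x).2) * psi q (h.2.1 * (red q x).1 + h.2.2 * (red q x).2)
  have hpq : ∀ x y : ℤ × ℤ, ((K (red p (x - y)) * K' (red q (x - y)) : ℤ) : ℂ) * ((p : ℂ) ^ 2 * (q : ℂ) ^ 2) =
      ∑ h : (ZMod p × ZMod p) × (ZMod q × ZMod q), (khat K h.1 * khat K' h.2) *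
        (e h x * (starRingEnd ℂ) (e h y)) := by
    intro x y
    have e1 := khat_inv K (red p (x - y))
    have e2 := khat_inv K' (red q (x - y))
    push_cast
    rw [mul_mul_mul_comm, e1, e2, Fintype.sum_mul_sum, ← Fintype.sum_prod_type'
      (f := fun (h : ZMod p × ZMod p) (h' : ZMod q × ZMod q) => khat K h * _ * (khat K' h' * _))]
    apply Finset.sum_congr rfl
    intro h _
    rw [mul_mul_mul_comm]
    congr 1
    simp only [e, map_mul, ← AddChar.map_neg_eq_conj]
    rw [mul_mul_mul_comm (psi p _), ← AddChar.map_add_eq_mul, ← AddChar.map_add_eq_mul, red_sub, red_sub]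
    simp only [Prod.fst_sub, Prod.snd_sub]
    congr 2 <;> ring
  have horth : ∀ x y : ℤ × ℤ, ∑ h : (ZMod p × ZMod p) × (ZMod q × ZMod q),
      (e h x * (starRingEnd ℂ) (e h y)) =
      if red p x = red p y ∧ red q x = red q y then ((p : ℂ) ^ 2 * (q : ℂ) ^ 2) else 0 := by
    intro x y
    have : ∀ h : (ZMod p × ZMod p) × (ZMod q × ZMod q), (e h x * (starRingEnd ℂ) (e h y)) =
      psi p (h.1.1 * (red p x - red p y).1 + h.1.2 * (red p x - red p y).2) *
      psi q (h.2.1 * (red q x - red q y).1 + h.2.2 * (red q x - red q y).2) := by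
      intro h
      simp only [e, map_mul, ← AddChar.map_neg_eq_conj]
      rw [mul_mul_mul_comm (psi p _), ← AddChar.map_add_eq_mul, ← AddChar.map_add_eq_mul]
      simp only [Prod.fst_sub, Prod.snd_sub]
      congr 2 <;> ring
    rw [Finset.sum_congr rfl (fun h _ => this h), Fintype.sum_prod_type]
    simp only
    rw [← Fintype.sum_mul_sum, psi_sum, psi_sum]
    by_cases a : red p x = red p y <;> by_cases b : red q x = red q y <;> simp [a, b, sub_eq_zero]
  have hpos : (0 : ℝ) < (p : ℝ) ^ 2 * (q : ℝ) ^ 2 := by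
    have : 0 < p := (Fact.out : p.Prime).pos
    have : 0 < q := (Fact.out : q.Prime).pos
    positivity
  have hmain : ((∑ x ∈ A, ∑ y ∈ A, K (red p (x - y)) * K' (red q (x - y)) : ℤ) : ℂ) *
      ((p : ℂ) ^ 2 * (q : ℂ) ^ 2) = ∑ h : (ZMod p × ZMod p) × (ZMod q × ZMod q),
        (khat K h.1 * khat K' h.2) * ((∑ x ∈ A, e h x) * (starRingEnd ℂ) (∑ x ∈ A, e h x)) := by
    rw [Int.cast_sum, Finset.sum_mul]
    simp only [Int.cast_sum, Finset.sum_mul, hpq]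
    rw [Finset.sum_congr rfl (fun x _ => Finset.sum_comm), Finset.sum_comm]
    apply Finset.sum_congr rfl
    intro h _
    rw [map_sum, Finset.mul_sum]
    apply Finset.sum_congr rfl
    intro x _
    rw [Finset.mul_sum, Finset.mul_sum]
  have hcount : ∑ h : (ZMod p × ZMod p) × (ZMod q × ZMod q), Complex.normSq (∑ x ∈ A, e h x) =
      (((A ×ˢ A).filter (fun z => red p z.1 = red p z.2 ∧ red q z.1 = red q z.2)).card : ℝ) *
        ((p : ℝ) ^ 2 * (q : ℝ) ^ 2) := by
    have : ∑ h : (ZMod p × ZMod p) × (ZMod q × ZMod q),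
        ((∑ x ∈ A, e h x) * (starRingEnd ℂ) (∑ x ∈ A, e h x)) =
      (((A ×ˢ A).filter (fun z => red p z.1 = red p z.2 ∧ red q z.1 = red q z.2)).card : ℂ) *
        ((p : ℂ) ^ 2 * (q : ℂ) ^ 2) := by
      simp only [map_sum, Finset.sum_mul_sum]
      rw [Finset.sum_comm, Finset.sum_congr rfl (fun x _ => Finset.sum_comm)]
      simp only [horth]
      rw [← Finset.sum_product' (f := fun x y => if red p x = red p y ∧ red q x = red q y then
        ((p : ℂ) ^ 2 * (q : ℂ) ^ 2) else 0), ← Finset.sum_filter, Finset.sum_const, nsmul_eq_mul]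
    have h2 : ((∑ h : (ZMod p × ZMod p) × (ZMod q × ZMod q), Complex.normSq (∑ x ∈ A, e h x) : ℝ) : ℂ) =
      ((((A ×ˢ A).filter (fun z => red p z.1 = red p z.2 ∧ red q z.1 = red q z.2)).card : ℝ) *
        ((p : ℝ) ^ 2 * (q : ℝ) ^ 2) : ℝ) := by
      push_cast
      rw [← this]
      apply Finset.sum_congr rfl
      intro h _
      rw [Complex.mul_conj]
    exact_mod_cast h2
  have hn := congrArg norm hmain
  have e1 : ‖((p : ℂ) ^ 2 * (q : ℂ) ^ 2)‖ = (p : ℝ) ^ 2 * (q : ℝ) ^ 2 := by simp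
  rw [norm_mul, e1, Complex.norm_intCast, ← Int.cast_abs] at hn
  refine le_of_mul_le_mul_right ?_ hpos
  rw [hn, mul_assoc, ← hcount, Finset.mul_sum]
  refine (norm_sum_le _ _).trans (Finset.sum_le_sum fun h _ => ?_)
  rw [norm_mul, norm_mul, Complex.mul_conj, Complex.norm_real, Real.norm_of_nonneg (Complex.normSq_nonneg _)]
  have := hM h.1
  have := hM' h.2
  have := Complex.normSq_nonneg (∑ x ∈ A, e h x)
  gcongr
end Bilinear
end XXY

namespace XXY

lemma sum_range_zmod (m : ℕ) [NeZero m] (φ : ZMod m → ℤ) :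
    ∑ i ∈ Finset.range m, φ (i : ZMod m) = ∑ z : ZMod m, φ z := by
  refine Finset.sum_bij' (fun i _ => (i : ZMod m)) (fun z _ => z.val) ?_ ?_ ?_ ?_ ?_
  · intros; simp
  · intro z _; simpa using ZMod.val_lt z
  · intro i hi; exact ZMod.val_cast_of_lt (by simpa using hi)
  · intro z _; simp
  · intros; rfl

lemma sum_range_mul_zmod (m n : ℕ) [NeZero m] (φ : ZMod m → ℤ) :
    ∑ i ∈ Finset.range (n * m), φ (i : ZMod m) = n * ∑ z : ZMod m, φ z := by
  induction n with
  | zero => simp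
  | succ n ih =>
    rw [Nat.succ_mul, Finset.sum_range_add, ih]
    have : ∀ x : ℕ, φ ((n * m + x : ℕ) : ZMod m) = φ (x : ZMod m) := by
      intro x; push_cast; simp
    simp only [this]
    rw [sum_range_zmod]; push_cast; ring

lemma sum_Ico_int (N : ℕ) (f : ℤ → ℤ) :
    ∑ i ∈ Finset.Ico (0 : ℤ) N, f i = ∑ i ∈ Finset.range N, f (i : ℤ) := by
  symm
  refine Finset.sum_bij' (fun i _ => (i : ℤ)) (fun z _ => z.toNat) ?_ ?_ ?_ ?_ ?_
  · intro i hi; simp at hi ⊢; omega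
  · intro i hi; simp at hi ⊢; omega
  · intro i hi; simp
  · intro i hi; simp at hi ⊢; omega
  · intros; rfl

section
variable {p q : ℕ} [Fact p.Prime] [Fact q.Prime]

lemma sum_crt (hpq : p ≠ q) (n : ℕ) (k : ZMod p → ℤ) (k' : ZMod q → ℤ) :
    ∑ i ∈ Finset.Ico (0 : ℤ) ((n * (p * q) : ℕ) : ℤ), k (i : ZMod p) * k' (i : ZMod q) =
      n * ((∑ s, k s) * (∑ s, k' s)) := by
  have hcop : p.Coprime q := (Nat.coprime_primes Fact.out Fact.out).2 hpq
  have : NeZero (p * q) := ⟨mul_ne_zero (Fact.out : p.Prime).ne_zero (Fact.out : q.Prime).ne_zero⟩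
  rw [sum_Ico_int]
  have := sum_range_mul_zmod (p * q) n
    (fun z => k (ZMod.chineseRemainder hcop z).1 * k' (ZMod.chineseRemainder hcop z).2)
  simp only [map_natCast, Prod.fst_natCast, Prod.snd_natCast] at this
  simp only [Int.cast_natCast]
  rw [this]
  congr 1
  rw [← Equiv.sum_comp (ZMod.chineseRemainder hcop).symm.toEquiv]
  simp only [RingEquiv.toEquiv_eq_coe, EquivLike.coe_coe, RingEquiv.apply_symm_apply]
  rw [Fintype.sum_mul_sum, Fintype.sum_prod_type]

lemma card_congr_le (N m : ℕ) (hm : 0 < m) (c : ℤ) :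
    ((Finset.Ico (0 : ℤ) N).filter (fun y => (m : ℤ) ∣ c - y)).card ≤ N / m + 1 := by
  have : ((Finset.Ico (0 : ℤ) N).filter (fun y => (m : ℤ) ∣ c - y)).card ≤
      (Finset.range (N / m + 1)).card := by
    apply Finset.card_le_card_of_injOn (fun y : ℤ => (y / (m : ℤ)).toNat)
    · intro y hy
      simp only [Finset.coe_filter, Finset.mem_Ico, Set.mem_ofPred_eq] at hy
      simp only [Finset.coe_range, Set.mem_Iio]
      have h1 : y / (m : ℤ) ≤ (N : ℤ) / m := Int.ediv_le_ediv (by exact_mod_cast hm) (by omega)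
      have h2 : ((N / m : ℕ) : ℤ) = (N : ℤ) / m := by push_cast; rfl
      have h3 : (0 : ℤ) ≤ ((N / m : ℕ) : ℤ) := by positivity
      rw [h2] at h3
      have h4 : (y / (m : ℤ)).toNat ≤ N / m := by
        zify
        rw [Int.toNat_of_nonneg (Int.ediv_nonneg hy.1.1 (by positivity))]
        exact h1
      exact Nat.lt_succ_of_le h4
    · intro y hy y' hy' hyy
      simp only [Finset.coe_filter, Finset.mem_Ico, Set.mem_ofPred_eq] at hy hy'
      have hm' : (0 : ℤ) < m := by exact_mod_cast hm
      have a1 : 0 ≤ y / (m : ℤ) := Int.ediv_nonneg hy.1.1 hm'.le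
      have a2 : 0 ≤ y' / (m : ℤ) := Int.ediv_nonneg hy'.1.1 hm'.le
      have a3 : y / (m : ℤ) = y' / m := by simp only at hyy; omega
      have a4 : (m : ℤ) ∣ y - y' := by
        have := dvd_sub hy'.2 hy.2
        have e : c - y' - (c - y) = y - y' := by ring
        rwa [e] at this
      have a5 : y % m = y' % m := Int.emod_eq_emod_iff_emod_sub_eq_zero.2 (Int.emod_eq_zero_of_dvd a4)
      rw [← Int.mul_ediv_add_emod y m, ← Int.mul_ediv_add_emod y' m, a3, a5]
  simpa using this


/-- the product kernel -/
def FF (K : ZMod p × ZMod p → ℤ) (K' : ZMod q × ZMod q → ℤ) (x : ℤ × ℤ) : ℤ := K (red p x) * K' (red q x)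

lemma line1 (hpq : p ≠ q) (K : ZMod p × ZMod p → ℤ) (K' : ZMod q × ZMod q → ℤ) (n : ℕ) (c t : ℤ) :
    ∑ i ∈ Finset.Ico (0 : ℤ) ((n * (p * q) : ℕ) : ℤ), FF K K' (i - c, t) =
      n * ((∑ s, K (s, (t : ZMod p))) * (∑ s, K' (s, (t : ZMod q)))) := by
  have := sum_crt hpq n (fun s => K (s - (c : ZMod p), (t : ZMod p))) (fun s => K' (s - (c : ZMod q), (t : ZMod q)))
  have t1 : ∑ s, K (s - (c : ZMod p), (t : ZMod p)) = ∑ s, K (s, (t : ZMod p)) :=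
    Equiv.sum_comp (Equiv.subRight (c : ZMod p)) (fun s => K (s, (t : ZMod p)))
  have t2 : ∑ s, K' (s - (c : ZMod q), (t : ZMod q)) = ∑ s, K' (s, (t : ZMod q)) :=
    Equiv.sum_comp (Equiv.subRight (c : ZMod q)) (fun s => K' (s, (t : ZMod q)))
  rw [t1, t2] at this
  rw [← this]
  apply Finset.sum_congr rfl
  intro i _
  simp [FF, red]

lemma line2 (hpq : p ≠ q) (K : ZMod p × ZMod p → ℤ) (K' : ZMod q × ZMod q → ℤ) (n : ℕ) (c t : ℤ) :
    ∑ i ∈ Finset.Ico (0 : ℤ) ((n * (p * q) : ℕ) : ℤ), FF K K' (c - i, t) =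
      n * ((∑ s, K (s, (t : ZMod p))) * (∑ s, K' (s, (t : ZMod q)))) := by
  have := sum_crt hpq n (fun s => K ((c : ZMod p) - s, (t : ZMod p))) (fun s => K' ((c : ZMod q) - s, (t : ZMod q)))
  have t1 : ∑ s, K ((c : ZMod p) - s, (t : ZMod p)) = ∑ s, K (s, (t : ZMod p)) :=
    Equiv.sum_comp (Equiv.subLeft (c : ZMod p)) (fun s => K (s, (t : ZMod p)))
  have t2 : ∑ s, K' ((c : ZMod q) - s, (t : ZMod q)) = ∑ s, K' (s, (t : ZMod q)) :=
    Equiv.sum_comp (Equiv.subLeft (c : ZMod q)) (fun s => K' (s, (t : ZMod q)))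
  rw [t1, t2] at this
  rw [← this]
  apply Finset.sum_congr rfl
  intro i _
  simp [FF, red]

theorem offdiag (hpq : p ≠ q) (K : ZMod p × ZMod p → ℤ) (K' : ZMod q × ZMod q → ℤ) (M M' E E' : ℝ)
    (hM : ∀ h, ‖khat K h‖ ≤ M) (hM' : ∀ h, ‖khat K' h‖ ≤ M')
    (hE : ∀ t, ((|∑ s, K (s, t)| : ℤ) : ℝ) ≤ E) (hE' : ∀ t, ((|∑ s, K' (s, t)| : ℤ) : ℝ) ≤ E') (L1 L2 : ℕ) :
    ((|∑ x ∈ Finset.Ico (0 : ℤ) L1 ×ˢ Finset.Ico (0 : ℤ) L2,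
      ∑ y ∈ Finset.Ico (0 : ℤ) L1 ×ˢ Finset.Ico (0 : ℤ) L2, FF K K' (x - y)| : ℤ) : ℝ) ≤
      2 * (((L1 : ℝ) / (p * q)) * L1 * L2 ^ 2 * (E * E')) + M * M' * (L1 * L2 * (1 + L2 / (p * q))) := by
  have hp0 : 0 < p := (Fact.out : p.Prime).pos
  have hq0 : 0 < q := (Fact.out : q.Prime).pos
  have hE0 : 0 ≤ E := le_trans (by positivity) (hE 0)
  have hE0' : 0 ≤ E' := le_trans (by positivity) (hE' 0)
  have hM0 : 0 ≤ M := (norm_nonneg _).trans (hM 0)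
  have hM0' : 0 ≤ M' := (norm_nonneg _).trans (hM' 0)
  set n := L1 / (p * q) with hn
  have hnL : n * (p * q) ≤ L1 := Nat.div_mul_le_self _ _
  have hnL' : L1 < n * (p * q) + p * q := by
    have := Nat.lt_div_mul_add (a := L1) (b := p * q) (by positivity)
    exact this
  have hnr : (n : ℝ) ≤ (L1 : ℝ) / (p * q) := by
    have := Nat.cast_div_le (α := ℝ) (m := L1) (n := p * q)
    push_cast at this; exact this
  set I2 := Finset.Ico (0 : ℤ) L2 with hI2
  set A := Finset.Ico (0 : ℤ) L1 ×ˢ I2 with hA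
  set A1 := Finset.Ico (0 : ℤ) ((n * (p * q) : ℕ) : ℤ) ×ˢ I2 with hA1
  set A2 := Finset.Ico ((n * (p * q) : ℕ) : ℤ) L1 ×ˢ I2 with hA2
  have hsplit : ∀ f : ℤ × ℤ → ℤ, ∑ x ∈ A, f x = ∑ x ∈ A1, f x + ∑ x ∈ A2, f x := by
    intro f
    have hU : Finset.Ico (0 : ℤ) L1 = Finset.Ico (0 : ℤ) ((n * (p * q) : ℕ) : ℤ) ∪
        Finset.Ico ((n * (p * q) : ℕ) : ℤ) L1 :=
      (Finset.Ico_union_Ico_eq_Ico (by positivity) (by exact_mod_cast hnL)).symm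
    rw [hA, hA1, hA2, Finset.sum_product, Finset.sum_product, Finset.sum_product, hU,
      Finset.sum_union (Finset.Ico_disjoint_Ico_consecutive _ _ _)]
  have hcA : (A.card : ℝ) = L1 * L2 := by simp [hA, hI2]
  have hcA2 : (A2.card : ℝ) ≤ L1 * L2 := by
    rw [← hcA]
    have : A2 ⊆ A := by
      rw [hA, hA2]
      exact Finset.product_subset_product_left (Finset.Ico_subset_Ico_left (by positivity))
    exact_mod_cast Finset.card_le_card this
  have hnE : ∀ t : ℤ, (|((n : ℤ) * ((∑ s, K (s, (t : ZMod p))) * (∑ s, K' (s, (t : ZMod q)))) : ℤ)| : ℝ) ≤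
      (L1 : ℝ) / (p * q) * (E * E') := by
    intro t
    have a := hE t
    have b := hE' t
    push_cast at a b ⊢
    rw [abs_mul, abs_mul, Nat.abs_cast]
    gcongr
  have c1 : ∀ y : ℤ × ℤ, (|(∑ x ∈ A1, FF K K' (x - y) : ℤ)| : ℝ) ≤ L2 * ((L1 : ℝ) / (p * q) * (E * E')) := by
    intro y
    rw [hA1, Finset.sum_product_right]
    have : ∀ x2 ∈ I2, (|(∑ x1 ∈ Finset.Ico (0 : ℤ) ((n * (p * q) : ℕ) : ℤ), FF K K' ((x1, x2) - y) : ℤ)| : ℝ) ≤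
        (L1 : ℝ) / (p * q) * (E * E') := by
      intro x2 _
      have := line1 hpq K K' n y.1 (x2 - y.2)
      have e : ∀ x1, FF K K' ((x1, x2) - y) = FF K K' (x1 - y.1, x2 - y.2) := fun x1 => rfl
      simp only [e]
      rw [this]
      exact hnE _
    rw [Int.cast_sum]
    refine (Finset.abs_sum_le_sum_abs _ _).trans ((Finset.sum_le_sum this).trans ?_)
    simp [hI2]
  have c2 : ∀ x : ℤ × ℤ, (|(∑ y ∈ A1, FF K K' (x - y) : ℤ)| : ℝ) ≤ L2 * ((L1 : ℝ) / (p * q) * (E * E')) := by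
    intro x
    rw [hA1, Finset.sum_product_right]
    have : ∀ y2 ∈ I2, (|(∑ y1 ∈ Finset.Ico (0 : ℤ) ((n * (p * q) : ℕ) : ℤ), FF K K' (x - (y1, y2)) : ℤ)| : ℝ) ≤
        (L1 : ℝ) / (p * q) * (E * E') := by
      intro y2 _
      have := line2 hpq K K' n x.1 (x.2 - y2)
      have e : ∀ y1, FF K K' (x - (y1, y2)) = FF K K' (x.1 - y1, x.2 - y2) := fun x1 => rfl
      simp only [e]
      rw [this]
      exact hnE _
    rw [Int.cast_sum]
    refine (Finset.abs_sum_le_sum_abs _ _).trans ((Finset.sum_le_sum this).trans ?_)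
    simp [hI2]
  have d1 : (|(∑ x ∈ A1, ∑ y ∈ A, FF K K' (x - y) : ℤ)| : ℝ) ≤
      (L1 * L2) * (L2 * ((L1 : ℝ) / (p * q) * (E * E'))) := by
    rw [Finset.sum_comm, Int.cast_sum]
    refine (Finset.abs_sum_le_sum_abs _ _).trans ((Finset.sum_le_sum (fun y _ => c1 y)).trans ?_)
    rw [Finset.sum_const, nsmul_eq_mul, hcA]
  have d2 : (|(∑ x ∈ A2, ∑ y ∈ A1, FF K K' (x - y) : ℤ)| : ℝ) ≤
      (L1 * L2) * (L2 * ((L1 : ℝ) / (p * q) * (E * E'))) := by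
    rw [Int.cast_sum]
    refine (Finset.abs_sum_le_sum_abs _ _).trans ((Finset.sum_le_sum (fun y _ => c2 y)).trans ?_)
    rw [Finset.sum_const, nsmul_eq_mul]
    gcongr
  have d3 : (|(∑ x ∈ A2, ∑ y ∈ A2, FF K K' (x - y) : ℤ)| : ℝ) ≤ M * M' * (L1 * L2 * (1 + L2 / (p * q))) := by
    have h1 := bilinear_bound K K' M M' hM hM' A2
    have hcard : (((A2 ×ˢ A2).filter (fun z => red p z.1 = red p z.2 ∧ red q z.1 = red q z.2)).card : ℝ) ≤
        L1 * L2 * (1 + L2 / (p * q)) := by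
      have hsub : (A2 ×ˢ A2).filter (fun z => red p z.1 = red p z.2 ∧ red q z.1 = red q z.2) ⊆
          A2.biUnion (fun x => ((I2.filter (fun y => ((p * q : ℕ) : ℤ) ∣ x.2 - y)).image (fun y => (x, (x.1, y))))) := by
        rintro ⟨x, y⟩ hxy
        simp only [Finset.mem_filter, Finset.mem_product, red, Prod.mk.injEq] at hxy
        obtain ⟨⟨hx, hy⟩, ⟨ha, hb⟩, hc, hd⟩ := hxy
        have hcop : IsCoprime (p : ℤ) (q : ℤ) :=
          Nat.isCoprime_iff_coprime.2 ((Nat.coprime_primes Fact.out Fact.out).2 hpq)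
        have dv : ∀ a b : ℤ, (a : ZMod p) = b → (a : ZMod q) = b → ((p * q : ℕ) : ℤ) ∣ a - b := by
          intro a b h h'
          push_cast
          apply hcop.mul_dvd
          · rw [← ZMod.intCast_zmod_eq_zero_iff_dvd]; push_cast; rw [h]; simp
          · rw [← ZMod.intCast_zmod_eq_zero_iff_dvd]; push_cast; rw [h']; simp
        simp only [Finset.mem_biUnion, Finset.mem_image, Finset.mem_filter]
        have hx' := hx
        have hy' := hy
        simp only [hA2, Finset.mem_product, Finset.mem_Ico] at hx hy
        refine ⟨x, hx', y.2, ⟨hy.2, dv _ _ hb hd⟩, ?_⟩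
        have h1 : x.1 - y.1 = 0 := by
          apply Int.eq_zero_of_abs_lt_dvd (dv _ _ ha hc)
          rw [abs_lt]
          have : (L1 : ℤ) < ((n * (p * q) : ℕ) : ℤ) + ((p * q : ℕ) : ℤ) := by exact_mod_cast hnL'
          constructor <;> linarith [hx.1.1, hx.1.2, hy.1.1, hy.1.2]
        have : x.1 = y.1 := by omega
        ext <;> simp [this]
      have h2 := (Finset.card_le_card hsub).trans Finset.card_biUnion_le
      have h3 : ∀ x ∈ A2, ((I2.filter (fun y => ((p * q : ℕ) : ℤ) ∣ x.2 - y)).image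
          (fun y => (x, (x.1, y)))).card ≤ L2 / (p * q) + 1 := by
        intro x _
        exact Finset.card_image_le.trans (card_congr_le L2 (p * q) (by positivity) x.2)
      have h4 := h2.trans (Finset.sum_le_sum h3)
      rw [Finset.sum_const, smul_eq_mul] at h4
      have h5 : (((A2 ×ˢ A2).filter (fun z => red p z.1 = red p z.2 ∧ red q z.1 = red q z.2)).card : ℝ) ≤
        (A2.card : ℝ) * (((L2 / (p * q) : ℕ) : ℝ) + 1) := by exact_mod_cast h4
      refine h5.trans ?_
      have := Nat.cast_div_le (α := ℝ) (m := L2) (n := p * q)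
      push_cast at this
      rw [add_comm (1 : ℝ)]
      gcongr
    rw [Int.cast_abs] at h1
    exact h1.trans (by gcongr)
  have htot : ∑ x ∈ A, ∑ y ∈ A, FF K K' (x - y) = ∑ x ∈ A1, ∑ y ∈ A, FF K K' (x - y) +
      ∑ x ∈ A2, ∑ y ∈ A1, FF K K' (x - y) + ∑ x ∈ A2, ∑ y ∈ A2, FF K K' (x - y) := by
    rw [hsplit, add_assoc, ← Finset.sum_add_distrib]
    congr 1
    apply Finset.sum_congr rfl
    intro x _
    exact hsplit _
  rw [htot, Int.cast_abs]
  push_cast at d1 d2 d3 ⊢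
  refine (abs_add_three _ _ _).trans ?_
  linarith

end
end XXY

namespace XXY

open NumberTheorySymbols

lemma cub_cast (p : ℕ) (c1 c2 u1 u2 v1 v2 : ℤ) (x : ℤ × ℤ) :
    cub (c1 : ZMod p) c2 u1 u2 v1 v2 (red p x).1 (red p x).2 = ((cub c1 c2 u1 u2 v1 v2 x.1 x.2 : ℤ) : ZMod p) := by
  simp [cub, red]

lemma jac_eq (p : ℕ) [Fact p.Prime] (n : ℤ) : J(n | p) = qc p (n : ZMod p) := by
  rw [← jacobiSym.legendreSym.to_jacobiSym]; rfl

lemma jac_abs_le (p : ℕ) (hp : p.Prime) (n : ℤ) : |J(n | p)| ≤ 1 := by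
  have : Fact p.Prime := ⟨hp⟩
  rw [jac_eq]; exact qc_abs_le _

theorem offdiag_jac (p q : ℕ) (hp : p.Prime) (hq : q.Prime) (hpq : p ≠ q) (hp3 : 3 < p) (hq3 : 3 < q)
    (c1 c2 u1 u2 v1 v2 : ℤ)
    (hpg : ¬ (p : ℤ) ∣ c1 * c2 * (u1 * v2 - u2 * v1)) (hqg : ¬ (q : ℤ) ∣ c1 * c2 * (u1 * v2 - u2 * v1))
    (L1 L2 : ℕ) :
    ((|∑ x ∈ Finset.Ico (0 : ℤ) L1 ×ˢ Finset.Ico (0 : ℤ) L2,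
      ∑ y ∈ Finset.Ico (0 : ℤ) L1 ×ˢ Finset.Ico (0 : ℤ) L2,
        J(cub c1 c2 u1 u2 v1 v2 (x - y).1 (x - y).2 | p) * J(cub c1 c2 u1 u2 v1 v2 (x - y).1 (x - y).2 | q)| : ℤ) : ℝ)
      ≤ 400 * (L1 * L2) * (2 * (L1 * L2) / Real.sqrt (p * q) + p * q + L2) := by
  have : Fact p.Prime := ⟨hp⟩
  have : Fact q.Prime := ⟨hq⟩
  have gp : ∀ (p : ℕ) [Fact p.Prime], ¬ (p : ℤ) ∣ c1 * c2 * (u1 * v2 - u2 * v1) →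
      (c1 : ZMod p) ≠ 0 ∧ (c2 : ZMod p) ≠ 0 ∧ (u1 : ZMod p) * v2 - u2 * v1 ≠ 0 := by
    intro p _ h
    rw [← ZMod.intCast_zmod_eq_zero_iff_dvd] at h
    push_cast at h
    simp only [mul_eq_zero, not_or] at h
    exact ⟨h.1.1, h.1.2, h.2⟩
  obtain ⟨p1, p2, p3⟩ := gp p hpg
  obtain ⟨q1, q2, q3⟩ := gp q hqg
  have := offdiag hpq (fun z => qc p (cub (c1 : ZMod p) c2 u1 u2 v1 v2 z.1 z.2))
    (fun z => qc q (cub (c1 : ZMod q) c2 u1 u2 v1 v2 z.1 z.2)) (20 * p) (20 * q) (20 * Real.sqrt p) (20 * Real.sqrt q)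
    (khat_bound hp3 _ _ _ _ _ _ p1 p2 p3) (khat_bound hq3 _ _ _ _ _ _ q1 q2 q3)
    (cub_sum_line_bound hp3 _ _ _ _ _ _ p1 p2 p3) (cub_sum_line_bound hq3 _ _ _ _ _ _ q1 q2 q3) L1 L2
  simp only [FF, cub_cast, ← jac_eq] at this
  refine this.trans (le_of_eq ?_)
  have hp0 : (0 : ℝ) < p := by exact_mod_cast hp.pos
  have hq0 : (0 : ℝ) < q := by exact_mod_cast hq.pos
  have e : Real.sqrt (p * q) = Real.sqrt p * Real.sqrt q := Real.sqrt_mul hp0.le _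
  have sp : Real.sqrt p * Real.sqrt p = p := Real.mul_self_sqrt hp0.le
  have sq : Real.sqrt q * Real.sqrt q = q := Real.mul_self_sqrt hq0.le
  have sp0 : 0 < Real.sqrt p := Real.sqrt_pos.2 hp0
  have sq0 : 0 < Real.sqrt q := Real.sqrt_pos.2 hq0
  rw [e]
  generalize Real.sqrt p = a at *
  generalize Real.sqrt q = b at *
  rw [← sp, ← sq]
  field_simp
  ring

lemma fiber_count (S T : ℕ) (z : ℤ × ℤ) (h1 : |z.1| ≤ S) (h2 : |z.2| ≤ T) :
    S * T ≤ (((Finset.Ico (0 : ℤ) (2 * S : ℕ) ×ˢ Finset.Ico (0 : ℤ) (2 * T : ℕ)) ×ˢ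
      (Finset.Ico (0 : ℤ) (2 * S : ℕ) ×ˢ Finset.Ico (0 : ℤ) (2 * T : ℕ))).filter
      (fun w => w.1 - w.2 = z)).card := by
  have : S * T = (Finset.range S ×ˢ Finset.range T).card := by simp
  rw [this]
  apply Finset.card_le_card_of_injOn (fun i : ℕ × ℕ =>
    ((((i.1 : ℤ) + max z.1 0, (i.2 : ℤ) + max z.2 0) : ℤ × ℤ),
     (((i.1 : ℤ) + max (-z.1) 0, (i.2 : ℤ) + max (-z.2) 0) : ℤ × ℤ)))
  · rintro ⟨i, j⟩ hij
    simp only [Finset.coe_product, Finset.coe_range, Set.mem_prod, Set.mem_Iio] at hij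
    simp only [Finset.coe_filter, Finset.mem_product, Finset.mem_Ico, Set.mem_ofPred_eq, Prod.ext_iff,
      Prod.fst_sub, Prod.snd_sub]
    rw [abs_le] at h1 h2
    push_cast
    omega
  · rintro ⟨i, j⟩ _ ⟨i', j'⟩ _ h
    simp only [Prod.mk.injEq] at h ⊢
    omega

theorem square_sieve (c1 c2 u1 u2 v1 v2 : ℤ) (S T P0 P : ℕ) (hS : 0 < S) (hT : 0 < T) (hP0 : 0 < P0)
    (Q : Finset ℕ) (hQne : Q.Nonempty)
    (hQ : ∀ p ∈ Q, p.Prime ∧ 3 < p ∧ P0 ≤ p ∧ p ≤ P ∧ ¬ (p : ℤ) ∣ c1 * c2 * (u1 * v2 - u2 * v1))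
    (Z : Finset (ℤ × ℤ)) (hZ : ∀ z ∈ Z, |z.1| ≤ S ∧ |z.2| ≤ T ∧
      (Q.card : ℤ) ≤ 2 * ∑ p ∈ Q, J(cub c1 c2 u1 u2 v1 v2 z.1 z.2 | p)) :
    (Z.card : ℝ) ≤ 64 * (S * T) / Q.card + 6400 * (8 * (S * T) / P0 + P ^ 2 + 2 * T) := by
  set g : ℤ × ℤ → ℤ := fun z => cub c1 c2 u1 u2 v1 v2 z.1 z.2 with hg
  set A := Finset.Ico (0 : ℤ) (2 * S : ℕ) ×ˢ Finset.Ico (0 : ℤ) (2 * T : ℕ) with hA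
  set Φ : ℤ × ℤ → ℤ := fun z => (∑ p ∈ Q, J(g z | p)) ^ 2 with hΦ
  have hcA : (A.card : ℝ) = 4 * (S * T) := by
    rw [hA, Finset.card_product, Int.card_Ico, Int.card_Ico, sub_zero, sub_zero, Int.toNat_natCast, Int.toNat_natCast]
    push_cast; ring
  have hΦ0 : ∀ z, 0 ≤ Φ z := fun z => sq_nonneg _
  have hlow : (Z.card : ℤ) * (S * T) * (Q.card : ℤ) ^ 2 ≤ 4 * ∑ x ∈ A, ∑ y ∈ A, Φ (x - y) := by
    rw [← Finset.sum_product' A A (fun x y => Φ (x - y))]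
    have h1 : ∑ w ∈ (A ×ˢ A).filter (fun w => w.1 - w.2 ∈ Z), Φ (w.1 - w.2) ≤ ∑ w ∈ A ×ˢ A, Φ (w.1 - w.2) :=
      Finset.sum_le_sum_of_subset_of_nonneg (Finset.filter_subset _ _) (fun _ _ _ => hΦ0 _)
    have h2 : ∑ w ∈ (A ×ˢ A).filter (fun w => w.1 - w.2 ∈ Z), Φ (w.1 - w.2) =
        ∑ z ∈ Z, ∑ w ∈ ((A ×ˢ A).filter (fun w => w.1 - w.2 ∈ Z)).filter (fun w => w.1 - w.2 = z), Φ (w.1 - w.2) :=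
      (Finset.sum_fiberwise_of_maps_to (fun w hw => (Finset.mem_filter.1 hw).2) _).symm
    have h3 : ∀ z ∈ Z, (S * T : ℤ) * (Q.card : ℤ) ^ 2 ≤
        4 * ∑ w ∈ ((A ×ˢ A).filter (fun w => w.1 - w.2 ∈ Z)).filter (fun w => w.1 - w.2 = z), Φ (w.1 - w.2) := by
      intro z hz
      obtain ⟨ha, hb, hc⟩ := hZ z hz
      have e : ((A ×ˢ A).filter (fun w => w.1 - w.2 ∈ Z)).filter (fun w => w.1 - w.2 = z) =
          (A ×ˢ A).filter (fun w => w.1 - w.2 = z) := by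
        ext w; simp only [Finset.mem_filter]
        constructor
        · rintro ⟨⟨h, _⟩, h'⟩; exact ⟨h, h'⟩
        · rintro ⟨h, h'⟩; exact ⟨⟨h, h' ▸ hz⟩, h'⟩
      rw [e, Finset.sum_congr rfl (fun w hw => by rw [(Finset.mem_filter.1 hw).2] : ∀ w ∈ (A ×ˢ A).filter
        (fun w => w.1 - w.2 = z), Φ (w.1 - w.2) = Φ z), Finset.sum_const, nsmul_eq_mul]
      have hf := fiber_count S T z ha hb
      have hf' : (S * T : ℤ) ≤ (((A ×ˢ A).filter (fun w => w.1 - w.2 = z)).card : ℤ) := by exact_mod_cast hf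
      have hΦz : (Q.card : ℤ) ^ 2 ≤ 4 * Φ z := by
        simp only [hΦ]
        have : (0 : ℤ) ≤ Q.card := by positivity
        nlinarith
      calc (S * T : ℤ) * (Q.card : ℤ) ^ 2 ≤ (S * T : ℤ) * (4 * Φ z) := by gcongr
        _ = 4 * ((S * T : ℤ) * Φ z) := by ring
        _ ≤ _ := by have := hΦ0 z; gcongr
    calc (Z.card : ℤ) * (S * T) * (Q.card : ℤ) ^ 2 = ∑ z ∈ Z, (S * T : ℤ) * (Q.card : ℤ) ^ 2 := by
          rw [Finset.sum_const, nsmul_eq_mul]; ring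
      _ ≤ ∑ z ∈ Z, 4 * ∑ w ∈ ((A ×ˢ A).filter (fun w => w.1 - w.2 ∈ Z)).filter (fun w => w.1 - w.2 = z),
            Φ (w.1 - w.2) := Finset.sum_le_sum h3
      _ = 4 * ∑ w ∈ (A ×ˢ A).filter (fun w => w.1 - w.2 ∈ Z), Φ (w.1 - w.2) := by rw [h2, Finset.mul_sum]
      _ ≤ _ := by linarith
  have hexp : ∑ x ∈ A, ∑ y ∈ A, Φ (x - y) = ∑ p ∈ Q, ∑ q ∈ Q, ∑ x ∈ A, ∑ y ∈ A,
      J(g (x - y) | p) * J(g (x - y) | q) := by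
    simp only [hΦ, sq, Finset.sum_mul_sum]
    rw [Finset.sum_congr rfl (fun x _ => Finset.sum_comm), Finset.sum_comm]
    apply Finset.sum_congr rfl
    intro p _
    rw [Finset.sum_congr rfl (fun x _ => Finset.sum_comm), Finset.sum_comm]
  set OD : ℝ := 400 * (4 * (S * T)) * (8 * (S * T) / P0 + P ^ 2 + 2 * T) with hOD
  have hOD0 : 0 ≤ OD := by positivity
  have hP0r : (0 : ℝ) < P0 := by exact_mod_cast hP0
  have hbound : ∀ p ∈ Q, ∀ q ∈ Q, (((∑ x ∈ A, ∑ y ∈ A, J(g (x - y) | p) * J(g (x - y) | q) : ℤ)) : ℝ) ≤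
      (if p = q then (4 * (S * T) : ℝ) ^ 2 else 0) + OD := by
    intro p hp q hq
    obtain ⟨a1, a2, a3, a4, a5⟩ := hQ p hp
    obtain ⟨b1, b2, b3, b4, b5⟩ := hQ q hq
    split_ifs with h
    · have h1 : ∑ x ∈ A, ∑ y ∈ A, J(g (x - y) | p) * J(g (x - y) | q) ≤ ∑ x ∈ A, ∑ y ∈ A, (1 : ℤ) := by
        apply Finset.sum_le_sum; intro x _
        apply Finset.sum_le_sum; intro y _
        have h1 := jac_abs_le p a1 (g (x - y))
        have h2 := jac_abs_le q b1 (g (x - y))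
        refine (le_abs_self _).trans ?_
        rw [abs_mul]
        exact mul_le_one₀ h1 (abs_nonneg _) h2
      have h2 : (((∑ x ∈ A, ∑ y ∈ A, J(g (x - y) | p) * J(g (x - y) | q) : ℤ)) : ℝ) ≤ (A.card : ℝ) * A.card := by
        have : ∑ x ∈ A, ∑ y ∈ A, (1 : ℤ) = (A.card : ℤ) * A.card := by simp
        rw [this] at h1
        exact_mod_cast h1
      rw [hcA] at h2
      nlinarith
    · have := offdiag_jac p q a1 b1 h a2 b2 c1 c2 u1 u2 v1 v2 a5 b5 (2 * S) (2 * T)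
      rw [zero_add]
      refine le_trans ?_ (this.trans ?_)
      · exact_mod_cast le_abs_self _
      · have hp1 : (P0 : ℝ) ≤ p := by exact_mod_cast a3
        have hq1 : (P0 : ℝ) ≤ q := by exact_mod_cast b3
        have hp2 : (p : ℝ) ≤ P := by exact_mod_cast a4
        have hq2 : (q : ℝ) ≤ P := by exact_mod_cast b4
        have hsq : (P0 : ℝ) ≤ Real.sqrt (p * q) := by
          apply Real.le_sqrt_of_sq_le; rw [sq]; gcongr
        rw [hOD]
        push_cast
        have t1 : 2 * ((2 : ℝ) * S * (2 * T)) / Real.sqrt (p * q) ≤ 8 * (S * T) / P0 := by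
          have : 2 * ((2 : ℝ) * S * (2 * T)) = 8 * (S * T) := by ring
          rw [this]; gcongr
        have t2 : (p : ℝ) * q ≤ P ^ 2 := by rw [sq]; gcongr
        have t3 : (2 : ℝ) * S * (2 * T) = 4 * (S * T) := by ring
        rw [t3] at t1 ⊢
        gcongr
  have hup : ((∑ x ∈ A, ∑ y ∈ A, Φ (x - y) : ℤ) : ℝ) ≤ Q.card * (4 * (S * T)) ^ 2 + (Q.card : ℝ) ^ 2 * OD := by
    rw [hexp]
    rw [Int.cast_sum, Finset.sum_congr rfl (fun p _ => Int.cast_sum _ _)]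
    refine (Finset.sum_le_sum (fun p hp => Finset.sum_le_sum (fun q hq => hbound p hp q hq))).trans ?_
    simp only [Finset.sum_add_distrib, Finset.sum_const, nsmul_eq_mul, Finset.sum_ite_eq]
    rw [Finset.sum_congr rfl (fun x hx => if_pos hx), Finset.sum_const, nsmul_eq_mul]
    apply le_of_eq; ring
  have hlowr : (Z.card : ℝ) * (S * T) * (Q.card : ℝ) ^ 2 ≤ 4 * ((∑ x ∈ A, ∑ y ∈ A, Φ (x - y) : ℤ) : ℝ) := by
    exact_mod_cast hlow
  have hk : (0 : ℝ) < Q.card := by exact_mod_cast hQne.card_pos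
  have hS' : (0 : ℝ) < S := by exact_mod_cast hS
  have hT' : (0 : ℝ) < T := by exact_mod_cast hT
  have hfin := hlowr.trans (mul_le_mul_of_nonneg_left hup (by norm_num : (0 : ℝ) ≤ 4))
  have hpos : (0 : ℝ) < (S * T) * (Q.card : ℝ) ^ 2 := by positivity
  refine le_of_mul_le_mul_right ?_ hpos
  rw [← mul_assoc]
  refine hfin.trans (le_of_eq ?_)
  rw [hOD]
  field_simp
  ring

end XXY

namespace XXY

open NumberTheorySymbols

lemma omega_le (n : ℤ) (hn : n ≠ 0) (l : ℝ) (hl : |(n : ℝ)| ≤ Real.exp l) (R : Finset ℕ)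
    (hR : ∀ p ∈ R, p.Prime ∧ (p : ℤ) ∣ n) : (R.card : ℝ) ≤ 2 * l := by
  have h1 : ∏ p ∈ R, p ∣ n.natAbs := by
    apply Finset.prod_primes_dvd
    · intro p hp; exact (hR p hp).1.prime
    · intro p hp; exact Int.natCast_dvd.1 (hR p hp).2
  have h2 : 2 ^ R.card ≤ n.natAbs := by
    refine le_trans ?_ (Nat.le_of_dvd (Int.natAbs_pos.2 hn) h1)
    exact Finset.pow_card_le_prod _ _ _ (fun p hp => (hR p hp).1.two_le)
  have h3 : (2 : ℝ) ^ R.card ≤ Real.exp l := by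
    refine le_trans ?_ hl
    have : ((2 ^ R.card : ℕ) : ℝ) ≤ (n.natAbs : ℝ) := by exact_mod_cast h2
    rw [Nat.cast_natAbs, Int.cast_abs] at this
    exact_mod_cast this
  have h4 := Real.log_le_log (by positivity) h3
  rw [Real.log_exp, Real.log_pow] at h4
  have := Real.log_two_gt_d9
  have : (0 : ℝ) ≤ R.card := by positivity
  nlinarith

lemma jac_sq (m : ℤ) (p : ℕ) (hp : p.Prime) :
    J(m ^ 2 | p) = if (p : ℤ) ∣ m ^ 2 then 0 else 1 := by
  have : Fact p.Prime := ⟨hp⟩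
  rw [jac_eq]
  split_ifs with h
  · rw [← ZMod.intCast_zmod_eq_zero_iff_dvd] at h
    rw [h]; simp
  · rw [← ZMod.intCast_zmod_eq_zero_iff_dvd] at h
    push_cast at h ⊢
    rw [map_pow]
    exact quadraticChar_sq_one (fun h' => h (by rw [h']; simp))

lemma pi_lower (n : ℕ) (hn : 6 ≤ n) : (n : ℝ) / 3 ≤ Real.log n * Nat.primeCounting n := by
  have h := Chebyshev.pi_ge n
  have hl : 0 < Real.log n := Real.log_pos (by exact_mod_cast (by omega : 1 < n))
  rw [div_le_iff₀ hl] at h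
  have h2 := Real.log_two_gt_d9
  have h3 : Real.log ((n : ℝ) + 1) ≤ (n : ℝ) * 0.35 := by
    have hn' : (6 : ℝ) ≤ n := by exact_mod_cast hn
    have e7 : Real.log 8 ≤ 2.0795 := by
      have : (8 : ℝ) = 2 ^ 3 := by norm_num
      rw [this, Real.log_pow]
      have := Real.log_two_lt_d9
      push_cast; linarith
    have := Real.log_le_sub_one_of_pos (x := ((n : ℝ) + 1) / 8) (by positivity)
    rw [Real.log_div (by positivity) (by norm_num)] at this
    linarith
  have h4 : (n : ℝ) * 0.6931471803 ≤ n * Real.log 2 := by gcongr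
  have h5 : (0 : ℝ) ≤ n := by positivity
  rw [mul_comm]
  linarith

set_option maxHeartbeats 1000000 in
theorem sieve_count (c1 c2 u1 u2 v1 v2 : ℤ) (S T : ℕ) (hT : 0 < T) (hTS : T ≤ S)
    (l r : ℝ) (hl : 1 ≤ l) (hr : 0 ≤ r) (hr3 : r ^ 3 = S * T)
    (hSl : (S : ℝ) * T ≤ Real.exp l)
    (hD : c1 * c2 * (u1 * v2 - u2 * v1) ≠ 0)
    (hDl : |((c1 * c2 * (u1 * v2 - u2 * v1) : ℤ) : ℝ)| ≤ Real.exp l)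
    (Z : Finset (ℤ × ℤ)) (hZ : ∀ z ∈ Z, |z.1| ≤ S ∧ |z.2| ≤ T ∧ cub c1 c2 u1 u2 v1 v2 z.1 z.2 ≠ 0 ∧
      |((cub c1 c2 u1 u2 v1 v2 z.1 z.2 : ℤ) : ℝ)| ≤ Real.exp l ∧
      ∃ m : ℤ, cub c1 c2 u1 u2 v1 v2 z.1 z.2 = m ^ 2) :
    (Z.card : ℝ) ≤ 3 * 10 ^ 10 * l ^ 4 * r ^ 2 := by
  have hS : 0 < S := by omega
  have hST1 : (1 : ℝ) ≤ S * T := by exact_mod_cast Nat.mul_pos hS hT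
  have hr1 : 1 ≤ r := by
    by_contra h; push Not at h
    have : r ^ 3 < 1 := pow_lt_one₀ hr h (by norm_num)
    linarith
  have hrl : r ≤ Real.exp l := by
    refine le_trans ?_ hSl
    rw [← hr3]
    exact le_self_pow₀ hr1 (by norm_num)
  set P : ℕ := ⌈r⌉₊ + 1000 * ⌈l ^ 2⌉₊ with hP
  have hP1 : r ≤ P := by
    rw [hP]; push_cast
    have := Nat.le_ceil r
    have : (0 : ℝ) ≤ ⌈l ^ 2⌉₊ := by positivity
    linarith
  have hP2 : 1000 * l ^ 2 ≤ P := by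
    rw [hP]; push_cast
    have := Nat.le_ceil (l ^ 2)
    have : (0 : ℝ) ≤ ⌈r⌉₊ := by positivity
    linarith
  have hP3 : (P : ℝ) ≤ r + 1 + 1000 * (l ^ 2 + 1) := by
    rw [hP]; push_cast
    have := (Nat.ceil_lt_add_one hr).le
    have := (Nat.ceil_lt_add_one (by positivity : (0 : ℝ) ≤ l ^ 2)).le
    linarith
  have hl2 : 1 ≤ l ^ 2 := one_le_pow₀ hl
  have hP6 : 6 ≤ P := by
    have : (6 : ℝ) ≤ P := by linarith
    exact_mod_cast this
  have hlogP : Real.log P ≤ 10 * l := by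
    have hq := Real.quadratic_le_exp_of_nonneg (by linarith : (0 : ℝ) ≤ l)
    have : (P : ℝ) ≤ 4096 * Real.exp l := by nlinarith
    have h1 := Real.log_le_log (by positivity) this
    rw [Real.log_mul (by norm_num) (Real.exp_pos _).ne', Real.log_exp] at h1
    have : (4096 : ℝ) = 2 ^ 12 := by norm_num
    rw [this, Real.log_pow] at h1
    have := Real.log_two_lt_d9
    push_cast at h1
    linarith
  have hpi := pi_lower P hP6
  set π := Nat.primeCounting P with hπ
  have hpi2 : (P : ℝ) ≤ 30 * l * π := by
    have : Real.log P * (π : ℝ) ≤ 10 * l * π := by gcongr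
    linarith
  have hpi3 : 33 * l ≤ π := by
    have h1 : l * (1000 * l) ≤ l * (30 * π) := by nlinarith
    have := le_of_mul_le_mul_left h1 (by linarith)
    linarith
  have hpi4 : 33 ≤ π := by
    have : (33 : ℝ) ≤ π := by linarith
    exact_mod_cast this
  set P0 := π / 4 with hP0
  set Q0 := (Finset.range (P + 1)).filter Nat.Prime with hQ0
  have hQ0c : Q0.card = π := by
    rw [hQ0, hπ, Nat.primeCounting, Nat.primeCounting', Nat.count_eq_card_filter_range]
  set Q := Q0.filter (fun p => P0 < p ∧ ¬ (p : ℤ) ∣ c1 * c2 * (u1 * v2 - u2 * v1)) with hQ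
  have hQc : (π : ℝ) ≤ 2 * Q.card := by
    set R1 := Q0.filter (fun p : ℕ => (p : ℤ) ∣ c1 * c2 * (u1 * v2 - u2 * v1)) with hR1
    have h1 : (R1.card : ℝ) ≤ 2 * l := omega_le _ hD l hDl R1 (by
      intro p hp
      simp only [hR1, hQ0, Finset.mem_filter] at hp
      exact ⟨hp.1.2, hp.2⟩)
    have hsub : Q0 ⊆ Q ∪ R1 ∪ Finset.Icc 1 P0 := by
      intro p hp
      have hpp : p.Prime := by simp only [hQ0, Finset.mem_filter] at hp; exact hp.2
      have := hpp.one_le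
      simp only [Finset.mem_union, hQ, hR1, Finset.mem_filter, Finset.mem_Icc, hp, true_and]
      by_cases a : (p : ℤ) ∣ c1 * c2 * (u1 * v2 - u2 * v1)
      · simp [a]
      · simp only [a, not_false_eq_true, and_true]
        omega
    have h2 := Finset.card_le_card hsub
    have h3 := Finset.card_union_le (Q ∪ R1) (Finset.Icc 1 P0)
    have h4 := Finset.card_union_le Q R1
    rw [Nat.card_Icc] at h3
    have h5 : π ≤ Q.card + R1.card + P0 := by omega
    have h6 : (π : ℝ) ≤ Q.card + R1.card + P0 := by exact_mod_cast h5
    have h7 : (P0 : ℝ) ≤ π / 4 := by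
      rw [hP0]; have := Nat.cast_div_le (α := ℝ) (m := π) (n := 4); exact_mod_cast this
    linarith
  have hπ0 : (0 : ℝ) < π := by linarith
  have hQ1 : (0 : ℝ) < Q.card := by linarith
  have hQne : Q.Nonempty := by
    rw [← Finset.card_pos]; exact_mod_cast hQ1
  have hP0' : (π : ℝ) ≤ 8 * P0 := by
    have : π ≤ 8 * P0 := by omega
    exact_mod_cast this
  have main := square_sieve c1 c2 u1 u2 v1 v2 S T P0 P hS hT (by omega) Q hQne (by
    intro p hp
    simp only [hQ, hQ0, Finset.mem_filter, Finset.mem_range] at hp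
    refine ⟨hp.1.2, by omega, by omega, by omega, hp.2.2⟩) Z (by
    intro z hz
    obtain ⟨h1, h2, h3, h4, m, hm⟩ := hZ z hz
    refine ⟨h1, h2, ?_⟩
    rw [hm] at h3 h4 ⊢
    set R2 := Q.filter (fun p : ℕ => (p : ℤ) ∣ m ^ 2) with hR2
    have hQp : ∀ p ∈ Q, p.Prime := by
      intro p hp; simp only [hQ, hQ0, Finset.mem_filter] at hp; exact hp.1.2
    have hc : (R2.card : ℝ) ≤ 2 * l := omega_le _ h3 l h4 R2 (by
      intro p hp
      simp only [hR2, Finset.mem_filter] at hp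
      exact ⟨hQp p hp.1, hp.2⟩)
    have hsum : ∑ p ∈ Q, J(m ^ 2 | p) = (Q.card : ℤ) - R2.card := by
      rw [Finset.sum_congr rfl (fun p hp => jac_sq m p (hQp p hp))]
      have : ∀ p : ℕ, (if (p : ℤ) ∣ m ^ 2 then (0 : ℤ) else 1) = 1 - (if (p : ℤ) ∣ m ^ 2 then 1 else 0) := by
        intro p; split_ifs <;> simp
      simp only [this]
      rw [Finset.sum_sub_distrib]
      simp [hR2]
    rw [hsum]
    have : (2 : ℝ) * R2.card ≤ Q.card := by linarith
    have : 2 * R2.card ≤ Q.card := by exact_mod_cast this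
    omega)
  have hrpos : 0 < r := by linarith
  have hPpos : (0 : ℝ) < P := by linarith
  have hNpi : ((S : ℝ) * T) / π ≤ 30 * l * r ^ 2 := by
    rw [div_le_iff₀ hπ0, ← hr3]
    have : r ≤ 30 * l * π := hP1.trans hpi2
    have : r ^ 2 * r ≤ r ^ 2 * (30 * l * π) := by gcongr
    nlinarith
  have t1 : 64 * ((S : ℝ) * T) / Q.card ≤ 128 * (((S : ℝ) * T) / π) := by
    rw [← mul_div_assoc, div_le_div_iff₀ hQ1 hπ0]
    have : 0 ≤ (S : ℝ) * T := by positivity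
    nlinarith
  have hP0pos : (0 : ℝ) < P0 := by linarith
  have t2 : 8 * ((S : ℝ) * T) / P0 ≤ 64 * (((S : ℝ) * T) / π) := by
    rw [← mul_div_assoc, div_le_div_iff₀ hP0pos hπ0]
    have : 0 ≤ (S : ℝ) * T := by positivity
    nlinarith
  have hl4 : l ≤ l ^ 4 := le_self_pow₀ hl (by norm_num)
  have hl41 : 1 ≤ l ^ 4 := one_le_pow₀ hl
  have t3 : (P : ℝ) ^ 2 ≤ 2002 ^ 2 * (l ^ 4 * r ^ 2) := by
    have h1 : (P : ℝ) ≤ 2002 * (l ^ 2 * r) := by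
      have a1 : r ≤ l ^ 2 * r := le_mul_of_one_le_left hr hl2
      have a2 : l ^ 2 ≤ l ^ 2 * r := le_mul_of_one_le_right (by positivity) hr1
      linarith
    calc (P : ℝ) ^ 2 ≤ (2002 * (l ^ 2 * r)) ^ 2 := by gcongr
      _ = _ := by ring
  have t4 : (T : ℝ) ≤ r ^ 2 := by
    have a1 : (T : ℝ) ^ 2 ≤ r ^ 3 := by
      rw [hr3, sq]
      have : (T : ℝ) ≤ S := by exact_mod_cast hTS
      gcongr
    have a2 : r ^ 3 ≤ (r ^ 2) ^ 2 := by
      rw [← pow_mul]; exact pow_le_pow_right₀ hr1 (by norm_num)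
    exact le_of_sq_le_sq (a1.trans a2) (by positivity)
  have t5 : r ^ 2 ≤ l ^ 4 * r ^ 2 := le_mul_of_one_le_left (by positivity) hl41
  have t6 : l * r ^ 2 ≤ l ^ 4 * r ^ 2 := by gcongr
  have hfin : (Z.card : ℝ) ≤ 128 * (30 * l * r ^ 2) + 6400 * (64 * (30 * l * r ^ 2) +
      2002 ^ 2 * (l ^ 4 * r ^ 2) + 2 * r ^ 2) := by
    refine main.trans ?_
    have b1 := t1.trans (mul_le_mul_of_nonneg_left hNpi (by norm_num : (0 : ℝ) ≤ 128))
    have b2 := t2.trans (mul_le_mul_of_nonneg_left hNpi (by norm_num : (0 : ℝ) ≤ 64))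
    linarith
  have : 0 ≤ l ^ 4 * r ^ 2 := by positivity
  linarith

end XXY

namespace XXY

lemma divisor_bound (ε : ℝ) (hε : 0 < ε) : ∃ C : ℝ, 1 ≤ C ∧ ∀ n : ℕ, n ≠ 0 →
    (n.divisors.card : ℝ) ≤ C * (n : ℝ) ^ ε := by
  obtain ⟨K, hK⟩ := exists_nat_ge ((2 : ℝ) ^ (1 / ε))
  have hl2 : 0 < Real.log 2 := Real.log_pos (by norm_num)
  set C' : ℝ := 1 + 1 / (ε * Real.log 2) with hC'
  have hC1 : 1 ≤ C' := by
    rw [hC']; have : 0 ≤ 1 / (ε * Real.log 2) := by positivity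
    linarith
  have key : ∀ p e : ℕ, p.Prime → ((e : ℝ) + 1) ≤ (if p < K then C' else 1) * ((p : ℝ) ^ e) ^ ε := by
    intro p e hp
    have hp2 : (2 : ℝ) ≤ p := by exact_mod_cast hp.two_le
    split_ifs with h
    · have h1 : (1 : ℝ) + e * ε * Real.log 2 ≤ ((p : ℝ) ^ e) ^ ε := by
        calc (1 : ℝ) + e * ε * Real.log 2 ≤ Real.exp (e * ε * Real.log 2) := by
              rw [add_comm]; exact Real.add_one_le_exp _
          _ = ((2 : ℝ) ^ e) ^ ε := by
              rw [← Real.rpow_natCast, ← Real.rpow_mul (by norm_num), Real.rpow_def_of_pos (by norm_num)]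
              congr 1; ring
          _ ≤ _ := by gcongr
      have h2 : (e : ℝ) + 1 ≤ C' * (1 + e * ε * Real.log 2) := by
        have : C' * (1 + e * ε * Real.log 2) = 1 + e * (ε * Real.log 2) + 1 / (ε * Real.log 2) + e := by
          rw [hC']; field_simp; ring
        rw [this]
        have : 0 ≤ 1 / (ε * Real.log 2) := by positivity
        have : 0 ≤ e * (ε * Real.log 2) := by positivity
        linarith
      refine h2.trans ?_
      gcongr
    · rw [one_mul]
      push Not at h
      have hpK : (2 : ℝ) ^ (1 / ε) ≤ p := hK.trans (by exact_mod_cast h)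
      have h3 : (2 : ℝ) ≤ (p : ℝ) ^ ε := by
        calc (2 : ℝ) = ((2 : ℝ) ^ (1 / ε)) ^ ε := by
              rw [← Real.rpow_mul (by norm_num)]; field_simp; simp
          _ ≤ _ := by gcongr
      rw [← Real.rpow_natCast, ← Real.rpow_mul (by positivity), mul_comm, Real.rpow_mul (by positivity),
        Real.rpow_natCast]
      calc (e : ℝ) + 1 ≤ 2 ^ e := by exact_mod_cast Nat.lt_two_pow_self (n := e)
        _ ≤ _ := by gcongr
  refine ⟨C' ^ K, one_le_pow₀ hC1, ?_⟩
  intro n hn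
  rw [Nat.card_divisors hn]
  have hn' : (n : ℝ) ^ ε = ∏ p ∈ n.primeFactors, ((p : ℝ) ^ (n.factorization p)) ^ ε := by
    rw [Real.finsetProd_rpow _ _ (fun _ _ => by positivity)]
    congr 1
    have := Nat.prod_factorization_pow_eq_self hn
    conv_lhs => rw [← this]
    rw [Finsupp.prod]; push_cast; rfl
  rw [hn']
  push_cast
  calc ∏ p ∈ n.primeFactors, ((n.factorization p : ℝ) + 1)
      ≤ ∏ p ∈ n.primeFactors, (if p < K then C' else 1) * ((p : ℝ) ^ (n.factorization p)) ^ ε := by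
        apply Finset.prod_le_prod
        · intros; positivity
        · intro p hp; exact key p _ (Nat.prime_of_mem_primeFactors hp)
    _ = (∏ p ∈ n.primeFactors, if p < K then C' else 1) * _ := Finset.prod_mul_distrib
    _ ≤ _ := by
        apply mul_le_mul_of_nonneg_right _ (Finset.prod_nonneg (fun _ _ => by positivity))
        rw [Finset.prod_ite, Finset.prod_const, Finset.prod_const_one, mul_one]
        apply pow_le_pow_right₀ hC1
        calc _ ≤ (Finset.range K).card := Finset.card_le_card (fun p hp => by
              rw [Finset.mem_filter] at hp; exact Finset.mem_range.2 hp.2)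
          _ = K := Finset.card_range K

/-- number of `m`-th roots of unity modulo `n`. -/
noncomputable def rootsCard (m n : ℕ) : ℕ := Nat.card {t : ZMod n // t ^ m = 1}

lemma rootsCard_units (m n : ℕ) (hm : m ≠ 0) : rootsCard m n = Nat.card {t : (ZMod n)ˣ // t ^ m = 1} := by
  symm
  apply Nat.card_eq_of_bijective (fun t : {t : (ZMod n)ˣ // t ^ m = 1} =>
    (⟨(t.1 : ZMod n), by rw [← Units.val_pow_eq_pow_val, t.2]; rfl⟩ : {t : ZMod n // t ^ m = 1}))
  constructor
  · intro a b h
    simp only [Subtype.mk.injEq] at h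
    exact Subtype.ext (Units.ext h)
  · rintro ⟨t, ht⟩
    refine ⟨⟨Units.ofPowEqOne t m ht hm, Units.pow_ofPowEqOne ht hm⟩, ?_⟩
    simp

lemma rootsCard_mul (m a b : ℕ) (h : a.Coprime b) : rootsCard m (a * b) = rootsCard m a * rootsCard m b := by
  unfold rootsCard
  rw [← Nat.card_prod]
  let e := ZMod.chineseRemainder h
  apply Nat.card_eq_of_bijective (fun t : {t : ZMod (a * b) // t ^ m = 1} =>
    ((⟨(e t.1).1, by rw [← Prod.pow_fst, ← map_pow, t.2]; simp⟩,
      ⟨(e t.1).2, by rw [← Prod.pow_snd, ← map_pow, t.2]; simp⟩) :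
      {t : ZMod a // t ^ m = 1} × {t : ZMod b // t ^ m = 1}))
  constructor
  · intro x y hxy
    simp only [Prod.mk.injEq, Subtype.mk.injEq] at hxy
    exact Subtype.ext (e.injective (Prod.ext hxy.1 hxy.2))
  · rintro ⟨⟨x, hx⟩, ⟨y, hy⟩⟩
    refine ⟨⟨e.symm (x, y), ?_⟩, ?_⟩
    · rw [← map_pow, Prod.pow_mk, hx, hy]; exact map_one e.symm
    · simp

lemma rootsCard_le (m n : ℕ) (hm : m = 2 ∨ m = 3) (hn : n ≠ 0) (h16 : ¬ 16 ∣ n) :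
    rootsCard m n ≤ n.divisors.card ^ 2 := by
  induction n using Nat.recOnPosPrimePosCoprime with
  | zero => exact absurd rfl hn
  | one =>
    unfold rootsCard
    have : Nat.card {t : ZMod 1 // t ^ m = 1} ≤ Nat.card (ZMod 1) := Finite.card_subtype_le _
    simpa using this
  | prime_pow p e hp he =>
    have : Fact p.Prime := ⟨hp⟩
    have : NeZero (p ^ e) := ⟨hn⟩
    rw [rootsCard_units m _ (by omega), Nat.divisors_prime_pow hp, Finset.card_map, Finset.card_range]
    by_cases h2 : p = 2
    · subst h2
      have he3 : e ≤ 3 := by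
        by_contra h; apply h16
        exact pow_dvd_pow 2 (by omega : 4 ≤ e)
      have h3 : Nat.card {t : (ZMod (2 ^ e))ˣ // t ^ m = 1} ≤ Nat.card (ZMod (2 ^ e))ˣ :=
        Finite.card_subtype_le _
      rw [Nat.card_eq_fintype_card (α := (ZMod (2 ^ e))ˣ), ZMod.card_units_eq_totient,
        Nat.totient_prime_pow hp he] at h3
      refine h3.trans ?_
      interval_cases e <;> simp
    · have : IsCyclic (ZMod (p ^ e))ˣ := ZMod.isCyclic_units_of_prime_pow p hp h2 e
      have h := IsCyclic.card_pow_eq_one_le (α := (ZMod (p ^ e))ˣ) (n := m) (by omega)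
      rw [Nat.card_eq_fintype_card, Fintype.card_subtype]
      have : 4 ≤ (e + 1) ^ 2 := by nlinarith
      have h' : Finset.card {a : (ZMod (p ^ e))ˣ | a ^ m = 1} ≤ m := by convert h
      omega
  | coprime a b ha hb hab iha ihb =>
    rw [rootsCard_mul m a b hab, Nat.Coprime.card_divisors_mul hab, mul_pow]
    exact Nat.mul_le_mul (iha (by omega) (fun h => h16 (h.mul_right _)))
      (ihb (by omega) (fun h => h16 (h.mul_left _)))

lemma roots_count (m n : ℕ) (hn : n ≠ 0) (hm : m ≠ 0) (c : ZMod n) (hc : IsUnit c) (R : Finset (ZMod n))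
    (hR : ∀ t ∈ R, t ^ m = c) : R.card ≤ rootsCard m n := by
  have : NeZero n := ⟨hn⟩
  rcases R.eq_empty_or_nonempty with rfl | ⟨t0, ht0⟩
  · simp
  have hu : IsUnit t0 := by
    have := hR t0 ht0
    rw [← this] at hc
    exact (isUnit_pow_iff hm).1 hc
  obtain ⟨u, rfl⟩ := hu
  unfold rootsCard
  rw [Nat.card_eq_fintype_card, Fintype.card_subtype]
  apply Finset.card_le_card_of_injOn (fun t => t * (↑u⁻¹ : ZMod n))
  · intro t ht
    simp only [Finset.coe_filter, Finset.mem_univ, true_and, Set.mem_ofPred_eq]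
    rw [mul_pow, hR t ht, ← hR _ ht0, ← mul_pow]
    simp
  · intro a _ b _ h
    simpa using h

end XXY

namespace XXY

/-- weighted quadratic form -/
def qf (U V : ℕ) (u v : ℤ) : ℕ := (((V : ℤ) * u) ^ 2 + ((U : ℤ) * v) ^ 2).natAbs

lemma qf_cast (U V : ℕ) (u v : ℤ) : ((qf U V u v : ℕ) : ℤ) = ((V : ℤ) * u) ^ 2 + ((U : ℤ) * v) ^ 2 := by
  unfold qf
  rw [Int.natAbs_of_nonneg (by positivity)]

lemma gauss_reduce (D : ℕ) (ρ : ℤ) (U V : ℕ) : ∃ u1 v1 u2 v2 : ℤ,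
    |u1 * v2 - u2 * v1| = D ∧ (D : ℤ) ∣ u1 - ρ * v1 ∧ (D : ℤ) ∣ u2 - ρ * v2 ∧
    qf U V u1 v1 ≤ qf U V u2 v2 ∧
    2 * |(V : ℤ) ^ 2 * (u1 * u2) + (U : ℤ) ^ 2 * (v1 * v2)| ≤ qf U V u1 v1 := by
  classical
  let P : ℕ → Prop := fun N => ∃ u1 v1 u2 v2 : ℤ,
    |u1 * v2 - u2 * v1| = D ∧ (D : ℤ) ∣ u1 - ρ * v1 ∧ (D : ℤ) ∣ u2 - ρ * v2 ∧
    qf U V u1 v1 + qf U V u2 v2 = N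
  have hex : ∃ N, P N := ⟨_, (D : ℤ), 0, ρ, 1, by simp, by simp, by simp, rfl⟩
  have hmin : ∀ u1 v1 u2 v2 : ℤ, |u1 * v2 - u2 * v1| = D → (D : ℤ) ∣ u1 - ρ * v1 →
      (D : ℤ) ∣ u2 - ρ * v2 → Nat.find hex ≤ qf U V u1 v1 + qf U V u2 v2 := by
    intro u1 v1 u2 v2 h1 h2 h3
    exact Nat.find_min' hex ⟨u1, v1, u2, v2, h1, h2, h3, rfl⟩
  have main : ∃ u1 v1 u2 v2 : ℤ,
    |u1 * v2 - u2 * v1| = D ∧ (D : ℤ) ∣ u1 - ρ * v1 ∧ (D : ℤ) ∣ u2 - ρ * v2 ∧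
    qf U V u1 v1 + qf U V u2 v2 = Nat.find hex ∧ qf U V u1 v1 ≤ qf U V u2 v2 := by
    obtain ⟨u1, v1, u2, v2, h1, h2, h3, h4⟩ := Nat.find_spec hex
    rcases le_total (qf U V u1 v1) (qf U V u2 v2) with h | h
    · exact ⟨u1, v1, u2, v2, h1, h2, h3, h4, h⟩
    · refine ⟨u2, v2, u1, v1, ?_, h3, h2, ?_, h⟩
      · rw [← h1, ← abs_neg]; congr 1; ring
      · rw [← h4]; ring
  obtain ⟨u1, v1, u2, v2, h1, h2, h3, h4, h5⟩ := main
  refine ⟨u1, v1, u2, v2, h1, h2, h3, h5, ?_⟩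
  have e1 := hmin u1 v1 (u2 + u1) (v2 + v1) (by rw [← h1]; congr 1; ring) h2 (by
    have := dvd_add h2 h3
    have e : u2 + u1 - ρ * (v2 + v1) = u1 - ρ * v1 + (u2 - ρ * v2) := by ring
    rw [e]; exact this)
  have e2 := hmin u1 v1 (u2 - u1) (v2 - v1) (by rw [← h1]; congr 1; ring) h2 (by
    have := dvd_sub h3 h2
    have e : u2 - u1 - ρ * (v2 - v1) = u2 - ρ * v2 - (u1 - ρ * v1) := by ring
    rw [e]; exact this)
  rw [← h4] at e1 e2
  have e1' : qf U V u2 v2 ≤ qf U V (u2 + u1) (v2 + v1) := by omega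
  have e2' : qf U V u2 v2 ≤ qf U V (u2 - u1) (v2 - v1) := by omega
  have e1z : ((qf U V u2 v2 : ℕ) : ℤ) ≤ (qf U V (u2 + u1) (v2 + v1) : ℕ) := by exact_mod_cast e1'
  have e2z : ((qf U V u2 v2 : ℕ) : ℤ) ≤ (qf U V (u2 - u1) (v2 - v1) : ℕ) := by exact_mod_cast e2'
  rw [qf_cast, qf_cast] at e1z e2z
  rw [qf_cast]
  rcases abs_cases ((V : ℤ) ^ 2 * (u1 * u2) + (U : ℤ) ^ 2 * (v1 * v2)) with ⟨h, _⟩ | ⟨h, _⟩ <;>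
    rw [h] <;> nlinarith

/-- points in the box in terms of the reduced basis -/
lemma reduced_coords (U V : ℕ) (u1 v1 u2 v2 s t : ℤ)
    (h12 : qf U V u1 v1 ≤ qf U V u2 v2)
    (hb : 2 * |(V : ℤ) ^ 2 * (u1 * u2) + (U : ℤ) ^ 2 * (v1 * v2)| ≤ qf U V u1 v1)
    (hu : |u1 * s + u2 * t| ≤ U) (hv : |v1 * s + v2 * t| ≤ V) :
    s ^ 2 * qf U V u1 v1 ≤ 4 * (U * V) ^ 2 ∧ t ^ 2 * qf U V u2 v2 ≤ 4 * (U * V) ^ 2 := by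
  set q1 : ℤ := ((qf U V u1 v1 : ℕ) : ℤ) with hq1
  set q2 : ℤ := ((qf U V u2 v2 : ℕ) : ℤ) with hq2
  have h12' : q1 ≤ q2 := by rw [hq1, hq2]; exact_mod_cast h12
  have hq10 : 0 ≤ q1 := by rw [hq1]; positivity
  set b := (V : ℤ) ^ 2 * (u1 * u2) + (U : ℤ) ^ 2 * (v1 * v2) with hbd
  have hexp : s ^ 2 * q1 + 2 * (s * t) * b + t ^ 2 * q2 =
      ((V : ℤ) * (u1 * s + u2 * t)) ^ 2 + ((U : ℤ) * (v1 * s + v2 * t)) ^ 2 := by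
    rw [hq1, hq2, qf_cast, qf_cast, hbd]; ring
  have h1 : (u1 * s + u2 * t) ^ 2 ≤ (U : ℤ) ^ 2 := sq_le_sq' (abs_le.1 hu).1 (abs_le.1 hu).2
  have h2 : (v1 * s + v2 * t) ^ 2 ≤ (V : ℤ) ^ 2 := sq_le_sq' (abs_le.1 hv).1 (abs_le.1 hv).2
  have h3 : s ^ 2 * q1 + 2 * (s * t) * b + t ^ 2 * q2 ≤ 2 * (U * V) ^ 2 := by
    rw [hexp, mul_pow, mul_pow]
    have a1 : (V : ℤ) ^ 2 * (u1 * s + u2 * t) ^ 2 ≤ (V : ℤ) ^ 2 * (U : ℤ) ^ 2 := by gcongr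
    have a2 : (U : ℤ) ^ 2 * (v1 * s + v2 * t) ^ 2 ≤ (U : ℤ) ^ 2 * (V : ℤ) ^ 2 := by gcongr
    nlinarith
  have h4 : -(2 * (s * t) * b) ≤ |s * t| * q1 := by
    calc -(2 * (s * t) * b) ≤ |2 * (s * t) * b| := neg_le_abs _
      _ = |s * t| * (2 * |b|) := by rw [abs_mul, abs_mul]; simp; ring
      _ ≤ _ := by gcongr
  have h5 : 2 * |s * t| ≤ s ^ 2 + t ^ 2 := by
    rw [abs_mul]
    have := sq_nonneg (|s| - |t|)
    have := sq_abs s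
    have := sq_abs t
    nlinarith
  have h6 : 2 * |s * t| * q1 ≤ (s ^ 2 + t ^ 2) * q1 := by gcongr
  have h7 : t ^ 2 * q1 ≤ t ^ 2 * q2 := by gcongr
  have h8 : 0 ≤ s ^ 2 * q1 := by positivity
  have h9 : 0 ≤ t ^ 2 * q2 := by
    have : 0 ≤ q2 := hq10.trans h12'
    positivity
  constructor <;> nlinarith

lemma cub_eq (c1 c2 u1 u2 v1 v2 s t : ℤ) : cub c1 c2 u1 u2 v1 v2 s t =
    c1 * (u1 * s + u2 * t) ^ 3 + c2 * (v1 * s + v2 * t) ^ 3 := rfl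

set_option maxHeartbeats 1000000 in
theorem lattice_count (D : ℕ) (hD : 0 < D) (ρ : ℤ) (U V : ℕ) (hU : 0 < U) (hV : 0 < V)
    (c1 c2 : ℤ) (hc1 : c1 ≠ 0) (hc2 : c2 ≠ 0) (l : ℝ) (hl : 1 ≤ l)
    (hl1 : 4 * (U : ℝ) * V ≤ Real.exp l)
    (hl2 : |(c1 : ℝ)| * |(c2 : ℝ)| * D ≤ Real.exp l)
    (hl3 : |(c1 : ℝ)| * U ^ 3 + |(c2 : ℝ)| * V ^ 3 ≤ Real.exp l)
    (Z : Finset (ℤ × ℤ))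
    (hZ : ∀ z ∈ Z, (0 < z.1 ∧ z.1 ≤ U) ∧ (0 < z.2 ∧ z.2 ≤ V) ∧ IsCoprime z.1 z.2 ∧
      (D : ℤ) ∣ z.1 - ρ * z.2 ∧ c1 * z.1 ^ 3 + c2 * z.2 ^ 3 ≠ 0 ∧
      ∃ m : ℤ, c1 * z.1 ^ 3 + c2 * z.2 ^ 3 = m ^ 2) :
    (Z.card : ℝ) ≤ 10 ^ 11 * l ^ 4 * (1 + ((U : ℝ) * V / D) ^ ((2 : ℝ) / 3)) := by
  obtain ⟨u1, v1, u2, v2, hdet, hd1, hd2, h12, hb⟩ := gauss_reduce D ρ U V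
  set δ := u1 * v2 - u2 * v1 with hδ
  have hδ0 : δ ≠ 0 := by
    intro h; rw [h] at hdet; simp at hdet; omega
  -- coordinates
  have hco : ∀ z : ℤ × ℤ, (D : ℤ) ∣ z.1 - ρ * z.2 → ∃ w : ℤ × ℤ, z.1 = u1 * w.1 + u2 * w.2 ∧
      z.2 = v1 * w.1 + v2 * w.2 := by
    intro z hz
    have hDδ : δ ∣ (D : ℤ) := by rw [← hdet]; exact (dvd_abs δ δ).2 dvd_rfl
    have d1 : δ ∣ z.1 * v2 - u2 * z.2 := by
      refine hDδ.trans ?_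
      have : z.1 * v2 - u2 * z.2 = (z.1 - ρ * z.2) * v2 - (u2 - ρ * v2) * z.2 := by ring
      rw [this]
      exact dvd_sub (hz.mul_right _) (hd2.mul_right _)
    have d2 : δ ∣ u1 * z.2 - z.1 * v1 := by
      refine hDδ.trans ?_
      have : u1 * z.2 - z.1 * v1 = (u1 - ρ * v1) * z.2 - (z.1 - ρ * z.2) * v1 := by ring
      rw [this]
      exact dvd_sub (hd1.mul_right _) (hz.mul_right _)
    obtain ⟨s, hs⟩ := d1
    obtain ⟨t, ht⟩ := d2
    refine ⟨(s, t), ?_, ?_⟩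
    · apply mul_left_cancel₀ hδ0
      simp only
      calc δ * z.1 = u1 * (z.1 * v2 - u2 * z.2) + u2 * (u1 * z.2 - z.1 * v1) := by rw [hδ]; ring
        _ = _ := by rw [hs, ht]; ring
    · apply mul_left_cancel₀ hδ0
      simp only
      calc δ * z.2 = v1 * (z.1 * v2 - u2 * z.2) + v2 * (u1 * z.2 - z.1 * v1) := by rw [hδ]; ring
        _ = _ := by rw [hs, ht]; ring
  choose! w hw using hco
  set q1 := qf U V u1 v1 with hq1
  set q2 := qf U V u2 v2 with hq2
  have hq1pos : 0 < q1 := by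
    rcases Nat.eq_zero_or_pos q1 with h | h
    · exfalso
      have h' : ((q1 : ℕ) : ℤ) = 0 := by rw [h]; rfl
      rw [hq1, qf_cast] at h'
      have hVz : (V : ℤ) ≠ 0 := by exact_mod_cast hV.ne'
      have hUz : (U : ℤ) ≠ 0 := by exact_mod_cast hU.ne'
      have a1 : ((V : ℤ) * u1) = 0 := by nlinarith [sq_nonneg ((V : ℤ) * u1), sq_nonneg ((U : ℤ) * v1)]
      have a2 : ((U : ℤ) * v1) = 0 := by nlinarith [sq_nonneg ((V : ℤ) * u1), sq_nonneg ((U : ℤ) * v1)]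
      have b1 : u1 = 0 := (mul_eq_zero.1 a1).resolve_left hVz
      have b2 : v1 = 0 := (mul_eq_zero.1 a2).resolve_left hUz
      apply hδ0; rw [hδ, b1, b2]; ring
    · exact h
  have hq2pos : 0 < q2 := by omega
  have hqq : (U * V * D) ^ 2 ≤ q1 * q2 := by
    have : (((U * V * D) ^ 2 : ℕ) : ℤ) ≤ ((q1 * q2 : ℕ) : ℤ) := by
      push_cast
      rw [hq1, hq2, qf_cast, qf_cast, ← hdet, mul_pow, sq_abs, hδ]
      nlinarith [sq_nonneg ((V : ℤ) ^ 2 * (u1 * u2) + (U : ℤ) ^ 2 * (v1 * v2))]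
    exact_mod_cast this
  set S := Nat.sqrt (4 * (U * V) ^ 2 / q1) with hS
  set T := Nat.sqrt (4 * (U * V) ^ 2 / q2) with hT
  have hTS : T ≤ S := Nat.sqrt_le_sqrt (Nat.div_le_div_left h12 hq1pos)
  have hS2 : S ^ 2 * q1 ≤ 4 * (U * V) ^ 2 := by
    have := Nat.sqrt_le' (4 * (U * V) ^ 2 / q1)
    exact (Nat.le_div_iff_mul_le hq1pos).1 this
  have hT2 : T ^ 2 * q2 ≤ 4 * (U * V) ^ 2 := by
    have := Nat.sqrt_le' (4 * (U * V) ^ 2 / q2)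
    exact (Nat.le_div_iff_mul_le hq2pos).1 this
  have hSTD : S * T * D ≤ 4 * (U * V) := by
    have h1 : (S ^ 2 * q1) * (T ^ 2 * q2) ≤ (4 * (U * V) ^ 2) * (4 * (U * V) ^ 2) := Nat.mul_le_mul hS2 hT2
    have h2 : S ^ 2 * T ^ 2 * (U * V * D) ^ 2 ≤ S ^ 2 * T ^ 2 * (q1 * q2) := Nat.mul_le_mul_left _ hqq
    have h3 : (U * V) ^ 2 * (S * T * D) ^ 2 ≤ (U * V) ^ 2 * (4 * (U * V)) ^ 2 := by nlinarith
    have h4 := Nat.le_of_mul_le_mul_left h3 (by positivity)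
    exact (Nat.pow_le_pow_iff_left (by norm_num)).1 h4
  have hwb : ∀ z ∈ Z, |(w z).1| ≤ S ∧ |(w z).2| ≤ T := by
    intro z hz
    obtain ⟨⟨a1, a2⟩, ⟨a3, a4⟩, _, hdz, _⟩ := hZ z hz
    obtain ⟨e1, e2⟩ := hw z hdz
    have := reduced_coords U V u1 v1 u2 v2 (w z).1 (w z).2 h12 hb
      (by rw [← e1, abs_of_pos a1]; exact a2) (by rw [← e2, abs_of_pos a3]; exact a4)
    obtain ⟨r1, r2⟩ := this
    rw [← hq1] at r1
    rw [← hq2] at r2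
    have f : ∀ (s : ℤ) (q : ℕ), 0 < q → s ^ 2 * q ≤ 4 * ((U : ℤ) * V) ^ 2 →
        |s| ≤ (Nat.sqrt (4 * (U * V) ^ 2 / q) : ℕ) := by
      intro s q hq h
      rw [Int.abs_eq_natAbs]
      rw [← Int.natAbs_sq] at h
      have h' : s.natAbs ^ 2 * q ≤ 4 * (U * V) ^ 2 := by exact_mod_cast h
      have : s.natAbs ≤ Nat.sqrt (4 * (U * V) ^ 2 / q) := by
        rw [Nat.le_sqrt', Nat.le_div_iff_mul_le hq]
        exact h'
      exact_mod_cast this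
    exact ⟨f _ _ hq1pos r1, f _ _ hq2pos r2⟩
  have hinj : Set.InjOn w Z := by
    intro z hz z' hz' h
    have e := hw z (hZ z hz).2.2.2.1
    have e' := hw z' (hZ z' hz').2.2.2.1
    rw [h] at e
    exact Prod.ext (e.1.trans e'.1.symm) (e.2.trans e'.2.symm)
  have hl4 : 1 ≤ l ^ 4 := one_le_pow₀ hl
  have hrp : 0 ≤ ((U : ℝ) * V / D) ^ ((2 : ℝ) / 3) := by positivity
  rcases Nat.eq_zero_or_pos T with hT0 | hTpos
  · have hsub : Z.image w ⊆ {((1 : ℤ), (0 : ℤ)), (-1, 0)} := by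
      intro x hx
      obtain ⟨z, hz, rfl⟩ := Finset.mem_image.1 hx
      have h2 := (hwb z hz).2
      rw [hT0] at h2
      have h3 : (w z).2 = 0 := by simpa using h2
      obtain ⟨_, _, hcp, hdz, _⟩ := hZ z hz
      obtain ⟨e1, e2⟩ := hw z hdz
      rw [h3] at e1 e2
      have hun : IsUnit (w z).1 := by
        apply hcp.isUnit_of_dvd'
        · rw [e1]; simp
        · rw [e2]; simp
      rcases Int.isUnit_iff.1 hun with h | h
      · simp [Prod.ext_iff, h, h3]
      · simp [Prod.ext_iff, h, h3]
    have hc := Finset.card_le_card hsub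
    rw [Finset.card_image_of_injOn hinj] at hc
    have hc2 : Z.card ≤ 2 := hc.trans Finset.card_le_two
    have : (Z.card : ℝ) ≤ 2 := by exact_mod_cast hc2
    nlinarith [mul_nonneg (by linarith : 0 ≤ l ^ 4) hrp]
  · have hDR : (0 : ℝ) < D := by exact_mod_cast hD
    set r : ℝ := ((S : ℝ) * T) ^ ((1 : ℝ) / 3) with hr
    have hr3 : r ^ 3 = S * T := by
      rw [hr, ← Real.rpow_natCast, ← Real.rpow_mul (by positivity)]; norm_num
    have hST4 : (S : ℝ) * T ≤ 4 * (U * V / D) := by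
      rw [← mul_div_assoc, le_div_iff₀ hDR]; exact_mod_cast hSTD
    have hr2 : r ^ 2 ≤ 3 * ((U : ℝ) * V / D) ^ ((2 : ℝ) / 3) := by
      have : r ^ 2 = ((S : ℝ) * T) ^ ((2 : ℝ) / 3) := by
        rw [hr, ← Real.rpow_natCast, ← Real.rpow_mul (by positivity)]; norm_num
      rw [this]
      have h4 : (4 : ℝ) ^ ((2 : ℝ) / 3) ≤ 3 := by
        have : (4 : ℝ) ≤ 3 ^ ((3 : ℝ) / 2) := by
          have h16 : (3 : ℝ) ^ ((3 : ℝ) / 2) = Real.sqrt 27 := by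
            rw [Real.sqrt_eq_rpow, (by norm_num : (27 : ℝ) = 3 ^ (3 : ℝ)), ← Real.rpow_mul (by norm_num)]
            norm_num
          rw [h16]; exact Real.le_sqrt_of_sq_le (by norm_num)
        calc (4 : ℝ) ^ ((2 : ℝ) / 3) ≤ (3 ^ ((3 : ℝ) / 2)) ^ ((2 : ℝ) / 3) := by gcongr
          _ = 3 := by rw [← Real.rpow_mul (by norm_num)]; norm_num
      calc ((S : ℝ) * T) ^ ((2 : ℝ) / 3) ≤ (4 * (U * V / D)) ^ ((2 : ℝ) / 3) := by gcongr
        _ = 4 ^ ((2 : ℝ) / 3) * (U * V / D) ^ ((2 : ℝ) / 3) := Real.mul_rpow (by norm_num) (by positivity)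
        _ ≤ _ := by gcongr
    have hD1 : (1 : ℝ) ≤ D := by exact_mod_cast hD
    have main := sieve_count c1 c2 u1 u2 v1 v2 S T hTpos hTS l r hl (by positivity) hr3
      (by
        refine hST4.trans (le_trans ?_ hl1)
        have : (U : ℝ) * V / D ≤ U * V := div_le_self (by positivity) hD1
        linarith)
      (mul_ne_zero (mul_ne_zero hc1 hc2) hδ0)
      (by
        push_cast [abs_mul]
        have : |((u1 : ℝ) * v2 - u2 * v1)| = D := by
          have := congrArg (fun x : ℤ => (x : ℝ)) hdet
          simp only [hδ] at this
          push_cast at this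
          exact this
        rw [this]; exact hl2)
      (Z.image w) (by
        intro x hx
        obtain ⟨z, hz, rfl⟩ := Finset.mem_image.1 hx
        obtain ⟨⟨a1, a2⟩, ⟨a3, a4⟩, hcp, hdz, hne, m, hm⟩ := hZ z hz
        obtain ⟨e1, e2⟩ := hw z hdz
        have hcub : cub c1 c2 u1 u2 v1 v2 (w z).1 (w z).2 = c1 * z.1 ^ 3 + c2 * z.2 ^ 3 := by
          rw [cub_eq, ← e1, ← e2]
        rw [hcub]
        refine ⟨(hwb z hz).1, (hwb z hz).2, hne, ?_, m, hm⟩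
        refine le_trans ?_ hl3
        push_cast
        refine (abs_add_le _ _).trans ?_
        rw [abs_mul, abs_mul, abs_pow, abs_pow]
        have b1 : |(z.1 : ℝ)| ≤ U := by
          rw [abs_of_pos (by exact_mod_cast a1)]; exact_mod_cast a2
        have b2 : |(z.2 : ℝ)| ≤ V := by
          rw [abs_of_pos (by exact_mod_cast a3)]; exact_mod_cast a4
        gcongr)
    rw [Finset.card_image_of_injOn hinj] at main
    calc (Z.card : ℝ) ≤ 3 * 10 ^ 10 * l ^ 4 * r ^ 2 := main
      _ ≤ 3 * 10 ^ 10 * l ^ 4 * (3 * ((U : ℝ) * V / D) ^ ((2 : ℝ) / 3)) := by gcongr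
      _ ≤ _ := by nlinarith [mul_nonneg (by linarith : 0 ≤ l ^ 4) hrp]

end XXY

namespace XXY

structure Good (a : Fin 3 → ℤ) (X Y : Fin 3 → ℝ) (p : (Fin 3 → ℤ) × (Fin 3 → ℤ)) : Prop where
  xpos : ∀ i, 0 < p.1 i
  ypos : ∀ i, 0 < p.2 i
  xb : ∀ i, X i / 2 < (p.1 i : ℝ) ∧ (p.1 i : ℝ) ≤ X i
  yb : ∀ i, Y i / 2 < (p.2 i : ℝ) ∧ (p.2 i : ℝ) ≤ Y i
  eq : ∀ i j k : Fin 3, i ≠ j → i ≠ k → j ≠ k →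
    a i * p.1 i ^ 2 * p.2 i ^ 3 + a j * p.1 j ^ 2 * p.2 j ^ 3 + a k * p.1 k ^ 2 * p.2 k ^ 3 = 0
  cop : ∀ i j, i ≠ j → IsCoprime (p.1 i * p.2 i) (p.1 j * p.2 j)
  copa : ∀ i j, IsCoprime (a i) (p.1 j * p.2 j)
  sqf : ∀ i, Squarefree (a i * p.2 i)

lemma third (i j : Fin 3) (h : i ≠ j) : ∃ k, i ≠ k ∧ j ≠ k := by
  revert i j; decide

lemma fin3_cover (i j k : Fin 3) (h1 : i ≠ j) (h2 : i ≠ k) (h3 : j ≠ k) (P : Fin 3 → Prop)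
    (hi : P i) (hj : P j) (hk : P k) : ∀ m, P m := by
  intro m
  have key : ∀ i j k m : Fin 3, i ≠ j → i ≠ k → j ≠ k → m = i ∨ m = j ∨ m = k := by decide
  have := key i j k m h1 h2 h3
  rcases this with rfl | rfl | rfl <;> assumption

lemma good_of_mem (a : Fin 3 → ℤ) (X Y : Fin 3 → ℝ) (p : (Fin 3 → ℤ) × (Fin 3 → ℤ))
    (hp : p ∈ S0 a X Y) : Good a X Y p := by
  obtain ⟨h1, h2, h3, h4, h5, h6, h7, h8⟩ := hp
  have heq : ∀ i j k : Fin 3, i ≠ j → i ≠ k → j ≠ k →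
    a i * p.1 i ^ 2 * p.2 i ^ 3 + a j * p.1 j ^ 2 * p.2 j ^ 3 + a k * p.1 k ^ 2 * p.2 k ^ 3 = 0 := by
    intro i j k hij hik hjk
    fin_cases i <;> fin_cases j <;> fin_cases k <;> simp_all <;> linarith
  have h7' : IsCoprime (a 0 * a 1 * a 2) (p.1 0 * p.1 1 * p.1 2 * p.2 0 * p.2 1 * p.2 2) :=
    Int.isCoprime_iff_gcd_eq_one.2 h7
  have hcopa : ∀ i j, IsCoprime (a i) (p.1 j * p.2 j) := by
    intro i j
    have d1 : a i ∣ a 0 * a 1 * a 2 := by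
      fin_cases i
      · exact (Dvd.intro _ rfl : a 0 ∣ a 0 * a 1).mul_right _
      · exact (Dvd.intro_left _ rfl : a 1 ∣ a 0 * a 1).mul_right _
      · exact Dvd.intro_left _ rfl
    have d2 : p.1 j * p.2 j ∣ p.1 0 * p.1 1 * p.1 2 * p.2 0 * p.2 1 * p.2 2 := by
      fin_cases j
      · exact ⟨p.1 1 * p.1 2 * p.2 1 * p.2 2, by simp; ring⟩
      · exact ⟨p.1 0 * p.1 2 * p.2 0 * p.2 2, by simp; ring⟩
      · exact ⟨p.1 0 * p.1 1 * p.2 0 * p.2 1, by simp; ring⟩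
    exact (h7'.of_isCoprime_of_dvd_left d1).of_isCoprime_of_dvd_right d2
  have hall : ∀ q : ℤ, Prime q → ¬ ∀ m, q ∣ p.1 m * p.2 m := by
    intro q hq h
    have e1 : q ∣ (Int.gcd (p.1 1 * p.2 1) (p.1 2 * p.2 2) : ℤ) := Int.dvd_coe_gcd (h 1) (h 2)
    have e2 := Int.dvd_coe_gcd (h 0) e1
    rw [h6] at e2
    exact hq.not_isUnit (isUnit_of_dvd_one (by exact_mod_cast e2))
  refine ⟨h1, h2, h3, h4, heq, ?_, hcopa, h8⟩
  intro i j hij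
  obtain ⟨k, hik, hjk⟩ := third i j hij
  apply isCoprime_of_prime_dvd
  · rintro ⟨h, _⟩
    exact (mul_pos (h1 i) (h2 i)).ne' h
  · intro q hq hqi hqj
    apply hall q hq
    refine fin3_cover i j k hij hik hjk (fun m => q ∣ p.1 m * p.2 m) hqi hqj ?_
    have e := heq i j k hij hik hjk
    have d : q ∣ a k * (p.1 k ^ 2 * p.2 k ^ 3) := by
      have : a k * (p.1 k ^ 2 * p.2 k ^ 3) = (p.1 i * p.2 i) * (-(a i * p.1 i * p.2 i ^ 2))
          + (p.1 j * p.2 j) * (-(a j * p.1 j * p.2 j ^ 2)) := by linear_combination e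
      rw [this]
      exact dvd_add (hqi.mul_right _) (hqj.mul_right _)
    rcases hq.dvd_or_dvd d with h | h
    · exact absurd ((hcopa k i).isUnit_of_dvd' h hqi) hq.not_isUnit
    · rcases hq.dvd_or_dvd h with h | h
      · exact (hq.dvd_of_dvd_pow h).mul_right _
      · exact (hq.dvd_of_dvd_pow h).mul_left _

lemma not_16_dvd (a y : ℤ) (h : Squarefree (a * y)) : ¬ 16 ∣ a * y ^ 3 := by
  intro hd
  have h4 : ¬ (4 : ℤ) ∣ a * y := by
    intro h'
    have := h 2 (by simpa using h')
    rw [Int.isUnit_iff] at this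
    omega
  rcases Int.even_or_odd y with hy | hy
  · obtain ⟨m, hm⟩ := hy.two_dvd
    subst hm
    have h2 : (2 : ℤ) ∣ a * m ^ 3 := by
      have : a * (2 * m) ^ 3 = 8 * (a * m ^ 3) := by ring
      rw [this, (by norm_num : (16 : ℤ) = 8 * 2)] at hd
      exact (mul_dvd_mul_iff_left (by norm_num)).1 hd
    apply h4
    rw [(by ring : a * (2 * m) = 2 * (a * m)), (by norm_num : (4 : ℤ) = 2 * 2)]
    apply mul_dvd_mul_left
    rcases Int.prime_two.dvd_or_dvd h2 with h | h
    · exact h.mul_right _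
    · exact (Int.prime_two.dvd_of_dvd_pow h).mul_left _
  · have hc : IsCoprime (16 : ℤ) (y ^ 3) := by
      have : IsCoprime (2 : ℤ) y := Int.isCoprime_two_left.2 hy
      have := (this.pow_left (m := 4)).pow_right (n := 3)
      simpa using this
    have := hc.dvd_of_dvd_mul_right hd
    exact h4 ((dvd_trans (by norm_num) this).mul_right _)

lemma card_le_real {α β : Type*} [DecidableEq β] (s : Finset α) (f : α → β) (M : ℝ) (t : Finset β)
    (hf : ∀ x ∈ s, f x ∈ t)
    (h : ∀ b ∈ t, ((s.filter (fun x => f x = b)).card : ℝ) ≤ M) : (s.card : ℝ) ≤ t.card * M := by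
  rw [Finset.card_eq_sum_card_fiberwise (f := f) (t := t) (fun x hx => hf x hx)]
  push_cast
  refine (Finset.sum_le_sum h).trans ?_
  simp

end XXY

namespace XXY

set_option maxHeartbeats 1000000 in
/-- Cubic bound for one fibre. -/
lemma fiberB (a : Fin 3 → ℤ) (X Y : Fin 3 → ℝ) (L : ℝ) (hL : 64 ≤ L)
    (ha : ∀ i, a i ≠ 0) (hac : ∀ i j, i ≠ j → IsCoprime (a i) (a j))
    (hX : ∀ i, 1 ≤ X i) (hY : ∀ i, 1 ≤ Y i)
    (hb : ∀ i, |(a i : ℝ)| * X i ^ 2 * Y i ^ 3 ≤ L)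
    (i j k : Fin 3) (hij : i ≠ j) (hik : i ≠ k) (hjk : j ≠ k)
    (ξ η κ : ℤ) (M : ℝ)
    (hM : ∀ n : ℕ, n ≠ 0 → (n : ℝ) ≤ L → ¬ 16 ∣ n → (rootsCard 3 n : ℝ) ≤ M)
    (F : Finset ((Fin 3 → ℤ) × (Fin 3 → ℤ)))
    (hF : ∀ p ∈ F, Good a X Y p ∧ p.1 i = ξ ∧ p.1 j = η ∧ p.2 k = κ) :
    (F.card : ℝ) ≤ M * (10 ^ 11 * (6 * Real.log L) ^ 4 *
      (1 + 4 * (Y i * Y j / Y k ^ 3) ^ ((2 : ℝ) / 3))) := by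
  have hYp : ∀ i, 0 < Y i := fun i => by linarith [hY i]
  have hlog : 1 ≤ Real.log L := by
    rw [Real.le_log_iff_exp_le (by linarith)]
    linarith [Real.exp_one_lt_d9]
  have hM0 : 0 ≤ M := le_trans (by positivity) (hM 1 one_ne_zero (by push_cast; linarith) (by norm_num))
  rcases F.eq_empty_or_nonempty with rfl | ⟨p0, hp0⟩
  · have := hYp i; have := hYp j; have := hYp k
    simp; positivity
  obtain ⟨g0, e1, e2, e3⟩ := hF p0 hp0
  have hκ : 0 < κ := by rw [← e3]; exact g0.ypos k
  have hξ : 0 < ξ := by rw [← e1]; exact g0.xpos i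
  have hη : 0 < η := by rw [← e2]; exact g0.xpos j
  set D : ℕ := (a k * κ ^ 3).natAbs with hDdef
  have hDz : a k * κ ^ 3 ≠ 0 := mul_ne_zero (ha k) (pow_ne_zero _ hκ.ne')
  have hD0 : D ≠ 0 := Int.natAbs_ne_zero.2 hDz
  have : NeZero D := ⟨hD0⟩
  have hDR : (D : ℝ) = |(a k : ℝ)| * (κ : ℝ) ^ 3 := by
    rw [hDdef, Nat.cast_natAbs]
    push_cast [abs_mul]
    have hk0 : (0 : ℝ) < κ := by exact_mod_cast hκ
    rw [abs_of_pos (by positivity : (0 : ℝ) < (κ : ℝ) ^ 3)]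
  have hak1 : ∀ i, (1 : ℝ) ≤ |(a i : ℝ)| := by
    intro i
    have := Int.one_le_abs (ha i)
    exact_mod_cast this
  -- bounds
  have hX2 : ∀ i, 1 ≤ X i ^ 2 := fun i => one_le_pow₀ (hX i)
  have hY3 : ∀ i, 1 ≤ Y i ^ 3 := fun i => one_le_pow₀ (hY i)
  have hκY : (κ : ℝ) ≤ Y k := by rw [← e3]; exact (g0.yb k).2
  have hκY' : Y k / 2 < (κ : ℝ) := by rw [← e3]; exact (g0.yb k).1
  have hξX : (ξ : ℝ) ≤ X i := by rw [← e1]; exact (g0.xb i).2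
  have hηX : (η : ℝ) ≤ X j := by rw [← e2]; exact (g0.xb j).2
  have hκR : (1 : ℝ) ≤ κ := by exact_mod_cast hκ
  have hξR : (1 : ℝ) ≤ ξ := by exact_mod_cast hξ
  have hηR : (1 : ℝ) ≤ η := by exact_mod_cast hη
  have haY : ∀ i, |(a i : ℝ)| * Y i ^ 3 ≤ L := fun i => by
    refine le_trans ?_ (hb i)
    rw [mul_assoc, mul_comm (X i ^ 2), ← mul_assoc]
    exact le_mul_of_one_le_right (mul_nonneg (by positivity) (by linarith [hY3 i])) (hX2 i)
  have haX : ∀ i, |(a i : ℝ)| * X i ^ 2 ≤ L := fun i => by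
    refine le_trans ?_ (hb i)
    exact le_mul_of_one_le_right (mul_nonneg (by positivity) (by linarith [hX2 i])) (hY3 i)
  have hYL : ∀ i, Y i ≤ L := fun i => by
    have h1 : Y i ≤ Y i ^ 3 := le_self_pow₀ (hY i) (by norm_num)
    have h2 : Y i ^ 3 ≤ |(a i : ℝ)| * Y i ^ 3 := le_mul_of_one_le_left (by linarith [hY3 i]) (hak1 i)
    linarith [haY i]
  have hDL : (D : ℝ) ≤ L := by
    rw [hDR]; refine le_trans ?_ (haY k); gcongr
  have hDlow : Y k ^ 3 / 8 ≤ D := by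
    rw [hDR]
    have h1 : (Y k / 2) ^ 3 ≤ (κ : ℝ) ^ 3 := by
      have := hYp k
      gcongr
    have h2 : (κ : ℝ) ^ 3 ≤ |(a k : ℝ)| * κ ^ 3 := le_mul_of_one_le_left (by positivity) (hak1 k)
    nlinarith
  have hroots := hM D hD0 hDL (by
    intro h
    apply not_16_dvd (a k) κ (by rw [← e3]; exact g0.sqf k)
    have := Int.natCast_dvd.2 h
    exact_mod_cast this)
  -- classes
  set α : ℤ := a i * ξ ^ 2 with hα
  set β : ℤ := a j * η ^ 2 with hβ
  have hunit : ∀ z : ℤ, IsCoprime z (a k) → IsCoprime z κ → IsUnit ((z : ℤ) : ZMod D) := by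
    intro z h1 h2
    rw [ZMod.coe_int_isUnit_iff_isCoprime]
    rw [hDdef, Int.isCoprime_iff_gcd_eq_one]
    have h3 : IsCoprime z (a k * κ ^ 3) := h1.mul_right h2.pow_right
    have h4 := (Int.isCoprime_iff_gcd_eq_one.1 h3)
    rw [Int.gcd_comm] at h4
    unfold Int.gcd at h4 ⊢
    rw [Int.natAbs_natCast]
    exact h4
  have hcopxy : ∀ p ∈ F, ∀ m, m ≠ k → IsCoprime (p.1 m) (a k) ∧ IsCoprime (p.1 m) κ ∧
      IsCoprime (p.2 m) (a k) ∧ IsCoprime (p.2 m) κ := by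
    intro p hp m hm
    obtain ⟨g, _, _, f3⟩ := hF p hp
    have c1 := (g.copa k m).symm
    have c2 := (g.cop m k hm).of_mul_right_right
    rw [f3] at c2
    exact ⟨c1.of_mul_left_left, c2.of_mul_left_left, c1.of_mul_left_right, c2.of_mul_left_right⟩
  have hαu : IsUnit (α : ZMod D) := by
    have h := hcopxy p0 hp0 i hik
    rw [e1] at h
    have haκ := (g0.copa i k).of_mul_right_right
    rw [e3] at haκ
    exact hunit _ ((hac i k hik).mul_left h.1.pow_left) (haκ.mul_left h.2.1.pow_left)
  have hβu : IsUnit (β : ZMod D) := by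
    have h := hcopxy p0 hp0 j hjk
    rw [e2] at h
    have haκ := (g0.copa j k).of_mul_right_right
    rw [e3] at haκ
    exact hunit _ ((hac j k hjk).mul_left h.1.pow_left) (haκ.mul_left h.2.1.pow_left)
  obtain ⟨αu, hαu⟩ := hαu
  obtain ⟨βu, hβu⟩ := hβu
  have heq : ∀ p ∈ F, α * p.2 i ^ 3 + β * p.2 j ^ 3 = -(a k * κ ^ 3) * p.1 k ^ 2 := by
    intro p hp
    obtain ⟨g, f1, f2, f3⟩ := hF p hp
    have := g.eq i j k hij hik hjk
    rw [f1, f2, f3] at this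
    rw [hα, hβ]; linear_combination this
  have hD00 : ((a k * κ ^ 3 : ℤ) : ZMod D) = 0 := by
    rw [ZMod.intCast_zmod_eq_zero_iff_dvd, hDdef]
    exact Int.natAbs_dvd.2 dvd_rfl
  let cl : ((Fin 3 → ℤ) × (Fin 3 → ℤ)) → ZMod D := fun p => (p.2 i : ZMod D) * (p.2 j : ZMod D)⁻¹
  have hvu : ∀ p ∈ F, IsUnit ((p.2 j : ℤ) : ZMod D) := by
    intro p hp
    obtain ⟨_, _, h3, h4⟩ := hcopxy p hp j hjk
    exact hunit _ h3 h4
  have hcl : ∀ p ∈ F, cl p ^ 3 = ((-(βu * αu⁻¹) : (ZMod D)ˣ) : ZMod D) := by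
    intro p hp
    obtain ⟨vu, hvu⟩ := hvu p hp
    have h := congrArg (fun z : ℤ => (z : ZMod D)) (heq p hp)
    simp only [Int.cast_add, Int.cast_mul, Int.cast_neg, Int.cast_pow] at h
    simp only [Int.cast_mul, Int.cast_pow] at hD00
    rw [hD00, ← hαu, ← hβu, ← hvu] at h
    simp only [cl]
    rw [← hvu, ZMod.inv_coe_unit]
    have hv1 : (vu : ZMod D) * ((vu⁻¹ : (ZMod D)ˣ) : ZMod D) = 1 := vu.mul_inv
    have ha1 : (αu : ZMod D) * ((αu⁻¹ : (ZMod D)ˣ) : ZMod D) = 1 := αu.mul_inv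
    push_cast
    set w := ((vu⁻¹ : (ZMod D)ˣ) : ZMod D)
    set b := ((αu⁻¹ : (ZMod D)ˣ) : ZMod D)
    have hv3 : (vu : ZMod D) ^ 3 * w ^ 3 = 1 := by rw [← mul_pow, hv1, one_pow]
    linear_combination (w ^ 3 * b) * h - ((p.2 i : ZMod D) ^ 3 * w ^ 3) * ha1 - βu * b * hv3
  have hclasses : ((F.image cl).card : ℝ) ≤ M := by
    refine le_trans ?_ hroots
    have := roots_count 3 D hD0 (by norm_num) _ (Units.isUnit (-(βu * αu⁻¹))) (F.image cl) (by
      intro t ht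
      obtain ⟨p, hp, rfl⟩ := Finset.mem_image.1 ht
      exact hcl p hp)
    exact_mod_cast this
  set K : ℝ := (10 ^ 11 * (6 * Real.log L) ^ 4 *
      (1 + 4 * (Y i * Y j / Y k ^ 3) ^ ((2 : ℝ) / 3))) with hK
  have hK0 : 0 ≤ K := by
    have := hYp i; have := hYp j; have := hYp k
    positivity
  refine (card_le_real F cl K (F.image cl) (fun x hx => Finset.mem_image_of_mem _ hx) ?_).trans
    (mul_le_mul_of_nonneg_right hclasses hK0)
  intro c hc
  set G := F.filter (fun p => cl p = c) with hG
  have hGF : ∀ p ∈ G, p ∈ F ∧ cl p = c := fun p hp => Finset.mem_filter.1 hp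
  let pr : ((Fin 3 → ℤ) × (Fin 3 → ℤ)) → ℤ × ℤ := fun p => (p.2 i, p.2 j)
  have hinj : Set.InjOn pr G := by
    intro p hp q hq h
    have hp' := (hGF p hp).1
    have hq' := (hGF q hq).1
    obtain ⟨gp, p1, p2, p3⟩ := hF p hp'
    obtain ⟨gq, q1, q2, q3⟩ := hF q hq'
    simp only [pr, Prod.mk.injEq] at h
    have hk : p.1 k = q.1 k := by
      have hh : (a k * κ ^ 3) * p.1 k ^ 2 = (a k * κ ^ 3) * q.1 k ^ 2 := by
        have := heq p hp'
        have := heq q hq'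
        rw [← h.1, ← h.2] at this
        linarith
      have := mul_left_cancel₀ hDz hh
      exact (pow_left_inj₀ (gp.xpos k).le (gq.xpos k).le (by norm_num)).1 this
    apply Prod.ext
    · funext m
      exact fin3_cover i j k hij hik hjk (fun m => p.1 m = q.1 m) (p1.trans q1.symm) (p2.trans q2.symm) hk m
    · funext m
      exact fin3_cover i j k hij hik hjk (fun m => p.2 m = q.2 m) h.1 h.2 (p3.trans q3.symm) m
  rw [← Finset.card_image_of_injOn hinj]
  set U := ⌊Y i⌋₊ with hU
  set V := ⌊Y j⌋₊ with hV
  have hU1 : 1 ≤ U := Nat.le_floor (by exact_mod_cast hY i)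
  have hV1 : 1 ≤ V := Nat.le_floor (by exact_mod_cast hY j)
  have hUY : (U : ℝ) ≤ Y i := Nat.floor_le (hYp i).le
  have hVY : (V : ℝ) ≤ Y j := Nat.floor_le (hYp j).le
  have hexp : Real.exp (6 * Real.log L) = L ^ 6 := by
    rw [show (6 : ℝ) * Real.log L = ((6 : ℕ) : ℝ) * Real.log L by norm_num, Real.exp_nat_mul,
      Real.exp_log (by linarith)]
  have hL0 : 0 ≤ L := by linarith
  have hak : |(a k : ℝ)| * κ ≤ L := by
    refine le_trans ?_ (haY k)
    gcongr
    exact hκY.trans (le_self_pow₀ (hY k) (by norm_num))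
  have hc1 : |((-(a k * κ * α) : ℤ) : ℝ)| = (|(a k : ℝ)| * κ) * (|(a i : ℝ)| * ξ ^ 2) := by
    rw [hα]; push_cast [abs_neg, abs_mul]
    rw [abs_of_pos (by linarith : (0 : ℝ) < κ), abs_of_pos (by positivity : (0 : ℝ) < (ξ : ℝ) ^ 2)]
  have hc2 : |((-(a k * κ * β) : ℤ) : ℝ)| = (|(a k : ℝ)| * κ) * (|(a j : ℝ)| * η ^ 2) := by
    rw [hβ]; push_cast [abs_neg, abs_mul]
    rw [abs_of_pos (by linarith : (0 : ℝ) < κ), abs_of_pos (by positivity : (0 : ℝ) < (η : ℝ) ^ 2)]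
  have hi2 : |(a i : ℝ)| * ξ ^ 2 ≤ L := by refine le_trans ?_ (haX i); gcongr
  have hj2 : |(a j : ℝ)| * η ^ 2 ≤ L := by refine le_trans ?_ (haX j); gcongr
  have hi3 : |(a i : ℝ)| * ξ ^ 2 * U ^ 3 ≤ L := by refine le_trans ?_ (hb i); gcongr
  have hj3 : |(a j : ℝ)| * η ^ 2 * V ^ 3 ≤ L := by refine le_trans ?_ (hb j); gcongr
  have hLpow : 4 * L ^ 2 ≤ L ^ 6 := by
    have : L ^ 6 = L ^ 4 * L ^ 2 := by ring
    rw [this]; gcongr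
    have : L ≤ L ^ 4 := le_self_pow₀ (by linarith) (by norm_num)
    linarith
  have main := lattice_count D (Nat.pos_of_ne_zero hD0) ((c.val : ℕ) : ℤ) U V hU1 hV1
    (-(a k * κ * α)) (-(a k * κ * β))
    (neg_ne_zero.2 (mul_ne_zero (mul_ne_zero (ha k) hκ.ne') (mul_ne_zero (ha i) (pow_ne_zero _ hξ.ne'))))
    (neg_ne_zero.2 (mul_ne_zero (mul_ne_zero (ha k) hκ.ne') (mul_ne_zero (ha j) (pow_ne_zero _ hη.ne'))))
    (6 * Real.log L) (by linarith)
    (by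
      rw [hexp]
      refine le_trans ?_ hLpow
      have : (U : ℝ) * V ≤ L * L := by
        have h1 := hUY.trans (hYL i)
        have h2 := hVY.trans (hYL j)
        gcongr
      nlinarith)
    (by
      rw [hexp, hc1, hc2]
      calc _ ≤ (L * L) * (L * L) * L := by gcongr
        _ = L ^ 5 := by ring
        _ ≤ L ^ 6 := pow_le_pow_right₀ (by linarith) (by norm_num))
    (by
      rw [hexp, hc1, hc2]
      refine le_trans ?_ hLpow
      have a1 : (|(a k : ℝ)| * κ) * (|(a i : ℝ)| * ξ ^ 2 * U ^ 3) ≤ L * L := by gcongr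
      have a2 : (|(a k : ℝ)| * κ) * (|(a j : ℝ)| * η ^ 2 * V ^ 3) ≤ L * L := by gcongr
      nlinarith)
    (G.image pr) (by
      intro z hz
      obtain ⟨p, hp, rfl⟩ := Finset.mem_image.1 hz
      obtain ⟨hpF, hpc⟩ := hGF p hp
      obtain ⟨g, f1, f2, f3⟩ := hF p hpF
      have hsq : -(a k * κ * α) * p.2 i ^ 3 + -(a k * κ * β) * p.2 j ^ 3 = (a k * κ ^ 2 * p.1 k) ^ 2 := by
        linear_combination -(a k * κ) * heq p hpF
      have fl : ∀ m, p.2 m ≤ (⌊Y m⌋₊ : ℕ) := by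
        intro m
        have h1 := (g.yb m).2
        have h2 := g.ypos m
        lift p.2 m to ℕ using h2.le with n hn
        have : n ≤ ⌊Y m⌋₊ := Nat.le_floor (by exact_mod_cast h1)
        exact_mod_cast this
      refine ⟨⟨g.ypos i, fl i⟩, ⟨g.ypos j, fl j⟩, ?_, ?_, ?_, ⟨_, hsq⟩⟩
      · exact (g.cop i j hij).of_mul_left_right.of_mul_right_right
      · rw [← ZMod.intCast_zmod_eq_zero_iff_dvd]
        simp only [pr]
        push_cast
        rw [ZMod.natCast_zmod_val, ← hpc]
        simp only [cl]
        rw [mul_assoc, ZMod.inv_mul_of_unit _ (hvu p hpF), mul_one, sub_self]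
      · simp only [pr]
        rw [hsq]
        exact pow_ne_zero _ (mul_ne_zero (mul_ne_zero (ha k) (pow_ne_zero _ hκ.ne')) (g.xpos k).ne'))
  refine main.trans ?_
  rw [hK]
  have hfin : ((U : ℝ) * V / D) ^ ((2 : ℝ) / 3) ≤ 4 * (Y i * Y j / Y k ^ 3) ^ ((2 : ℝ) / 3) := by
    have h8 : (8 : ℝ) ^ ((2 : ℝ) / 3) = 4 := by
      rw [(by norm_num : (8 : ℝ) = 2 ^ (3 : ℝ)), ← Real.rpow_mul (by norm_num)]; norm_num
    have := hYp i; have := hYp j; have := hYp k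
    calc ((U : ℝ) * V / D) ^ ((2 : ℝ) / 3) ≤ (8 * (Y i * Y j / Y k ^ 3)) ^ ((2 : ℝ) / 3) := by
          gcongr
          calc (U : ℝ) * V / D ≤ Y i * Y j / (Y k ^ 3 / 8) := by gcongr
            _ = _ := by field_simp
      _ = _ := by rw [Real.mul_rpow (by norm_num) (by positivity), h8]
  gcongr

end XXY

namespace XXY

lemma ratio_eq {a b a' b' : ℤ} (ha : 0 < a) (hb : 0 < b) (ha' : 0 < a') (hb' : 0 < b')
    (h : IsCoprime a b) (h' : IsCoprime a' b') (e : a * b' = a' * b) : a = a' ∧ b = b' := by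
  have d1 : a ∣ a' := h.dvd_of_dvd_mul_right (e ▸ Dvd.intro _ rfl)
  have d2 : a' ∣ a := h'.dvd_of_dvd_mul_right (e.symm ▸ Dvd.intro _ rfl)
  have h1 : a = a' := Int.dvd_antisymm ha.le ha'.le d1 d2
  subst h1
  exact ⟨rfl, (mul_left_cancel₀ ha.ne' e).symm⟩

lemma conic_spacing (A B C x1 x2 x3 z1 z2 z3 : ℤ) (hA : A ≠ 0) (hB : B ≠ 0) (hC : C ≠ 0)
    (hAB : IsCoprime A B) (hAC : IsCoprime A C) (hBC : IsCoprime B C)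
    (x1p : 0 < x1) (x2p : 0 < x2) (x3p : 0 < x3) (z1p : 0 < z1) (z2p : 0 < z2) (z3p : 0 < z3)
    (hx : A * x1 ^ 2 + B * x2 ^ 2 + C * x3 ^ 2 = 0)
    (hz : A * z1 ^ 2 + B * z2 ^ 2 + C * z3 ^ 2 = 0)
    (x12 : IsCoprime x1 x2) (x13 : IsCoprime x1 x3) (x23 : IsCoprime x2 x3)
    (z12 : IsCoprime z1 z2) (z13 : IsCoprime z1 z3) (z23 : IsCoprime z2 z3)
    (hAx3 : IsCoprime A x3) (hBx3 : IsCoprime B x3) (hCx2 : IsCoprime C x2)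
    (cA : A ∣ x2 * z3 - z2 * x3) (cB : B ∣ x1 * z3 - z1 * x3) (cC : C ∣ x1 * z2 - z1 * x2)
    (kx : |C| * x3 ^ 2 ≤ 32 * |B| * x2 ^ 2) (kz : |C| * z3 ^ 2 ≤ 32 * |B| * z2 ^ 2) :
    (x1 = z1 ∧ x2 = z2 ∧ x3 = z3) ∨ 2 * (x1 * z1) * |A * B| ≤ 33 * (x3 * z1 - z3 * x1) ^ 2 := by
  set β := A * x1 * z1 + B * x2 * z2 + C * x3 * z3 with hβ
  set d2 := x2 * z1 - z2 * x1 with hd2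
  set d3 := x3 * z1 - z3 * x1 with hd3
  set s2 := x2 * z1 + z2 * x1 with hs2
  set s3 := x3 * z1 + z3 * x1 with hs3
  have id1 : B * d2 ^ 2 + C * d3 ^ 2 = -2 * (x1 * z1) * β := by
    rw [hd2, hd3, hβ]; linear_combination z1 ^ 2 * hx + x1 ^ 2 * hz
  have id2 : B * d2 * s2 = -(C * d3 * s3) := by
    rw [hd2, hd3, hs2, hs3]; linear_combination z1 ^ 2 * hx - x1 ^ 2 * hz
  have dA : A ∣ β := by
    apply hAx3.dvd_of_dvd_mul_right
    have : β * x3 = A * (x1 * z1 * x3 - z3 * x1 ^ 2) - (x2 * z3 - z2 * x3) * (B * x2) := by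
      rw [hβ]; linear_combination z3 * hx
    rw [this]
    exact dvd_sub (Dvd.intro _ rfl) (cA.mul_right _)
  have dB : B ∣ β := by
    apply hBx3.dvd_of_dvd_mul_right
    have : β * x3 = B * (x2 * z2 * x3 - z3 * x2 ^ 2) - (x1 * z3 - z1 * x3) * (A * x1) := by
      rw [hβ]; linear_combination z3 * hx
    rw [this]
    exact dvd_sub (Dvd.intro _ rfl) (cB.mul_right _)
  have dC : C ∣ β := by
    apply hCx2.dvd_of_dvd_mul_right
    have : β * x2 = C * (x3 * z3 * x2 - z2 * x3 ^ 2) - (x1 * z2 - z1 * x2) * (A * x1) := by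
      rw [hβ]; linear_combination z2 * hx
    rw [this]
    exact dvd_sub (Dvd.intro _ rfl) (cC.mul_right _)
  have dABC : A * B * C ∣ β := (hAC.mul_left hBC).mul_dvd (hAB.mul_dvd dA dB) dC
  have hs2p : 0 < s2 := by positivity
  have hs3p : 0 < s3 := by positivity
  by_cases hβ0 : β = 0
  · left
    rw [hβ0, mul_zero] at id1
    by_cases h3 : d3 = 0
    · have h2 : d2 = 0 := by
        rw [h3] at id1
        have : B * d2 ^ 2 = 0 := by linarith
        exact pow_eq_zero_iff (by norm_num) |>.1 ((mul_eq_zero.1 this).resolve_left hB)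
      have r1 := ratio_eq x1p x3p z1p z3p x13 z13 (by rw [hd3] at h3; linarith)
      have r2 := ratio_eq x1p x2p z1p z2p x12 z12 (by rw [hd2] at h2; linarith)
      exact ⟨r1.1, r2.2, r1.2⟩
    · have h2 : d2 ≠ 0 := by
        intro h2
        rw [h2] at id1
        have : C * d3 ^ 2 = 0 := by linarith
        exact h3 (pow_eq_zero_iff (by norm_num) |>.1 ((mul_eq_zero.1 this).resolve_left hC))
      have e : (B * d2) * (d2 * s3) = (B * d2) * (d3 * s2) := by
        linear_combination s3 * id1 - d3 * id2
      have e2 := mul_left_cancel₀ (mul_ne_zero hB h2) e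
      have e3 : (2 * (x1 * z1)) * (x2 * z3) = (2 * (x1 * z1)) * (z2 * x3) := by
        rw [hd2, hd3, hs2, hs3] at e2; linear_combination e2
      have e4 := mul_left_cancel₀ (by positivity) e3
      obtain ⟨r1, r2⟩ := ratio_eq x2p x3p z2p z3p x23 z23 e4
      refine ⟨?_, r1, r2⟩
      have : A * x1 ^ 2 = A * z1 ^ 2 := by rw [r1, r2] at hx; linarith
      exact (pow_left_inj₀ x1p.le z1p.le (by norm_num)).1 (mul_left_cancel₀ hA this)
  · right
    have hCp : 0 < |C| := abs_pos.2 hC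
    have hBp : 0 < |B| := abs_pos.2 hB
    have hcross : |C| * (x3 * z3) ≤ 32 * |B| * (x2 * z2) := by
      apply le_of_sq_le_sq _ (by positivity)
      calc (|C| * (x3 * z3)) ^ 2 = (|C| * x3 ^ 2) * (|C| * z3 ^ 2) := by ring
        _ ≤ (32 * |B| * x2 ^ 2) * (32 * |B| * z2 ^ 2) := by gcongr
        _ = _ := by ring
    have hs : |C| * s3 ^ 2 ≤ 32 * |B| * s2 ^ 2 := by
      have a1 : |C| * x3 ^ 2 * z1 ^ 2 ≤ 32 * |B| * x2 ^ 2 * z1 ^ 2 := by gcongr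
      have a2 : |C| * z3 ^ 2 * x1 ^ 2 ≤ 32 * |B| * z2 ^ 2 * x1 ^ 2 := by gcongr
      have a3 : |C| * (x3 * z3) * (x1 * z1) ≤ 32 * |B| * (x2 * z2) * (x1 * z1) := by gcongr
      rw [hs2, hs3]
      nlinarith
    have hd : |B| * d2 ^ 2 ≤ 32 * |C| * d3 ^ 2 := by
      have h1 : |B| ^ 2 * d2 ^ 2 * s2 ^ 2 = |C| ^ 2 * d3 ^ 2 * s3 ^ 2 := by
        rw [sq_abs, sq_abs]; linear_combination (B * d2 * s2 - C * d3 * s3) * id2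
      have h2 : (|B| * s2 ^ 2) * (|B| * d2 ^ 2) ≤ (|B| * s2 ^ 2) * (32 * |C| * d3 ^ 2) := by
        calc (|B| * s2 ^ 2) * (|B| * d2 ^ 2) = |B| ^ 2 * d2 ^ 2 * s2 ^ 2 := by ring
          _ = (|C| * d3 ^ 2) * (|C| * s3 ^ 2) := by rw [h1]; ring
          _ ≤ (|C| * d3 ^ 2) * (32 * |B| * s2 ^ 2) := by gcongr
          _ = _ := by ring
      exact le_of_mul_le_mul_left h2 (by positivity)
    have hβle : |A * B| * |C| ≤ |β| := by
      rw [← abs_mul]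
      exact Int.le_of_dvd (abs_pos.2 hβ0) ((abs_dvd_abs _ _).2 dABC)
    have h5 : 2 * (x1 * z1) * |β| ≤ 33 * |C| * d3 ^ 2 := by
      have : 2 * (x1 * z1) * |β| = |B * d2 ^ 2 + C * d3 ^ 2| := by
        rw [id1, abs_mul, abs_of_neg (by have := mul_pos x1p z1p; linarith : -2 * (x1 * z1) < 0)]; ring
      rw [this]
      refine (abs_add_le _ _).trans ?_
      rw [abs_mul, abs_mul, abs_of_nonneg (sq_nonneg d2), abs_of_nonneg (sq_nonneg d3)]
      linarith
    have h6 : |C| * (2 * (x1 * z1) * |A * B|) ≤ |C| * (33 * d3 ^ 2) := by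
      have : 2 * (x1 * z1) * (|A * B| * |C|) ≤ 2 * (x1 * z1) * |β| := by gcongr
      nlinarith
    exact le_of_mul_le_mul_left h6 hCp

lemma spacing_count {ι : Type*} (G : Finset ι) (w : ι → ℝ) (W δ : ℝ) (hδ : 0 < δ) (hW : 0 ≤ W)
    (hw : ∀ x ∈ G, 0 ≤ w x ∧ w x ≤ W)
    (hs : ∀ x ∈ G, ∀ y ∈ G, x ≠ y → δ ≤ |w x - w y|) : (G.card : ℝ) ≤ 1 + W / δ := by
  have h : G.card ≤ (Finset.range (⌊W / δ⌋₊ + 1)).card := by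
    apply Finset.card_le_card_of_injOn (fun x => ⌊w x / δ⌋₊)
    · intro x hx
      have hx' := hw x hx
      simp only [Finset.coe_range, Set.mem_Iio]
      refine Nat.lt_succ_of_le (Nat.floor_le_floor ?_)
      exact div_le_div_of_nonneg_right hx'.2 hδ.le
    · intro x hx y hy hxy
      by_contra hne
      have h1 := hs x hx y hy hne
      simp only at hxy
      have px : 0 ≤ w x / δ := div_nonneg (hw x hx).1 hδ.le
      have py : 0 ≤ w y / δ := div_nonneg (hw y hy).1 hδ.le
      have a1 := Nat.floor_le px
      have a2 := Nat.lt_floor_add_one (w x / δ)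
      have a3 := Nat.floor_le py
      have a4 := Nat.lt_floor_add_one (w y / δ)
      rw [hxy] at a1 a2
      have : |w x / δ - w y / δ| < 1 := by rw [abs_lt]; constructor <;> linarith
      rw [← sub_div, abs_div, abs_of_pos hδ, div_lt_one hδ] at this
      linarith
  rw [Finset.card_range] at h
  have h' : (G.card : ℝ) ≤ ⌊W / δ⌋₊ + 1 := by exact_mod_cast h
  have := Nat.floor_le (div_nonneg hW hδ.le)
  linarith

lemma unit_of_coprime (A z : ℤ) (h : IsCoprime z A) : IsUnit ((z : ℤ) : ZMod A.natAbs) := by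
  rw [ZMod.coe_int_isUnit_iff_isCoprime, Int.isCoprime_iff_gcd_eq_one]
  have h4 := (Int.isCoprime_iff_gcd_eq_one.1 h)
  rw [Int.gcd_comm] at h4
  unfold Int.gcd at h4 ⊢
  rw [Int.natAbs_natCast]
  exact h4

lemma class_count {τ : Type*} (m : ℕ) (hm : m ≠ 0) (A : ℤ) (hA : A ≠ 0) (b c : ℤ)
    (hb : IsCoprime b A) (hc : IsCoprime c A) (F : Finset τ) (u v : τ → ℤ)
    (hv : ∀ p ∈ F, IsCoprime (v p) A) (h : ∀ p ∈ F, A ∣ b * u p ^ m + c * v p ^ m) :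
    (F.image (fun p => ((u p : ℤ) : ZMod A.natAbs) * ((v p : ℤ) : ZMod A.natAbs)⁻¹)).card ≤
      rootsCard m A.natAbs := by
  obtain ⟨bu, hbu⟩ := unit_of_coprime A b hb
  obtain ⟨cu, hcu⟩ := unit_of_coprime A c hc
  apply roots_count m _ (Int.natAbs_ne_zero.2 hA) hm _ (Units.isUnit (-(cu * bu⁻¹)))
  intro t ht
  obtain ⟨p, hp, rfl⟩ := Finset.mem_image.1 ht
  obtain ⟨vu, hvu⟩ := unit_of_coprime A _ (hv p hp)
  have h0 : ((b * u p ^ m + c * v p ^ m : ℤ) : ZMod A.natAbs) = 0 := by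
    rw [ZMod.intCast_zmod_eq_zero_iff_dvd]
    exact Int.natAbs_dvd.2 (h p hp)
  push_cast at h0
  rw [← hbu, ← hcu, ← hvu] at h0
  rw [← hvu, ZMod.inv_coe_unit]
  have hv1 : (vu : ZMod A.natAbs) * ((vu⁻¹ : (ZMod A.natAbs)ˣ) : ZMod A.natAbs) = 1 := vu.mul_inv
  have ha1 : (bu : ZMod A.natAbs) * ((bu⁻¹ : (ZMod A.natAbs)ˣ) : ZMod A.natAbs) = 1 := bu.mul_inv
  push_cast
  set w := ((vu⁻¹ : (ZMod A.natAbs)ˣ) : ZMod A.natAbs)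
  set b' := ((bu⁻¹ : (ZMod A.natAbs)ˣ) : ZMod A.natAbs)
  have hv3 : (vu : ZMod A.natAbs) ^ m * w ^ m = 1 := by rw [← mul_pow, hv1, one_pow]
  rw [mul_pow]
  linear_combination (w ^ m * b') * h0 - ((u p : ZMod A.natAbs) ^ m * w ^ m) * ha1 - cu * b' * hv3

lemma class_dvd (A : ℤ) (u v u' v' : ℤ) (hv : IsCoprime v A) (hv' : IsCoprime v' A)
    (h : ((u : ℤ) : ZMod A.natAbs) * ((v : ℤ) : ZMod A.natAbs)⁻¹ =
      ((u' : ℤ) : ZMod A.natAbs) * ((v' : ℤ) : ZMod A.natAbs)⁻¹) : A ∣ u * v' - u' * v := by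
  rw [← Int.natAbs_dvd, ← ZMod.intCast_zmod_eq_zero_iff_dvd]
  have e1 := ZMod.inv_mul_of_unit _ (unit_of_coprime A v hv)
  have e2 := ZMod.inv_mul_of_unit _ (unit_of_coprime A v' hv')
  push_cast
  linear_combination ((v : ZMod A.natAbs) * v') * h - (u : ZMod A.natAbs) * v' * e1 + (u' : ZMod A.natAbs) * v * e2

end XXY

namespace XXY

set_option maxHeartbeats 1000000 in
/-- Conic bound for one fibre. -/
lemma fiberA (a : Fin 3 → ℤ) (X Y : Fin 3 → ℝ) (L : ℝ)
    (ha : ∀ i, a i ≠ 0) (hac : ∀ i j, i ≠ j → IsCoprime (a i) (a j))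
    (hX : ∀ i, 1 ≤ X i) (hY : ∀ i, 1 ≤ Y i)
    (hb : ∀ i, |(a i : ℝ)| * X i ^ 2 * Y i ^ 3 ≤ L)
    (i j k : Fin 3) (hij : i ≠ j) (hik : i ≠ k) (hjk : j ≠ k)
    (hmin : |(a k : ℝ)| * X k ^ 2 * Y k ^ 3 ≤ |(a j : ℝ)| * X j ^ 2 * Y j ^ 3)
    (η : Fin 3 → ℤ) (M : ℝ) (hM0 : 0 ≤ M)
    (hM : ∀ n : ℕ, n ≠ 0 → (n : ℝ) ≤ L → ¬ 16 ∣ n → (rootsCard 2 n : ℝ) ≤ M)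
    (F : Finset ((Fin 3 → ℤ) × (Fin 3 → ℤ)))
    (hF : ∀ p ∈ F, Good a X Y p ∧ p.2 = η) :
    (F.card : ℝ) ≤ M ^ 3 * (1 + 80 * (X k / (Y i * Y j))) := by
  have hYp : ∀ i, 0 < Y i := fun i => by linarith [hY i]
  have hXp : ∀ i, 0 < X i := fun i => by linarith [hX i]
  have hR0 : 0 ≤ 1 + 80 * (X k / (Y i * Y j)) := by
    have := hYp i; have := hYp j; have := hXp k
    positivity
  rcases F.eq_empty_or_nonempty with rfl | ⟨p0, hp0⟩
  · simp only [Finset.card_empty, Nat.cast_zero]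
    exact mul_nonneg (by positivity) hR0
  have hη : ∀ m, 0 < η m := by
    obtain ⟨g0, e⟩ := hF p0 hp0
    intro m; rw [← e]; exact g0.ypos m
  have hak1 : ∀ i, (1 : ℝ) ≤ |(a i : ℝ)| := by
    intro i
    have := Int.one_le_abs (ha i)
    exact_mod_cast this
  set A : Fin 3 → ℤ := fun m => a m * η m ^ 3 with hA
  have hA0 : ∀ m, A m ≠ 0 := fun m => mul_ne_zero (ha m) (pow_ne_zero _ (hη m).ne')
  have habs : ∀ m, |((A m : ℤ) : ℝ)| = |(a m : ℝ)| * (η m : ℝ) ^ 3 := by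
    intro m
    have hk0 : (0 : ℝ) < η m := by exact_mod_cast hη m
    simp only [hA]
    push_cast [abs_mul]
    rw [abs_of_pos (by positivity : (0 : ℝ) < (η m : ℝ) ^ 3)]
  have hηY : ∀ m, Y m / 2 < (η m : ℝ) ∧ (η m : ℝ) ≤ Y m := by
    obtain ⟨g0, e⟩ := hF p0 hp0
    intro m; rw [← e]; exact g0.yb m
  have hAL : ∀ m, (((A m).natAbs : ℕ) : ℝ) ≤ L := by
    intro m
    rw [Nat.cast_natAbs, Int.cast_abs, habs m]
    have h1 : (1 : ℝ) ≤ η m := by exact_mod_cast hη m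
    have hX2 : 1 ≤ X m ^ 2 := one_le_pow₀ (hX m)
    calc |(a m : ℝ)| * (η m : ℝ) ^ 3 ≤ |(a m : ℝ)| * X m ^ 2 * Y m ^ 3 := by
          gcongr
          · exact le_mul_of_one_le_right (abs_nonneg _) hX2
          · exact (hηY m).2
      _ ≤ L := hb m
  have hAM : ∀ m, (rootsCard 2 (A m).natAbs : ℝ) ≤ M := by
    intro m
    apply hM _ (Int.natAbs_ne_zero.2 (hA0 m)) (hAL m)
    intro h
    obtain ⟨g0, e⟩ := hF p0 hp0
    apply not_16_dvd (a m) (η m) (by rw [← e]; exact g0.sqf m)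
    have := Int.natCast_dvd.2 h
    exact_mod_cast this
  have hAA : ∀ m n, m ≠ n → IsCoprime (A m) (A n) := by
    intro m n hmn
    obtain ⟨g0, e⟩ := hF p0 hp0
    have c1 := (g0.copa m n).of_mul_right_right
    have c2 := (g0.copa n m).of_mul_right_right
    have c3 := (g0.cop m n hmn).of_mul_left_right.of_mul_right_right
    rw [e] at c1 c2 c3
    exact ((hac m n hmn).mul_right c1.pow_right).mul_left
      (c2.symm.pow_left.mul_right (c3.pow_left.pow_right))
  have hxA : ∀ p ∈ F, ∀ m n, m ≠ n → IsCoprime (p.1 m) (A n) := by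
    intro p hp m n hmn
    obtain ⟨g, e⟩ := hF p hp
    have c1 := (g.copa n m).of_mul_right_left
    have c3 := (g.cop m n hmn).of_mul_left_left.of_mul_right_right
    rw [e] at c3
    exact c1.symm.mul_right c3.pow_right
  have heq : ∀ p ∈ F, A i * p.1 i ^ 2 + A j * p.1 j ^ 2 + A k * p.1 k ^ 2 = 0 := by
    intro p hp
    obtain ⟨g, e⟩ := hF p hp
    have := g.eq i j k hij hik hjk
    rw [e] at this
    simp only [hA]
    linear_combination this
  -- classes
  let f1 : ((Fin 3 → ℤ) × (Fin 3 → ℤ)) → ZMod (A i).natAbs :=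
    fun p => ((p.1 j : ℤ) : ZMod (A i).natAbs) * ((p.1 k : ℤ) : ZMod (A i).natAbs)⁻¹
  let f2 : ((Fin 3 → ℤ) × (Fin 3 → ℤ)) → ZMod (A j).natAbs :=
    fun p => ((p.1 i : ℤ) : ZMod (A j).natAbs) * ((p.1 k : ℤ) : ZMod (A j).natAbs)⁻¹
  let f3 : ((Fin 3 → ℤ) × (Fin 3 → ℤ)) → ZMod (A k).natAbs :=
    fun p => ((p.1 i : ℤ) : ZMod (A k).natAbs) * ((p.1 j : ℤ) : ZMod (A k).natAbs)⁻¹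
  have n1 : ((F.image f1).card : ℝ) ≤ M := by
    refine le_trans ?_ (hAM i)
    exact_mod_cast class_count 2 (by norm_num) (A i) (hA0 i) (A j) (A k) (hAA j i hij.symm) (hAA k i hik.symm)
      F (fun p => p.1 j) (fun p => p.1 k) (fun p hp => hxA p hp k i hik.symm)
      (fun p hp => ⟨-p.1 i ^ 2, by linear_combination heq p hp⟩)
  have n2 : ((F.image f2).card : ℝ) ≤ M := by
    refine le_trans ?_ (hAM j)
    exact_mod_cast class_count 2 (by norm_num) (A j) (hA0 j) (A i) (A k) (hAA i j hij) (hAA k j hjk.symm)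
      F (fun p => p.1 i) (fun p => p.1 k) (fun p hp => hxA p hp k j hjk.symm)
      (fun p hp => ⟨-p.1 j ^ 2, by linear_combination heq p hp⟩)
  have n3 : ((F.image f3).card : ℝ) ≤ M := by
    refine le_trans ?_ (hAM k)
    exact_mod_cast class_count 2 (by norm_num) (A k) (hA0 k) (A i) (A j) (hAA i k hik) (hAA j k hjk)
      F (fun p => p.1 i) (fun p => p.1 j) (fun p hp => hxA p hp j k hjk)
      (fun p hp => ⟨-p.1 k ^ 2, by linear_combination heq p hp⟩)
  have hcard := card_le_real F (fun p => (f1 p, f2 p, f3 p)) (1 + 80 * (X k / (Y i * Y j)))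
    (F.image f1 ×ˢ (F.image f2 ×ˢ F.image f3)) (by
      intro p hp
      simp only [Finset.mem_product]
      exact ⟨Finset.mem_image_of_mem _ hp, Finset.mem_image_of_mem _ hp, Finset.mem_image_of_mem _ hp⟩)
    (by
      intro c _
      set G := F.filter (fun p => (f1 p, f2 p, f3 p) = c) with hG
      have hGF : ∀ p ∈ G, p ∈ F ∧ (f1 p, f2 p, f3 p) = c := fun p hp => Finset.mem_filter.1 hp
      have hδ : 0 < Y i * Y j / (40 * X i) := by
        have := hYp i; have := hYp j; have := hXp i
        positivity
      have hW : 0 ≤ 2 * X k / X i := by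
        have := hXp k; have := hXp i
        positivity
      have key := spacing_count G (fun p => (p.1 k : ℝ) / (p.1 i : ℝ)) (2 * X k / X i) (Y i * Y j / (40 * X i))
        hδ hW (by
          intro p hp
          obtain ⟨g, e⟩ := hF p (hGF p hp).1
          have h1 := g.xb k
          have h2 := g.xb i
          have h3 : (0 : ℝ) < p.1 i := by exact_mod_cast g.xpos i
          have h4 : (0 : ℝ) < p.1 k := by exact_mod_cast g.xpos k
          have := hXp i
          refine ⟨by positivity, ?_⟩
          rw [div_le_div_iff₀ h3 this]
          nlinarith [hXp k])
        (by
          intro p hp q hq hpq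
          obtain ⟨hpF, hpc⟩ := hGF p hp
          obtain ⟨hqF, hqc⟩ := hGF q hq
          obtain ⟨gp, ep⟩ := hF p hpF
          obtain ⟨gq, eq⟩ := hF q hqF
          have hc := hpc.trans hqc.symm
          simp only [Prod.mk.injEq] at hc
          obtain ⟨c1, c2, c3⟩ := hc
          have d1 := class_dvd (A i) (p.1 j) (p.1 k) (q.1 j) (q.1 k) (hxA p hpF k i hik.symm)
            (hxA q hqF k i hik.symm) c1
          have d2 := class_dvd (A j) (p.1 i) (p.1 k) (q.1 i) (q.1 k) (hxA p hpF k j hjk.symm)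
            (hxA q hqF k j hjk.symm) c2
          have d3 := class_dvd (A k) (p.1 i) (p.1 j) (q.1 i) (q.1 j) (hxA p hpF j k hjk)
            (hxA q hqF j k hjk) c3
          have hk : ∀ p ∈ F, |A k| * p.1 k ^ 2 ≤ 32 * |A j| * p.1 j ^ 2 := by
            intro p hp
            obtain ⟨g, e⟩ := hF p hp
            have hr : |((A k : ℤ) : ℝ)| * (p.1 k : ℝ) ^ 2 ≤ 32 * |((A j : ℤ) : ℝ)| * (p.1 j : ℝ) ^ 2 := by
              rw [habs, habs]
              have b1 := g.xb k
              have b2 := g.xb j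
              have b3 := hηY k
              have b4 := hηY j
              have q1 : (0 : ℝ) < p.1 k := by exact_mod_cast g.xpos k
              have q2 : (0 : ℝ) < η k := by exact_mod_cast hη k
              calc |(a k : ℝ)| * (η k : ℝ) ^ 3 * (p.1 k : ℝ) ^ 2
                  ≤ |(a k : ℝ)| * (Y k : ℝ) ^ 3 * (X k : ℝ) ^ 2 := by
                    have := hYp k
                    gcongr
                    · exact b3.2
                    · exact b1.2
                _ = |(a k : ℝ)| * X k ^ 2 * Y k ^ 3 := by ring
                _ ≤ |(a j : ℝ)| * X j ^ 2 * Y j ^ 3 := hmin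
                _ = 32 * (|(a j : ℝ)| * (Y j / 2) ^ 3) * (X j / 2) ^ 2 := by ring
                _ ≤ _ := by
                    have := hYp j; have := hXp j
                    have : (0 : ℝ) < η j := by exact_mod_cast hη j
                    gcongr
                    · exact b4.1.le
                    · exact b2.1.le
            exact_mod_cast hr
          have cpp : ∀ (g : Good a X Y p) m n, m ≠ n → IsCoprime (p.1 m) (p.1 n) := fun g m n h =>
            (g.cop m n h).of_mul_left_left.of_mul_right_left
          have cpq : ∀ (g : Good a X Y q) m n, m ≠ n → IsCoprime (q.1 m) (q.1 n) := fun g m n h =>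
            (g.cop m n h).of_mul_left_left.of_mul_right_left
          rcases conic_spacing (A i) (A j) (A k) (p.1 i) (p.1 j) (p.1 k) (q.1 i) (q.1 j) (q.1 k)
            (hA0 i) (hA0 j) (hA0 k) (hAA i j hij) (hAA i k hik) (hAA j k hjk)
            (gp.xpos i) (gp.xpos j) (gp.xpos k) (gq.xpos i) (gq.xpos j) (gq.xpos k)
            (heq p hpF) (heq q hqF) (cpp gp i j hij) (cpp gp i k hik) (cpp gp j k hjk)
            (cpq gq i j hij) (cpq gq i k hik) (cpq gq j k hjk)
            (hxA p hpF k i hik.symm).symm (hxA p hpF k j hjk.symm).symm (hxA p hpF j k hjk).symm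
            d1 d2 d3 (hk p hpF) (hk q hqF) with h | h
          · exfalso; apply hpq
            apply Prod.ext
            · funext m
              exact fin3_cover i j k hij hik hjk (fun m => p.1 m = q.1 m) h.1 h.2.1 h.2.2 m
            · rw [ep, eq]
          · have hr : 2 * ((p.1 i : ℝ) * q.1 i) * (|((A i : ℤ) : ℝ)| * |((A j : ℤ) : ℝ)|) ≤
                33 * ((p.1 k : ℝ) * q.1 i - q.1 k * p.1 i) ^ 2 := by
              rw [← abs_mul]; exact_mod_cast h
            have low : ∀ m, Y m / 8 * Y m ≤ |((A m : ℤ) : ℝ)| := by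
              intro m
              rw [habs]
              have y1 := hYp m
              have y2 := hY m
              calc Y m / 8 * Y m ≤ 1 * (Y m / 2) ^ 3 := by nlinarith [sq_nonneg (Y m)]
                _ ≤ _ := by
                  have := hak1 m
                  have := (hηY m).1.le
                  gcongr
            set P : ℝ := (p.1 i : ℝ) with hP
            set Q : ℝ := (q.1 i : ℝ) with hQ
            have hP0 : 0 < P := by rw [hP]; exact_mod_cast gp.xpos i
            have hQ0 : 0 < Q := by rw [hQ]; exact_mod_cast gq.xpos i
            have hPX : P ≤ X i := (gp.xb i).2
            have hQX : Q ≤ X i := (gq.xb i).2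
            have yi := hYp i
            have yj := hYp j
            have xi := hXp i
            have l1 := low i
            have l2 := low j
            have hprod : (Y i / 8 * Y i) * (Y j / 8 * Y j) ≤ |((A i : ℤ) : ℝ)| * |((A j : ℤ) : ℝ)| := by
              gcongr
            set d : ℝ := (p.1 k : ℝ) * Q - q.1 k * P with hd
            have h2 : P * Q * (Y i * Y j) ^ 2 ≤ 1600 * d ^ 2 := by
              have : 2 * (P * Q) * ((Y i / 8 * Y i) * (Y j / 8 * Y j)) ≤
                2 * (P * Q) * (|((A i : ℤ) : ℝ)| * |((A j : ℤ) : ℝ)|) := by gcongr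
              nlinarith [sq_nonneg d]
            have hdiv : (p.1 k : ℝ) / P - (q.1 k : ℝ) / Q = d / (P * Q) := by
              rw [hd]; field_simp
            rw [hdiv]
            apply le_of_sq_le_sq _ (abs_nonneg _)
            rw [sq_abs, div_pow, div_pow, div_le_div_iff₀ (by positivity) (by positivity)]
            calc (Y i * Y j) ^ 2 * (P * Q) ^ 2 = (P * Q * (Y i * Y j) ^ 2) * (P * Q) := by ring
              _ ≤ (1600 * d ^ 2) * (X i * X i) := by gcongr
              _ = d ^ 2 * (40 * X i) ^ 2 := by ring)
      refine key.trans (le_of_eq ?_)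
      have := hYp i; have := hYp j; have := hXp i
      field_simp
      ring)
  refine hcard.trans ?_
  rw [Finset.card_product, Finset.card_product]
  push_cast
  apply mul_le_mul_of_nonneg_right _ hR0
  calc ((F.image f1).card : ℝ) * ((F.image f2).card * (F.image f3).card) ≤ M * (M * M) := by gcongr
    _ = M ^ 3 := by ring

end XXY

namespace XXY

lemma mem_box (z : ℤ) (x : ℝ) (h0 : 0 < z) (h : (z : ℝ) ≤ x) : z ∈ Finset.Icc (1 : ℤ) ⌊x⌋ := by
  rw [Finset.mem_Icc]
  exact ⟨h0, Int.le_floor.2 h⟩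

lemma card_box (x : ℝ) (hx : 1 ≤ x) : ((Finset.Icc (1 : ℤ) ⌊x⌋).card : ℝ) ≤ x := by
  rw [Int.card_Icc, add_sub_cancel_right]
  have h0 : 0 ≤ ⌊x⌋ := Int.floor_nonneg.2 (by linarith)
  have : ((⌊x⌋.toNat : ℕ) : ℝ) = (⌊x⌋ : ℝ) := by
    have := Int.toNat_of_nonneg h0
    exact_mod_cast congrArg (fun z : ℤ => (z : ℝ)) this
  rw [this]; exact Int.floor_le x

lemma boundB (a : Fin 3 → ℤ) (X Y : Fin 3 → ℝ) (L : ℝ) (hL : 64 ≤ L)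
    (ha : ∀ i, a i ≠ 0) (hac : ∀ i j, i ≠ j → IsCoprime (a i) (a j))
    (hX : ∀ i, 1 ≤ X i) (hY : ∀ i, 1 ≤ Y i)
    (hb : ∀ i, |(a i : ℝ)| * X i ^ 2 * Y i ^ 3 ≤ L)
    (i j k : Fin 3) (hij : i ≠ j) (hik : i ≠ k) (hjk : j ≠ k) (M : ℝ) (hM0 : 0 ≤ M)
    (hM : ∀ n : ℕ, n ≠ 0 → (n : ℝ) ≤ L → ¬ 16 ∣ n → (rootsCard 3 n : ℝ) ≤ M)
    (F : Finset ((Fin 3 → ℤ) × (Fin 3 → ℤ))) (hF : ∀ p ∈ F, Good a X Y p) :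
    (F.card : ℝ) ≤ (X i * X j * Y k) * (M * (10 ^ 11 * (6 * Real.log L) ^ 4 *
      (1 + 4 * (Y i * Y j / Y k ^ 3) ^ ((2 : ℝ) / 3)))) := by
  have hi := hY i
  have hj := hY j
  have hk := hY k
  refine (card_le_real F (fun p => (p.1 i, p.1 j, p.2 k)) (M * (10 ^ 11 * (6 * Real.log L) ^ 4 *
      (1 + 4 * (Y i * Y j / Y k ^ 3) ^ ((2 : ℝ) / 3))))
    (Finset.Icc (1 : ℤ) ⌊X i⌋ ×ˢ (Finset.Icc (1 : ℤ) ⌊X j⌋ ×ˢ Finset.Icc (1 : ℤ) ⌊Y k⌋)) ?_ ?_).trans ?_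
  · intro p hp
    have g := hF p hp
    simp only [Finset.mem_product]
    exact ⟨mem_box _ _ (g.xpos i) (g.xb i).2, mem_box _ _ (g.xpos j) (g.xb j).2,
      mem_box _ _ (g.ypos k) (g.yb k).2⟩
  · rintro ⟨ξ, η, κ⟩ _
    apply fiberB a X Y L hL ha hac hX hY hb i j k hij hik hjk ξ η κ M hM
    intro p hp
    rw [Finset.mem_filter] at hp
    simp only [Prod.mk.injEq] at hp
    exact ⟨hF p hp.1, hp.2⟩
  · rw [Finset.card_product, Finset.card_product]
    push_cast
    have h1 := card_box _ (hX i)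
    have h2 := card_box _ (hX j)
    have h3 := card_box _ (hY k)
    have := hX i
    have := hX j
    have hlog : 0 ≤ Real.log L := Real.log_nonneg (by linarith)
    have hR : (0 : ℝ) ≤ M * (10 ^ 11 * (6 * Real.log L) ^ 4 *
      (1 + 4 * (Y i * Y j / Y k ^ 3) ^ ((2 : ℝ) / 3))) := by positivity
    refine mul_le_mul_of_nonneg_right ?_ hR
    rw [← mul_assoc]
    gcongr

lemma prod3 (Y : Fin 3 → ℝ) (i j k : Fin 3) (hij : i ≠ j) (hik : i ≠ k) (hjk : j ≠ k) :
    ∏ m, Y m = Y i * Y j * Y k := by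
  have h : (Finset.univ : Finset (Fin 3)) = {i, j, k} := by
    revert i j k; decide
  rw [h, Finset.prod_insert (by simp [hij, hik]), Finset.prod_insert (by simp [hjk]),
    Finset.prod_singleton, mul_assoc]

lemma exists_pair : ∀ k : Fin 3, ∃ i j : Fin 3, i ≠ j ∧ i ≠ k ∧ j ≠ k := by decide

lemma exists_min (f : Fin 3 → ℝ) : ∃ k, ∀ m, f k ≤ f m := Finite.exists_min f

lemma boundA (a : Fin 3 → ℤ) (X Y : Fin 3 → ℝ) (L : ℝ) (hL : 64 ≤ L)
    (ha : ∀ i, a i ≠ 0) (hac : ∀ i j, i ≠ j → IsCoprime (a i) (a j))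
    (hX : ∀ i, 1 ≤ X i) (hY : ∀ i, 1 ≤ Y i)
    (hb : ∀ i, |(a i : ℝ)| * X i ^ 2 * Y i ^ 3 ≤ L) (M : ℝ) (hM0 : 0 ≤ M)
    (hM : ∀ n : ℕ, n ≠ 0 → (n : ℝ) ≤ L → ¬ 16 ∣ n → (rootsCard 2 n : ℝ) ≤ M)
    (F : Finset ((Fin 3 → ℤ) × (Fin 3 → ℤ))) (hF : ∀ p ∈ F, Good a X Y p) :
    (F.card : ℝ) ≤ M ^ 3 * (∏ m, Y m + 80 * Real.sqrt L) := by
  obtain ⟨k, hk⟩ := exists_min (fun m => |(a m : ℝ)| * X m ^ 2 * Y m ^ 3)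
  obtain ⟨i, j, hij, hik, hjk⟩ := exists_pair k
  have hi := hY i
  have hj := hY j
  have hk1 := hY k
  have hprod : ∏ m, Y m = Y i * Y j * Y k := prod3 Y i j k hij hik hjk
  have hR : 0 ≤ M ^ 3 * (1 + 80 * (X k / (Y i * Y j))) := by
    have := hX k
    positivity
  refine (card_le_real F (fun p => p.2) (M ^ 3 * (1 + 80 * (X k / (Y i * Y j))))
    (Fintype.piFinset (fun m => Finset.Icc (1 : ℤ) ⌊Y m⌋)) ?_ ?_).trans ?_
  · intro p hp
    have g := hF p hp
    rw [Fintype.mem_piFinset]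
    intro m
    exact mem_box _ _ (g.ypos m) (g.yb m).2
  · intro η _
    apply fiberA a X Y L ha hac hX hY hb i j k hij hik hjk (hk j) η M hM0 hM
    intro p hp
    rw [Finset.mem_filter] at hp
    exact ⟨hF p hp.1, hp.2⟩
  · have hc : ((Fintype.piFinset (fun m => Finset.Icc (1 : ℤ) ⌊Y m⌋)).card : ℝ) ≤ Y i * Y j * Y k := by
      rw [Fintype.card_piFinset, ← hprod]
      push_cast
      exact Finset.prod_le_prod (fun _ _ => by positivity) (fun m _ => card_box _ (hY m))
    refine (mul_le_mul_of_nonneg_right hc hR).trans ?_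
    have hXY : X k * Y k ≤ Real.sqrt L := by
      apply Real.le_sqrt_of_sq_le
      refine le_trans ?_ (hb k)
      have h1 : (1 : ℝ) ≤ |(a k : ℝ)| := by
        have := Int.one_le_abs (ha k)
        exact_mod_cast this
      have := hX k
      calc (X k * Y k) ^ 2 = 1 * X k ^ 2 * Y k ^ 2 := by ring
        _ ≤ |(a k : ℝ)| * X k ^ 2 * Y k ^ 3 := by
          gcongr
          · norm_num
    have e : Y i * Y j * Y k * (M ^ 3 * (1 + 80 * (X k / (Y i * Y j)))) =
        M ^ 3 * (Y i * Y j * Y k + 80 * (X k * Y k)) := by field_simp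
    rw [e, hprod]
    gcongr

lemma min_bound (L Xi Xj Yi Yj Yk : ℝ) (hL : 64 ≤ L) (hXi : 1 ≤ Xi) (hXj : 1 ≤ Xj) (hYi : 1 ≤ Yi)
    (hYj : 1 ≤ Yj) (hYk : 1 ≤ Yk) (h1 : Xi ^ 2 * Yi ^ 3 ≤ L) (h2 : Xj ^ 2 * Yj ^ 3 ≤ L) :
    (Xi * Xj * Yk) * (Yi * Yj / Yk ^ 3) ^ ((2 : ℝ) / 3) ≤ L ^ ((6 : ℝ) / 11) ∨
    Yi * Yj * Yk ≤ L ^ ((6 : ℝ) / 11) := by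
  by_contra hcon
  push Not at hcon
  obtain ⟨c1, c2⟩ := hcon
  set T := L ^ ((6 : ℝ) / 11) with hT
  have hT0 : 0 < T := Real.rpow_pos_of_pos (by linarith) _
  have hT11 : T ^ 11 = L ^ 6 := by
    rw [hT, ← Real.rpow_natCast, ← Real.rpow_mul (by linarith)]; norm_num
  set R := (Yi * Yj / Yk ^ 3) ^ ((2 : ℝ) / 3) with hR
  have hR6 : R ^ 6 = (Yi * Yj / Yk ^ 3) ^ 4 := by
    rw [hR, ← Real.rpow_natCast, ← Real.rpow_mul (by positivity)]; norm_num
  have hlt : T ^ 6 * T ^ 5 < ((Xi * Xj * Yk) * R) ^ 6 * (Yi * Yj * Yk) ^ 5 := by gcongr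
  have hle : ((Xi * Xj * Yk) * R) ^ 6 * (Yi * Yj * Yk) ^ 5 ≤ L ^ 6 := by
    rw [mul_pow, hR6]
    calc (Xi * Xj * Yk) ^ 6 * (Yi * Yj / Yk ^ 3) ^ 4 * (Yi * Yj * Yk) ^ 5
        = (Xi ^ 2 * Yi ^ 3) ^ 3 * (Xj ^ 2 * Yj ^ 3) ^ 3 / Yk := by field_simp
      _ ≤ (Xi ^ 2 * Yi ^ 3) ^ 3 * (Xj ^ 2 * Yj ^ 3) ^ 3 := div_le_self (by positivity) hYk
      _ ≤ L ^ 3 * L ^ 3 := by gcongr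
      _ = L ^ 6 := by ring
  have : T ^ 6 * T ^ 5 = T ^ 11 := by ring
  rw [this, hT11] at hlt
  linarith

end XXY

set_option maxHeartbeats 1000000 in
theorem N0_XXY_bound (ε : ℝ) (hε : 0 < ε) :
    ∃ C : ℝ, 0 < C ∧ ∀ (a : Fin 3 → ℤ) (X Y : Fin 3 → ℝ) (B : ℝ),
      2 ≤ B → (∀ i, a i ≠ 0) → (∀ i, Squarefree (a i)) →
      (∀ i j, i ≠ j → IsCoprime (a i) (a j)) →
      (∀ i, 1 ≤ X i) → (∀ i, 1 ≤ Y i) →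
      (∀ i, X i ^ 2 * Y i ^ 3 ≤ 32 * B / |(a i : ℝ)|) →
      ∀ i j k : Fin 3, i ≠ j → i ≠ k → j ≠ k →
        ((S0 a X Y).ncard : ℝ) ≤
          C * (X i * X j * Y k + B ^ ((6 : ℝ) / 11)) * B ^ ε := by
  set δ := ε / 6 with hδ
  have hδ0 : 0 < δ := by positivity
  obtain ⟨C0, hC0, hdiv⟩ := XXY.divisor_bound δ hδ0
  set C1 : ℝ := C0 ^ 6 + C0 ^ 2 * (10 ^ 11 * (6 / δ) ^ 4) with hC1
  have hC1p : 0 < C1 := by positivity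
  refine ⟨81 * 32 * C1 * 32 ^ ε, by positivity, ?_⟩
  intro a X Y B hB ha _ hac hX hY hb i j k hij hik hjk
  have hXi := hX i
  have hXj := hX j
  have hYk := hY k
  have hYi := hY i
  have hYj := hY j
  have hrhs : 0 ≤ 81 * 32 * C1 * 32 ^ ε * (X i * X j * Y k + B ^ ((6 : ℝ) / 11)) * B ^ ε := by positivity
  by_cases hfin : (S0 a X Y).Finite
  swap
  · rw [Set.Infinite.ncard hfin]; exact_mod_cast hrhs
  rw [Set.ncard_eq_toFinset_card _ hfin]
  set F := hfin.toFinset with hFdef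
  have hF : ∀ p ∈ F, XXY.Good a X Y p := fun p hp => XXY.good_of_mem a X Y p (hfin.mem_toFinset.1 hp)
  set L := 32 * B with hL
  have hL64 : 64 ≤ L := by linarith
  have hL0 : 0 < L := by linarith
  have habs : ∀ i, (1 : ℝ) ≤ |(a i : ℝ)| := by
    intro i
    have := Int.one_le_abs (ha i)
    exact_mod_cast this
  have hb' : ∀ i, |(a i : ℝ)| * X i ^ 2 * Y i ^ 3 ≤ L := by
    intro i
    have h1 := hb i
    rw [le_div_iff₀ (by linarith [habs i])] at h1
    linarith
  have hb1 : ∀ i, X i ^ 2 * Y i ^ 3 ≤ L := by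
    intro i
    refine (hb i).trans (div_le_self hL0.le (habs i))
  set M := C0 ^ 2 * L ^ (2 * δ) with hM
  have hMr : ∀ m : ℕ, m = 2 ∨ m = 3 → ∀ n : ℕ, n ≠ 0 → (n : ℝ) ≤ L → ¬ 16 ∣ n →
      (XXY.rootsCard m n : ℝ) ≤ M := by
    intro m hm n hn hnL h16
    have h1 := XXY.rootsCard_le m n hm hn h16
    have h2 : (XXY.rootsCard m n : ℝ) ≤ (n.divisors.card : ℝ) ^ 2 := by exact_mod_cast h1
    refine h2.trans ?_
    calc (n.divisors.card : ℝ) ^ 2 ≤ (C0 * (n : ℝ) ^ δ) ^ 2 := by gcongr; exact hdiv n hn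
      _ ≤ (C0 * L ^ δ) ^ 2 := by gcongr
      _ = M := by rw [hM, mul_pow, mul_comm 2 δ, Real.rpow_mul hL0.le]; norm_num
  have hM0 : 0 ≤ M := by positivity
  have bB := XXY.boundB a X Y L hL64 ha hac hX hY hb' i j k hij hik hjk M hM0 (hMr 3 (Or.inr rfl)) F hF
  have bA := XXY.boundA a X Y L hL64 ha hac hX hY hb' M hM0 (hMr 2 (Or.inl rfl)) F hF
  have hprod : ∏ m, Y m = Y i * Y j * Y k := XXY.prod3 Y i j k hij hik hjk
  rw [hprod] at bA
  set E := L ^ ε with hE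
  have hE0 : 0 < E := Real.rpow_pos_of_pos hL0 _
  have hM3 : M ^ 3 ≤ C1 * E := by
    have : M ^ 3 = C0 ^ 6 * E := by
      rw [hM, mul_pow, ← pow_mul, ← Real.rpow_natCast (L ^ (2 * δ)), ← Real.rpow_mul hL0.le, hE]
      congr 2
      rw [hδ]; push_cast; ring
    rw [this]
    have : 0 ≤ C0 ^ 2 * (10 ^ 11 * (6 / δ) ^ 4) := by positivity
    gcongr
    linarith
  have hMl : M * (10 ^ 11 * (6 * Real.log L) ^ 4) ≤ C1 * E := by
    have hlog := Real.log_le_rpow_div hL0.le hδ0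
    have hlog0 : 0 ≤ Real.log L := Real.log_nonneg (by linarith)
    calc M * (10 ^ 11 * (6 * Real.log L) ^ 4) ≤ M * (10 ^ 11 * (6 * (L ^ δ / δ)) ^ 4) := by gcongr
      _ = C0 ^ 2 * (10 ^ 11 * (6 / δ) ^ 4) * (L ^ (2 * δ) * (L ^ δ) ^ 4) := by
          rw [hM]; field_simp
      _ = C0 ^ 2 * (10 ^ 11 * (6 / δ) ^ 4) * E := by
          congr 1
          rw [← Real.rpow_natCast (L ^ δ), ← Real.rpow_mul hL0.le, ← Real.rpow_add hL0, hE]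
          congr 1
          rw [hδ]; push_cast; ring
      _ ≤ C1 * E := by
          have : 0 ≤ C0 ^ 6 := by positivity
          gcongr
          linarith
  set T := L ^ ((6 : ℝ) / 11) with hT
  have hT0 : 0 < T := Real.rpow_pos_of_pos hL0 _
  set P := X i * X j * Y k with hP
  have hP0 : 0 < P := by positivity
  have hmain : (F.card : ℝ) ≤ 81 * (C1 * E) * (P + T) := by
    rcases XXY.min_bound L (X i) (X j) (Y i) (Y j) (Y k) hL64 hXi hXj hYi hYj hYk (hb1 i) (hb1 j) with h | h
    · set R := (Y i * Y j / Y k ^ 3) ^ ((2 : ℝ) / 3) with hR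
      have hR0 : 0 ≤ R := by positivity
      calc (F.card : ℝ) ≤ P * (M * (10 ^ 11 * (6 * Real.log L) ^ 4 * (1 + 4 * R))) := bB
        _ = (M * (10 ^ 11 * (6 * Real.log L) ^ 4)) * (P + 4 * (P * R)) := by ring
        _ ≤ (C1 * E) * (P + 4 * T) := by gcongr
        _ ≤ (C1 * E) * (81 * (P + T)) := by gcongr; linarith
        _ = _ := by ring
    · have hsq : Real.sqrt L ≤ T := by
        rw [Real.sqrt_eq_rpow]
        exact Real.rpow_le_rpow_of_exponent_le (by linarith) (by norm_num)
      calc (F.card : ℝ) ≤ M ^ 3 * (Y i * Y j * Y k + 80 * Real.sqrt L) := bA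
        _ ≤ (C1 * E) * (T + 80 * T) := by gcongr
        _ ≤ (C1 * E) * (81 * (P + T)) := by gcongr; linarith
        _ = _ := by ring
  have hEB : E = 32 ^ ε * B ^ ε := by
    rw [hE, hL, Real.mul_rpow (by norm_num) (by linarith)]
  have hTB : T ≤ 32 * B ^ ((6 : ℝ) / 11) := by
    rw [hT, hL, Real.mul_rpow (by norm_num) (by linarith)]
    gcongr
    calc (32 : ℝ) ^ ((6 : ℝ) / 11) ≤ 32 ^ (1 : ℝ) :=
          Real.rpow_le_rpow_of_exponent_le (by norm_num) (by norm_num)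
      _ = 32 := Real.rpow_one _
  calc (F.card : ℝ) ≤ 81 * (C1 * E) * (P + T) := hmain
    _ ≤ 81 * (C1 * E) * (32 * (P + B ^ ((6 : ℝ) / 11))) := by gcongr; linarith
    _ = _ := by rw [hEB]; ring
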